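/- arXiv:2311.02547 — 3 statements merged into one kernel-verified Lean document; each statement's English description precedes it below -/
import Mathlib

section
/- Let w ≥ 4 be an integer, and set v = w−1, u = w−2, q = w−3. Then Σ_{a+b+c=w, a≥2, b≥1, c≥1} (a−1)·2^b·ζ(a,b,c) = q·ζ(u,2) − 2u·ζ(v,1) + v·ζ(2,u). -/
/-- The multiple zeta value `ζ(s₁,…,s_d) = Σ_{k₁>⋯>k_d≥1} 1/(k₁^{s₁}⋯k_d^{s_d})`. -/
noncomputable def mzv {d : ℕ} (s : Fin d → ℕ) : ℝ :=
  ∑' k : {k : Fin d → ℕ // StrictAnti k ∧ ∀ i, 0 < k i},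
    ∏ i, (1 : ℝ) / (k.1 i : ℝ) ^ s i

/-!
Write `m = n + d` for the middle summation index, `n` being the smallest one. Symmetrising in `n`
and `d` turns the sum weighted by `2 ^ b` into the sum over `k > n + d` of the coefficient of
`t ^ (w - 4)` in `1 / ((k - t) ^ 2 * (n - t) * (d - t))`. Expand this in partial fractions and
collect the contributions of all poles at the same integer `N`. The corner sums
`∑ 1 / ((N - n) * (N - d) ^ 2)` over `n + d < N`, coming from the poles at `k = N`, cancel against
those from the poles at `n = N` and `d = N`, and what is left at `N` involves only the harmonic
sums below `N` and the tail of `ζ(2)` beyond `N`: these are the three double zeta values.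

All series are indexed from zero: `n`, `d`, `k`, `N` are `i + 1`, `j + 1`, `i + j + l + 3`, `M + 1`.
-/

noncomputable section WeightedSum

open Finset

section Algebra

variable {R : Type*}

/-- `∑ X ^ b * Y ^ c` over `b + c = s + 2`, `b, c ≥ 1`. -/
def mixedPowSum [CommSemiring R] (s : ℕ) (X Y : R) : R :=
  ∑ p ∈ antidiagonal s, X ^ (p.1 + 1) * Y ^ (p.2 + 1)

/-- `∑ (a - 1) * K ^ a * X ^ b` over `a + b = r + 3`, `a ≥ 2`, `b ≥ 1`. -/
def weightedPowSum₂ [CommSemiring R] (r : ℕ) (K X : R) : R :=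
  ∑ p ∈ antidiagonal r, (p.1 + 1) * K ^ (p.1 + 2) * X ^ (p.2 + 1)

/-- `∑ (a - 1) * K ^ a * X ^ b * Y ^ c` over `a + b + c = r + 4`, `a ≥ 2`, `b, c ≥ 1`. At
`K = k⁻¹`, `X = n⁻¹`, `Y = d⁻¹` it is the coefficient of `t ^ r` in
`1 / ((k - t) ^ 2 * (n - t) * (d - t))`. -/
def weightedPowSum₃ [CommSemiring R] (r : ℕ) (K X Y : R) : R :=
  ∑ p ∈ antidiagonal r, (p.1 + 1) * K ^ (p.1 + 2) * mixedPowSum p.2 X Y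

lemma mixedPowSum_zero [CommSemiring R] (X Y : R) : mixedPowSum 0 X Y = X * Y := by
  simp [mixedPowSum]

lemma mixedPowSum_comm [CommSemiring R] (s : ℕ) (X Y : R) :
    mixedPowSum s X Y = mixedPowSum s Y X := by
  simp only [mixedPowSum]
  rw [← Finset.Nat.sum_antidiagonal_swap]
  exact sum_congr rfl fun p _ => mul_comm _ _

lemma mixedPowSum_succ [CommSemiring R] (s : ℕ) (X Y : R) :
    mixedPowSum (s + 1) X Y = X * mixedPowSum s X Y + X * Y ^ (s + 2) := by
  simp only [mixedPowSum, Nat.sum_antidiagonal_succ, mul_sum]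
  rw [add_comm]
  congr 1
  · exact sum_congr rfl fun p _ => by ring
  · ring

lemma weightedPowSum₂_zero [CommSemiring R] (K X : R) : weightedPowSum₂ 0 K X = K ^ 2 * X := by
  simp [weightedPowSum₂]

lemma weightedPowSum₂_succ [CommSemiring R] (r : ℕ) (K X : R) :
    weightedPowSum₂ (r + 1) K X = X * weightedPowSum₂ r K X + (r + 2) * K ^ (r + 3) * X := by
  simp only [weightedPowSum₂, Nat.sum_antidiagonal_succ', mul_sum]
  rw [add_comm]
  congr 1
  · exact sum_congr rfl fun p _ => by ring
  · push_cast; ring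

lemma weightedPowSum₃_zero [CommSemiring R] (K X Y : R) :
    weightedPowSum₃ 0 K X Y = K ^ 2 * (X * Y) := by
  simp [weightedPowSum₃, mixedPowSum_zero]

lemma weightedPowSum₃_succ [CommSemiring R] (r : ℕ) (K X Y : R) :
    weightedPowSum₃ (r + 1) K X Y
      = Y * weightedPowSum₃ r K X Y + Y * weightedPowSum₂ (r + 1) K X := by
  simp only [weightedPowSum₃, weightedPowSum₂, Nat.sum_antidiagonal_succ', mixedPowSum_zero,
    mul_add, mul_sum]
  rw [add_left_comm, ← sum_add_distrib]
  congr 1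
  · ring
  · refine sum_congr rfl fun p _ => ?_
    rw [mixedPowSum_comm, mixedPowSum_succ, mixedPowSum_comm]
    ring

-- At `X = n⁻¹`, `Y = d⁻¹` the hypothesis says `M = (n + d)⁻¹`: symmetrising in the two gaps `n`
-- and `d` is what absorbs the weight `2 ^ b`.
lemma mixedPowSum_two_mul_add [CommRing R] [NoZeroDivisors R] (s : ℕ) {M X Y : R}
    (h : M * (X + Y) = X * Y) (h₀ : X + Y ≠ 0) :
    mixedPowSum s (2 * M) X + mixedPowSum s (2 * M) Y = 2 * mixedPowSum s X Y := by
  induction s with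
  | zero => simp only [mixedPowSum_zero]; linear_combination 2 * h
  | succ s ih =>
    have hX := mixedPowSum_succ s X Y
    have hY : mixedPowSum (s + 1) X Y = Y * mixedPowSum s X Y + Y * X ^ (s + 2) := by
      rw [mixedPowSum_comm, mixedPowSum_succ, mixedPowSum_comm]
    refine mul_left_cancel₀ h₀ ?_
    rw [mixedPowSum_succ, mixedPowSum_succ]
    linear_combination 2 * M * (X + Y) * ih - 2 * Y * hX - 2 * X * hY
      + (4 * mixedPowSum s X Y + 2 * X ^ (s + 2) + 2 * Y ^ (s + 2)) * h

lemma weightedPowSum₃_two_mul_add [CommRing R] [NoZeroDivisors R] (r : ℕ) (K : R) {M X Y : R}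
    (h : M * (X + Y) = X * Y) (h₀ : X + Y ≠ 0) :
    weightedPowSum₃ r K (2 * M) X + weightedPowSum₃ r K (2 * M) Y
      = 2 * weightedPowSum₃ r K X Y := by
  simp only [weightedPowSum₃, ← sum_add_distrib, mul_sum]
  refine sum_congr rfl fun p _ => ?_
  linear_combination (p.1 + 1) * K ^ (p.1 + 2) * mixedPowSum_two_mul_add p.2 h h₀

lemma sub_mul_weightedPowSum₃ [CommRing R] (r : ℕ) (K X Y : R) :
    (X - Y) * weightedPowSum₃ r K X Y
      = X * Y * (weightedPowSum₂ r K X - weightedPowSum₂ r K Y) := by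
  induction r with
  | zero => simp only [weightedPowSum₃_zero, weightedPowSum₂_zero]; ring
  | succ r ih =>
    have hX := weightedPowSum₂_succ r K X
    have hY := weightedPowSum₂_succ r K Y
    rw [weightedPowSum₃_succ]
    linear_combination Y * ih - Y ^ 2 * hX + X * Y * hY

variable {F : Type*} [Field F] (r : ℕ) {k n d : F}

lemma weightedPowSum₂_inv (hk : k ≠ 0) (hn : n ≠ 0) (hkn : k - n ≠ 0) :
    weightedPowSum₂ r k⁻¹ n⁻¹ = (n⁻¹ ^ (r + 1) - k⁻¹ ^ (r + 1)) / (k - n) ^ 2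
      - (r + 1) * k⁻¹ ^ (r + 2) / (k - n) := by
  induction r with
  | zero =>
    simp only [weightedPowSum₂_zero, Nat.cast_zero, inv_pow]
    field_simp
    ring
  | succ r ih =>
    rw [weightedPowSum₂_succ, ih]
    simp only [pow_succ]
    push_cast
    generalize n⁻¹ ^ r = x
    generalize k⁻¹ ^ r = y
    field_simp
    ring

/-- The coefficient of `t ^ r` in the principal part at `t = k` of
`1 / ((k - t) ^ 2 * (n - t) * (d - t))`. -/
def largePole (r : ℕ) (k n d : F) : F :=
  (r + 1) * k⁻¹ ^ (r + 2) / ((k - n) * (k - d))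
    + k⁻¹ ^ (r + 1) * (1 / ((k - n) ^ 2 * (k - d)) + 1 / ((k - n) * (k - d) ^ 2))

lemma weightedPowSum₃_inv_of_ne (hk : k ≠ 0) (hn : n ≠ 0) (hd : d ≠ 0) (hkn : k - n ≠ 0)
    (hkd : k - d ≠ 0) (hdn : d - n ≠ 0) :
    weightedPowSum₃ r k⁻¹ n⁻¹ d⁻¹ = largePole r k n d
      + n⁻¹ ^ (r + 1) / ((d - n) * (k - n) ^ 2) - d⁻¹ ^ (r + 1) / ((d - n) * (k - d) ^ 2) := by
  have hdiv : weightedPowSum₃ r k⁻¹ n⁻¹ d⁻¹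
      = (weightedPowSum₂ r k⁻¹ n⁻¹ - weightedPowSum₂ r k⁻¹ d⁻¹) / (d - n) := by
    have hinv : n⁻¹ - d⁻¹ = n⁻¹ * d⁻¹ * (d - n) := by field_simp
    rw [eq_div_iff hdn]
    refine mul_left_cancel₀ (mul_ne_zero (inv_ne_zero hn) (inv_ne_zero hd)) ?_
    linear_combination sub_mul_weightedPowSum₃ r k⁻¹ n⁻¹ d⁻¹
      - weightedPowSum₃ r k⁻¹ n⁻¹ d⁻¹ * hinv
  have hsplit : (k - n)⁻¹ - (k - d)⁻¹ = -(k - n)⁻¹ * (k - d)⁻¹ * (d - n) := by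
    field_simp
    ring
  rw [hdiv, weightedPowSum₂_inv r hk hn hkn, weightedPowSum₂_inv r hk hd hkd, largePole,
    div_eq_iff hdn]
  simp only [div_eq_mul_inv, mul_inv, ← inv_pow, one_mul]
  have hcancel := inv_mul_cancel₀ hdn
  generalize (k - n)⁻¹ = a at *
  generalize (k - d)⁻¹ = b at *
  generalize (d - n)⁻¹ = c at *
  generalize d - n = e at *
  linear_combination (-(r + 1) * k⁻¹ ^ (r + 2) - k⁻¹ ^ (r + 1) * (a + b)) * hsplit
    - (n⁻¹ ^ (r + 1) * a ^ 2 - d⁻¹ ^ (r + 1) * b ^ 2) * hcancel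

lemma weightedPowSum₃_inv_self (hk : k ≠ 0) (hn : n ≠ 0) (hkn : k - n ≠ 0) :
    weightedPowSum₃ r k⁻¹ n⁻¹ n⁻¹ = largePole r k n n
      + ((r + 1) * n⁻¹ ^ (r + 2) / (k - n) ^ 2 - 2 * n⁻¹ ^ (r + 1) / (k - n) ^ 3) := by
  induction r with
  | zero =>
    simp only [weightedPowSum₃_zero, largePole, Nat.cast_zero, inv_pow]
    field_simp
    ring
  | succ r ih =>
    rw [weightedPowSum₃_succ, ih, weightedPowSum₂_inv _ hk hn hkn]
    simp only [largePole, pow_succ]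
    push_cast
    generalize n⁻¹ ^ r = x
    generalize k⁻¹ ^ r = y
    field_simp
    ring

end Algebra

/-- The coefficient of `t ^ r` in the principal part at `t = n` of
`1 / ((k - t) ^ 2 * (n - t) * (d - t))`; a double pole `n = d` is shared equally between its two
factors. -/
def smallPole (r : ℕ) (k n d : ℝ) : ℝ :=
  if n = d then ((r + 1) * n⁻¹ ^ (r + 2) / (k - n) ^ 2 - 2 * n⁻¹ ^ (r + 1) / (k - n) ^ 3) / 2
  else n⁻¹ ^ (r + 1) / ((d - n) * (k - n) ^ 2)

lemma weightedPowSum₃_inv (r : ℕ) {k n d : ℝ} (hk : k ≠ 0) (hn : n ≠ 0) (hd : d ≠ 0)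
    (hkn : k - n ≠ 0) (hkd : k - d ≠ 0) :
    weightedPowSum₃ r k⁻¹ n⁻¹ d⁻¹ = largePole r k n d + smallPole r k n d + smallPole r k d n := by
  rcases eq_or_ne n d with rfl | hnd
  · rw [weightedPowSum₃_inv_self r hk hn hkn, smallPole, if_pos rfl]
    ring
  · rw [weightedPowSum₃_inv_of_ne r hk hn hd hkn hkd (sub_ne_zero.2 hnd.symm), smallPole,
      smallPole, if_neg hnd, if_neg hnd.symm, ← neg_sub d n, neg_mul, div_neg, ← sub_eq_add_neg]

section Harmonic

/-- The generalised harmonic number `∑ 1 / m ^ e` over `1 ≤ m ≤ n`. -/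
def harmonicSum (e n : ℕ) : ℝ :=
  ∑ i ∈ range n, 1 / ((i : ℝ) + 1) ^ e

lemma harmonicSum_zero (e : ℕ) : harmonicSum e 0 = 0 := sum_range_zero _

lemma harmonicSum_succ (e n : ℕ) :
    harmonicSum e (n + 1) = harmonicSum e n + 1 / ((n : ℝ) + 1) ^ e :=
  sum_range_succ _ _

lemma sum_range_one_div_sub_pow (e : ℕ) {s M : ℕ} (h : s ≤ M) :
    ∑ j ∈ range s, 1 / ((M : ℝ) - j) ^ e = harmonicSum e M - harmonicSum e (M - s) := by
  induction s with
  | zero => simp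
  | succ s ih =>
    obtain ⟨t, rfl⟩ : ∃ t, M = t + (s + 1) := ⟨_, (Nat.sub_add_cancel h).symm⟩
    have hs : t + (s + 1) - s = t + 1 := by lia
    rw [sum_range_succ, ih (by lia), Nat.add_sub_cancel, hs, harmonicSum_succ]
    push_cast
    ring

lemma sum_range_one_div_sub (M : ℕ) : ∑ i ∈ range M, 1 / ((M : ℝ) - i) = harmonicSum 1 M := by
  simpa [harmonicSum_zero] using sum_range_one_div_sub_pow 1 (le_refl M)

lemma sum_range_one_div_sub_mul_add_one (M : ℕ) :
    ∑ i ∈ range M, 1 / (((M : ℝ) - i) * (i + 1)) = 2 * harmonicSum 1 M / (M + 1) := by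
  have hsplit : ∀ i ∈ range M, 1 / (((M : ℝ) - i) * (i + 1))
      = (1 / ((M : ℝ) - i) + 1 / ((i : ℝ) + 1) ^ 1) / (M + 1) := fun i hi => by
    have : (M : ℝ) - i ≠ 0 := sub_ne_zero.2 (by exact_mod_cast (mem_range.1 hi).ne')
    field_simp
    ring
  rw [sum_congr rfl hsplit, ← sum_div, sum_add_distrib, sum_range_one_div_sub,
    ← harmonicSum]
  ring

lemma sum_range_harmonicSum_succ_div_sub (M : ℕ) :
    ∑ i ∈ range M, harmonicSum 1 (i + 1) / ((M : ℝ) - i)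
      = harmonicSum 1 (M + 1) ^ 2 - harmonicSum 2 (M + 1) := by
  induction M with
  | zero => simp [harmonicSum]
  | succ M ih =>
    have hsplit : ∀ i ∈ range (M + 1), harmonicSum 1 (i + 1) / (((M + 1 : ℕ) : ℝ) - i)
        = harmonicSum 1 i / (((M + 1 : ℕ) : ℝ) - i) + 1 / ((((M + 1 : ℕ) : ℝ) - i) * (i + 1)) :=
      fun i _ => by rw [harmonicSum_succ, add_div, pow_one, div_div, mul_comm ((i : ℝ) + 1)]
    have hshift : ∑ i ∈ range (M + 1), harmonicSum 1 i / (((M + 1 : ℕ) : ℝ) - i)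
        = ∑ i ∈ range M, harmonicSum 1 (i + 1) / ((M : ℝ) - i) := by
      rw [sum_range_succ']
      simp [harmonicSum_zero]
    rw [sum_congr rfl hsplit, sum_add_distrib, hshift, ih, sum_range_one_div_sub_mul_add_one,
      harmonicSum_succ 1 (M + 1), harmonicSum_succ 2 (M + 1)]
    field_simp
    ring

/-- `∑ 1 / ((N - n) ^ a * (N - d) ^ b)` over `n, d ≥ 1` with `n + d < N`, where `N = M + 1`. -/
def cornerSum (a b M : ℕ) : ℝ :=
  ∑ i ∈ range M, ∑ j ∈ range (M - 1 - i), 1 / (((M : ℝ) - i) ^ a * ((M : ℝ) - j) ^ b)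

lemma cornerSum_comm (a b M : ℕ) : cornerSum a b M = cornerSum b a M := by
  rw [cornerSum, sum_comm' (s' := fun j => range (M - 1 - j)) (t' := range M)
    (fun i j => by simp only [mem_range]; lia)]
  exact sum_congr rfl fun j _ => sum_congr rfl fun i _ => by rw [mul_comm]

lemma cornerSum_eq (a b M : ℕ) :
    cornerSum a b M
      = ∑ i ∈ range M, (harmonicSum b M - harmonicSum b (i + 1)) / ((M : ℝ) - i) ^ a := by
  refine sum_congr rfl fun i hi => ?_
  have hi' := mem_range.1 hi
  have hs : M - (M - 1 - i) = i + 1 := by lia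
  rw [← hs, ← sum_range_one_div_sub_pow b (by lia : M - 1 - i ≤ M), sum_div]
  exact sum_congr rfl fun j _ => by rw [div_div, mul_comm]

lemma cornerSum_one_one (M : ℕ) :
    cornerSum 1 1 M = harmonicSum 2 M - 2 * harmonicSum 1 M / (M + 1) := by
  simp only [cornerSum_eq, pow_one, sub_div, sum_sub_distrib, sum_range_harmonicSum_succ_div_sub]
  rw [sum_congr rfl fun i _ => div_eq_mul_one_div _ _, ← mul_sum, sum_range_one_div_sub,
    harmonicSum_succ, harmonicSum_succ]
  field_simp
  ring

lemma sum_largePole (r M : ℕ) :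
    ∑ i ∈ range M, ∑ j ∈ range (M - 1 - i), largePole r ((M : ℝ) + 1) (i + 1) (j + 1)
      = (r + 1) * ((M : ℝ) + 1)⁻¹ ^ (r + 2) * cornerSum 1 1 M
        + 2 * ((M : ℝ) + 1)⁻¹ ^ (r + 1) * cornerSum 1 2 M := by
  have hswap : 2 * ((M : ℝ) + 1)⁻¹ ^ (r + 1) * cornerSum 1 2 M
      = ((M : ℝ) + 1)⁻¹ ^ (r + 1) * (cornerSum 2 1 M + cornerSum 1 2 M) := by
    rw [cornerSum_comm 2 1]
    ring
  rw [hswap]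
  simp only [cornerSum, mul_sum, ← sum_add_distrib]
  refine sum_congr rfl fun i _ => sum_congr rfl fun j _ => ?_
  rw [largePole, add_sub_add_right_eq_sub, add_sub_add_right_eq_sub]
  ring

end Harmonic

section Summability

/-- The cube root of `n + 1`. Since `∑ 1 / cbrtSucc n ^ 4` converges, a multiple series is
summable as soon as its general term is bounded by fourth powers in independent variables. -/
def cbrtSucc (n : ℕ) : ℝ :=
  ((n : ℝ) + 1) ^ ((3 : ℕ) : ℝ)⁻¹

lemma cbrtSucc_pow_three (n : ℕ) : cbrtSucc n ^ 3 = n + 1 :=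
  Real.rpow_inv_natCast_pow (by positivity) three_ne_zero

lemma cbrtSucc_pos (n : ℕ) : 0 < cbrtSucc n := by
  unfold cbrtSucc
  positivity

lemma one_le_cbrtSucc (n : ℕ) : 1 ≤ cbrtSucc n :=
  Real.one_le_rpow (by simp) (by positivity)

lemma cbrtSucc_mono {m n : ℕ} (h : m ≤ n) : cbrtSucc m ≤ cbrtSucc n :=
  Real.rpow_le_rpow (by positivity) (by gcongr) (by positivity)

lemma summable_one_div_cbrtSucc_pow : Summable fun n : ℕ => 1 / cbrtSucc n ^ 4 := by
  have h : Summable fun n : ℕ => 1 / (n : ℝ) ^ (4 / 3 : ℝ) :=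
    Real.summable_one_div_nat_rpow.2 (by norm_num)
  refine ((summable_nat_add_iff 1).2 h).congr fun n => ?_
  rw [cbrtSucc, ← Real.rpow_mul_natCast (by positivity)]
  norm_num

lemma summable_one_div_mul_mul_add : Summable fun p : ℕ × ℕ =>
    1 / (((p.1 : ℝ) + 1) * (p.2 + 1) * (p.1 + p.2 + 2)) := by
  have hc := summable_one_div_cbrtSucc_pow
  have hpos : ∀ n, 0 ≤ 1 / cbrtSucc n ^ 4 := fun n => by have := cbrtSucc_pos n; positivity
  refine Summable.of_nonneg_of_le (fun p => by positivity) (fun p => ?_)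
    (hc.mul_of_nonneg hc hpos hpos)
  obtain ⟨i, j⟩ := p
  have hi := cbrtSucc_pos i
  have hj := cbrtSucc_pos j
  have hk := one_le_cbrtSucc (i + j + 1)
  have hik := cbrtSucc_mono (by lia : i ≤ i + j + 1)
  have hjk := cbrtSucc_mono (by lia : j ≤ i + j + 1)
  have hsum : (i : ℝ) + j + 2 = cbrtSucc (i + j + 1) ^ 3 := by
    rw [cbrtSucc_pow_three]; push_cast; ring
  rw [one_div_mul_one_div, hsum, ← cbrtSucc_pow_three, ← cbrtSucc_pow_three]
  refine one_div_le_one_div_of_le (by positivity) ?_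
  calc cbrtSucc i ^ 4 * cbrtSucc j ^ 4
      = cbrtSucc i ^ 3 * cbrtSucc j ^ 3 * (cbrtSucc i * cbrtSucc j * 1) := by ring
    _ ≤ cbrtSucc i ^ 3 * cbrtSucc j ^ 3
        * (cbrtSucc (i + j + 1) * cbrtSucc (i + j + 1) * cbrtSucc (i + j + 1)) := by gcongr
    _ = _ := by ring

lemma summable_one_div_cbrtSucc_pow₃ : Summable fun p : ℕ × ℕ × ℕ =>
    1 / (cbrtSucc p.1 ^ 4 * cbrtSucc p.2.1 ^ 4 * cbrtSucc p.2.2 ^ 4) := by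
  have hc := summable_one_div_cbrtSucc_pow
  have hpos : ∀ n, 0 ≤ 1 / cbrtSucc n ^ 4 := fun n => by have := cbrtSucc_pos n; positivity
  refine (hc.mul_of_nonneg (hc.mul_of_nonneg hc hpos hpos) hpos fun p =>
    mul_nonneg (hpos _) (hpos _)).congr fun p => ?_
  simp only [one_div_mul_one_div, mul_assoc]

lemma summable_one_div_mul_mul_sq : Summable fun p : ℕ × ℕ × ℕ =>
    1 / (((p.1 : ℝ) + 1) * (p.2.1 + 1) * (p.1 + p.2.1 + p.2.2 + 3) ^ 2) := by
  refine Summable.of_nonneg_of_le (fun p => by positivity) (fun p => ?_)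
    summable_one_div_cbrtSucc_pow₃
  obtain ⟨i, j, l⟩ := p
  have hi := cbrtSucc_pos i
  have hj := cbrtSucc_pos j
  have hl := cbrtSucc_pos l
  have hk := cbrtSucc_pos (i + j + l + 2)
  have hik := cbrtSucc_mono (by lia : i ≤ i + j + l + 2)
  have hjk := cbrtSucc_mono (by lia : j ≤ i + j + l + 2)
  have hlk := cbrtSucc_mono (by lia : l ≤ i + j + l + 2)
  have hsum : (i : ℝ) + j + l + 3 = cbrtSucc (i + j + l + 2) ^ 3 := by
    rw [cbrtSucc_pow_three]; push_cast; ring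
  rw [hsum, ← cbrtSucc_pow_three, ← cbrtSucc_pow_three]
  refine one_div_le_one_div_of_le (by positivity) ?_
  calc cbrtSucc i ^ 4 * cbrtSucc j ^ 4 * cbrtSucc l ^ 4
      = cbrtSucc i ^ 3 * cbrtSucc j ^ 3 * (cbrtSucc i * cbrtSucc j * cbrtSucc l ^ 4) := by ring
    _ ≤ cbrtSucc i ^ 3 * cbrtSucc j ^ 3 * (cbrtSucc (i + j + l + 2) * cbrtSucc (i + j + l + 2)
        * cbrtSucc (i + j + l + 2) ^ 4) := by gcongr
    _ = _ := by ring

lemma summable_one_div_add_mul_mul_sq : Summable fun p : ℕ × ℕ × ℕ =>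
    1 / (((p.1 : ℝ) + p.2.1 + 2) * (p.2.1 + 1) * (p.1 + p.2.2 + 2) ^ 2) := by
  refine Summable.of_nonneg_of_le (fun p => by positivity) (fun p => ?_)
    summable_one_div_cbrtSucc_pow₃
  obtain ⟨i, j, l⟩ := p
  have hi := cbrtSucc_pos i
  have hj := cbrtSucc_pos j
  have hl := cbrtSucc_pos l
  have hm := cbrtSucc_pos (i + j + 1)
  have him := cbrtSucc_mono (by lia : i ≤ i + j + 1)
  have hjm := cbrtSucc_mono (by lia : j ≤ i + j + 1)
  have hik := cbrtSucc_mono (by lia : i ≤ i + l + 1)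
  have hlk := cbrtSucc_mono (by lia : l ≤ i + l + 1)
  have hsum : (i : ℝ) + j + 2 = cbrtSucc (i + j + 1) ^ 3 := by
    rw [cbrtSucc_pow_three]; push_cast; ring
  have hsum' : (i : ℝ) + l + 2 = cbrtSucc (i + l + 1) ^ 3 := by
    rw [cbrtSucc_pow_three]; push_cast; ring
  rw [hsum, hsum', ← cbrtSucc_pow_three]
  refine one_div_le_one_div_of_le (by positivity) ?_
  calc cbrtSucc i ^ 4 * cbrtSucc j ^ 4 * cbrtSucc l ^ 4
      = cbrtSucc i ^ 2 * cbrtSucc j * cbrtSucc j ^ 3 * (cbrtSucc i ^ 2 * cbrtSucc l ^ 4) := by ring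
    _ ≤ cbrtSucc (i + j + 1) ^ 2 * cbrtSucc (i + j + 1) * cbrtSucc j ^ 3
        * (cbrtSucc (i + l + 1) ^ 2 * cbrtSucc (i + l + 1) ^ 4) := by gcongr
    _ = _ := by ring

lemma summable_of_trichotomy {β : Type*} {f : ℕ × ℕ × β → ℝ}
    (hlt : Summable fun p : ℕ × ℕ × β => f (p.1, p.1 + p.2.1 + 1, p.2.2))
    (hgt : Summable fun p : ℕ × ℕ × β => f (p.1 + p.2.1 + 1, p.1, p.2.2))
    (heq : Summable fun p : ℕ × β => f (p.1, p.1, p.2)) : Summable f := by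
  let g : (ℕ × ℕ × β) ⊕ (ℕ × ℕ × β) ⊕ (ℕ × β) → ℕ × ℕ × β :=
    Sum.elim (fun p => (p.1, p.1 + p.2.1 + 1, p.2.2))
      (Sum.elim (fun p => (p.1 + p.2.1 + 1, p.1, p.2.2)) fun p => (p.1, p.1, p.2))
  have hg : g.Surjective := by
    rintro ⟨i, j, b⟩
    rcases lt_trichotomy i j with h | rfl | h
    · obtain ⟨e, rfl⟩ := Nat.exists_eq_add_of_lt h
      exact ⟨.inl (i, e, b), rfl⟩
    · exact ⟨.inr (.inr (i, b)), rfl⟩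
    · obtain ⟨e, rfl⟩ := Nat.exists_eq_add_of_lt h
      exact ⟨.inr (.inl (j, e, b)), rfl⟩
  have hfg : Summable (f ∘ g) := Summable.sum _ hlt (Summable.sum _ hgt heq)
  simpa [Function.comp_def, Function.surjInv_eq hg]
    using! hfg.comp_injective (Function.injective_surjInv hg)

lemma abs_smallPole_le_of_ne (r : ℕ) {k n d : ℝ} (hn : 1 ≤ n) (hnd : n ≠ d) :
    |smallPole r k n d| ≤ 1 / (n * |d - n| * (k - n) ^ 2) := by
  have hpow : n⁻¹ ^ (r + 1) ≤ n⁻¹ :=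
    pow_le_of_le_one (by positivity) (inv_le_one_of_one_le₀ hn) r.succ_ne_zero
  rw [smallPole, if_neg hnd, abs_div, abs_mul, abs_of_nonneg (by positivity : 0 ≤ n⁻¹ ^ (r + 1)),
    abs_of_nonneg (sq_nonneg (k - n)), mul_assoc, ← div_div 1, one_div]
  gcongr

lemma abs_smallPole_self_le (r : ℕ) {k n : ℝ} (hn : 1 ≤ n) (hkn : 1 ≤ k - n) :
    |smallPole r k n n| ≤ (r + 3) * (1 / (n * (k - n) ^ 2)) := by
  have hpow : ∀ s : ℕ, n⁻¹ ^ (s + 1) ≤ n⁻¹ := fun s =>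
    pow_le_of_le_one (by positivity) (inv_le_one_of_one_le₀ hn) s.succ_ne_zero
  have hfst : (r + 1) * n⁻¹ ^ (r + 2) / (k - n) ^ 2 ≤ (r + 1) * (1 / (n * (k - n) ^ 2)) := by
    rw [mul_div_assoc, ← div_div, one_div]
    gcongr
    exact hpow _
  have hsnd : 2 * n⁻¹ ^ (r + 1) / (k - n) ^ 3 ≤ 2 * (1 / (n * (k - n) ^ 2)) := by
    rw [mul_div_assoc, ← div_div, one_div]
    gcongr
    · exact hpow _
    · lia
  have hfst₀ : 0 ≤ (r + 1) * n⁻¹ ^ (r + 2) / (k - n) ^ 2 := by positivity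
  have hsnd₀ : 0 ≤ 2 * n⁻¹ ^ (r + 1) / (k - n) ^ 3 := by positivity
  rw [smallPole, if_pos rfl]
  exact abs_le.2 ⟨by linarith, by linarith⟩

lemma summable_smallPole (r : ℕ) : Summable fun p : ℕ × ℕ × ℕ =>
    smallPole r ((p.1 : ℝ) + p.2.1 + p.2.2 + 3) (p.1 + 1) (p.2.1 + 1) := by
  refine summable_of_trichotomy ?_ ?_ ?_
  · refine summable_one_div_mul_mul_sq.of_norm_bounded fun ⟨i, e, l⟩ => ?_
    have hdiff : ((i + e + 1 : ℕ) + 1 : ℝ) - (i + 1) = e + 1 := by push_cast; ring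
    refine (abs_smallPole_le_of_ne r (by simp) ?_).trans_eq ?_
    · exact (sub_pos.1 (hdiff ▸ by positivity)).ne
    · rw [hdiff, abs_of_nonneg (by positivity)]
      push_cast
      ring
  · refine summable_one_div_add_mul_mul_sq.of_norm_bounded fun ⟨j, e, l⟩ => ?_
    have hdiff : (j + 1 : ℝ) - ((j + e + 1 : ℕ) + 1) = -(e + 1) := by push_cast; ring
    refine (abs_smallPole_le_of_ne r (le_add_of_nonneg_left (Nat.cast_nonneg _)) ?_).trans_eq ?_
    · exact (sub_neg.1 (hdiff ▸ neg_neg_of_pos (by positivity))).ne'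
    · rw [hdiff, abs_neg, abs_of_nonneg (by positivity)]
      push_cast
      ring
  · refine (summable_one_div_mul_mul_add.mul_left (r + 3 : ℝ)).of_norm_bounded fun ⟨i, l⟩ => ?_
    have hdiff : (i + i + l + 3 : ℝ) - (i + 1) = i + l + 2 := by ring
    refine (abs_smallPole_self_le r (by simp) (by simp only [hdiff]; linarith)).trans ?_
    have hle : (l : ℝ) + 1 ≤ i + l + 2 := by linarith
    simp only [hdiff, mul_assoc, pow_two]
    gcongr

end Summability

section Regrouping

lemma hasSum_sum_of_injective {β γ δ E : Type*} [AddCommMonoid E] [TopologicalSpace E]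
    [ContinuousAdd E] [RegularSpace E] {e : β → γ × δ} (he : e.Injective) {s : γ → Finset δ}
    (hs : ∀ x, x ∈ Set.range e ↔ x.2 ∈ s x.1) {f : γ → δ → E} {S : E}
    (h : HasSum (fun b => f (e b).1 (e b).2) S) : HasSum (fun c => ∑ d ∈ s c, f c d) S := by
  classical
  have hite : HasSum (fun x : γ × δ => if x.2 ∈ s x.1 then f x.1 x.2 else 0) S := by
    refine (he.hasSum_iff fun x hx => if_neg (mt (hs x).2 hx)).1 (h.congr_fun fun b => ?_)
    exact if_pos ((hs _).1 ⟨b, rfl⟩)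
  refine hite.prod_fiberwise fun c => ?_
  rw [sum_congr rfl fun d hd => (if_pos hd).symm]
  exact hasSum_sum_of_ne_finset_zero fun d hd => if_neg hd

lemma hasSum_sum_range {f : ℕ → ℕ → ℝ} {S : ℝ}
    (h : HasSum (fun p : ℕ × ℕ => f (p.1 + p.2 + 1) p.1) S) :
    HasSum (fun M => ∑ i ∈ range M, f M i) S := by
  refine hasSum_sum_of_injective (e := fun p : ℕ × ℕ => (p.1 + p.2 + 1, p.1)) ?_ ?_ h
  · rintro ⟨i, j⟩ ⟨i', j'⟩ hij
    simp only [Prod.mk.injEq] at hij ⊢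
    lia
  · rintro ⟨M, i⟩
    simp only [Set.mem_range, Prod.mk.injEq, Prod.exists, mem_range]
    exact ⟨by lia, fun hi => ⟨i, M - i - 1, by lia, rfl⟩⟩

lemma hasSum_sum_range_sum_range {f : ℕ → ℕ → ℕ → ℝ} {S : ℝ}
    (h : HasSum (fun p : ℕ × ℕ × ℕ => f (p.1 + p.2.1 + p.2.2 + 2) p.1 p.2.1) S) :
    HasSum (fun M => ∑ i ∈ range M, ∑ j ∈ range (M - 1 - i), f M i j) S := by
  simp only [sum_sigma']
  refine hasSum_sum_of_injective (f := fun M (x : (_ : ℕ) × ℕ) => f M x.1 x.2)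
    (e := fun p : ℕ × ℕ × ℕ => (p.1 + p.2.1 + p.2.2 + 2, ⟨p.1, p.2.1⟩)) ?_ ?_ h
  · rintro ⟨i, j, l⟩ ⟨i', j', l'⟩ hij
    simp only [Prod.mk.injEq, Sigma.mk.injEq, heq_eq_eq] at hij ⊢
    lia
  · rintro ⟨M, i, j⟩
    simp only [Set.mem_range, Prod.mk.injEq, Prod.exists, mem_sigma, mem_range, Sigma.mk.injEq,
      heq_eq_eq]
    exact ⟨by lia, fun hij => ⟨i, j, M - i - j - 2, by lia, rfl, rfl⟩⟩

end Regrouping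

section Tails

/-- The tail `∑ 1 / m ^ e` over `m > n` of the zeta value `ζ(e)`. -/
def zetaTail (e n : ℕ) : ℝ :=
  ∑' l : ℕ, 1 / ((n : ℝ) + l + 1) ^ e

lemma hasSum_zetaTail {e : ℕ} (he : 2 ≤ e) (n : ℕ) :
    HasSum (fun l : ℕ => 1 / ((n : ℝ) + l + 1) ^ e) (zetaTail e n) := by
  have h := (summable_nat_add_iff (n + 1)).2 (Real.summable_one_div_nat_pow.2 (by lia : 1 < e))
  exact (h.congr fun l => by push_cast; ring_nf).hasSum

lemma harmonicSum_add_zetaTail {e : ℕ} (he : 2 ≤ e) (n : ℕ) :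
    harmonicSum e n + zetaTail e n = zetaTail e 0 := by
  have h := (hasSum_zetaTail he 0).summable.sum_add_tsum_nat_add n
  simp only [Nat.cast_zero, zero_add, Nat.cast_add] at h
  rw [harmonicSum, zetaTail, zetaTail]
  simpa [add_comm] using h

lemma zetaTail_eq_add_sub {e : ℕ} (he : 2 ≤ e) (m n : ℕ) :
    zetaTail e m = zetaTail e n + (harmonicSum e n - harmonicSum e m) := by
  linear_combination harmonicSum_add_zetaTail he m - harmonicSum_add_zetaTail he n

lemma hasSum_one_div_sub_one_div (N : ℕ) :
    HasSum (fun l : ℕ => 1 / ((l : ℝ) + 1) - 1 / ((l : ℝ) + N + 1)) (harmonicSum 1 N) := by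
  have hpartial : ∀ n : ℕ, ∑ l ∈ range n, (1 / ((l : ℝ) + 1) - 1 / ((l : ℝ) + N + 1))
      = harmonicSum 1 N - ∑ i ∈ range N, 1 / ((n : ℝ) + i + 1) := fun n => by
    have h₁ := sum_range_add (fun l : ℕ => 1 / ((l : ℝ) + 1)) n N
    have h₂ := sum_range_add (fun l : ℕ => 1 / ((l : ℝ) + 1)) N n
    rw [add_comm N n, h₁] at h₂
    simp only [Nat.cast_add, add_comm (N : ℝ)] at h₂
    simp only [harmonicSum, pow_one, sum_sub_distrib]
    linear_combination h₂
  rw [hasSum_iff_tendsto_nat_of_nonneg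
    (fun l => sub_nonneg.2 (by gcongr; exact le_add_of_nonneg_right N.cast_nonneg))]
  simp only [hpartial]
  have hzero : Filter.Tendsto (fun n : ℕ => ∑ i ∈ range N, 1 / ((n : ℝ) + i + 1)) Filter.atTop
      (nhds (∑ _i ∈ range N, 0)) := tendsto_finsetSum _ fun i _ => by
    simpa using (Filter.tendsto_add_atTop_iff_nat i).2
      (tendsto_one_div_add_atTop_nhds_zero_nat (𝕜 := ℝ))
  simpa using hzero.const_sub (harmonicSum 1 N)

lemma hasSum_one_div_mul_add (N : ℕ) :
    HasSum (fun l : ℕ => 1 / (((l : ℝ) + 1) * (N + 1) * (l + N + 2)))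
      (harmonicSum 1 (N + 1) / (N + 1) ^ 2) := by
  refine ((hasSum_one_div_sub_one_div (N + 1)).div_const _).congr_fun fun l => ?_
  push_cast
  field_simp
  ring

lemma summable_one_div_mul_sq {a b : ℝ} (ha : 0 ≤ a) (hb : 0 ≤ b) :
    Summable fun p : ℕ × ℕ => 1 / ((a + p.1 + 1) * (b + p.1 + p.2 + 2) ^ 2) := by
  refine summable_one_div_mul_mul_add.of_nonneg_of_le (fun p => by positivity) fun p => ?_
  rw [pow_two, ← mul_assoc]
  refine one_div_le_one_div_of_le (by positivity) ?_
  gcongr <;> linarith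

lemma hasSum_zetaTail_two_div_tsum (N : ℕ) :
    HasSum (fun l : ℕ => zetaTail 2 (N + l + 1) / (l + 1))
      (∑' p : ℕ × ℕ, 1 / ((0 + (p.1 : ℝ) + 1) * (N + p.1 + p.2 + 2) ^ 2)) := by
  refine (summable_one_div_mul_sq le_rfl N.cast_nonneg).hasSum.prod_fiberwise fun l => ?_
  refine ((hasSum_zetaTail le_rfl (N + l + 1)).div_const _).congr_fun fun j => ?_
  push_cast
  field_simp
  ring

lemma hasSum_harmonicSum_sub_div_tsum (N : ℕ) :
    HasSum (fun j : ℕ => (harmonicSum 1 (N + j) - harmonicSum 1 N) / ((N : ℝ) + j + 1) ^ 2)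
      (∑' p : ℕ × ℕ, 1 / (((N : ℝ) + p.1 + 1) * (N + p.1 + p.2 + 2) ^ 2)) := by
  have h := hasSum_sum_range (f := fun j i => 1 / (((N : ℝ) + i + 1) * (N + j + 1) ^ 2))
    ((summable_one_div_mul_sq N.cast_nonneg N.cast_nonneg).hasSum.congr_fun fun p => by
      push_cast; ring)
  refine h.congr_fun fun j => ?_
  rw [harmonicSum, harmonicSum, sum_range_add, add_sub_cancel_left, sum_div]
  exact sum_congr rfl fun i _ => by push_cast; field_simp

-- Euler's double counting for `ζ(2,1) = ζ(3)`, which is the case `N = 0`.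
lemma hasSum_zetaTail_two_div (N : ℕ) :
    HasSum (fun l : ℕ => zetaTail 2 (N + l + 1) / (l + 1))
      (zetaTail 2 N * harmonicSum 1 N + zetaTail 3 N) := by
  have hP := (summable_one_div_mul_sq le_rfl N.cast_nonneg).hasSum
  have hQ := (summable_one_div_mul_sq N.cast_nonneg N.cast_nonneg).hasSum
  have hfiber := (((Equiv.prodComm ℕ ℕ).hasSum_iff.2 hP).add hQ).prod_fiberwise
    (g := fun j => harmonicSum 1 (N + j + 1) / ((N : ℝ) + j + 1) ^ 2) fun j => by
      have h := hasSum_one_div_mul_add (N + j)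
      push_cast at h
      refine h.congr_fun fun l => ?_
      simp only [Function.comp_apply, Equiv.prodComm_apply, Prod.swap_prod_mk]
      field_simp
      ring
  have hvalue := ((hasSum_zetaTail le_rfl N).mul_right (harmonicSum 1 N)).add
    (hasSum_zetaTail (by simp : 2 ≤ 3) N)
  convert hasSum_zetaTail_two_div_tsum N
  rw [← add_sub_cancel_right (∑' p : ℕ × ℕ, _) (∑' p : ℕ × ℕ, _)]
  refine hvalue.unique ((hfiber.sub (hasSum_harmonicSum_sub_div_tsum N)).congr_fun fun j => ?_)
  rw [harmonicSum_succ]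
  push_cast
  field_simp
  ring

-- The summand at `j = M` is zero, because `x / 0 = 0`.
lemma hasSum_zetaTail_two_div_sub (M : ℕ) :
    HasSum (fun j : ℕ => zetaTail 2 (j + 1) / ((j : ℝ) - M))
      (zetaTail 2 (M + 1) / (M + 1) + zetaTail 3 (M + 1) - harmonicSum 1 M / (M + 1) ^ 2
        - cornerSum 1 2 M) := by
  have hbelow : ∑ j ∈ range M, zetaTail 2 (j + 1) / ((j : ℝ) - M)
      = -(zetaTail 2 M * harmonicSum 1 M + cornerSum 1 2 M) := by
    rw [cornerSum_eq, ← sum_range_one_div_sub, mul_sum, ← sum_add_distrib, ← sum_neg_distrib]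
    refine sum_congr rfl fun j _ => ?_
    rw [zetaTail_eq_add_sub le_rfl (j + 1) M, ← neg_sub (M : ℝ), div_neg]
    ring
  have hsucc : zetaTail 2 (M + 1) = zetaTail 2 M - 1 / ((M : ℝ) + 1) ^ 2 := by
    rw [zetaTail_eq_add_sub le_rfl (M + 1) M, harmonicSum_succ]
    ring
  rw [← hasSum_nat_add_iff' (M + 1), sum_range_succ, sub_self, div_zero, hbelow]
  have hvalue : zetaTail 2 (M + 1) / ((M : ℝ) + 1) + zetaTail 3 (M + 1)
      - harmonicSum 1 M / (M + 1) ^ 2 - cornerSum 1 2 M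
        - (-(zetaTail 2 M * harmonicSum 1 M + cornerSum 1 2 M) + 0)
      = zetaTail 2 (M + 1) * harmonicSum 1 (M + 1) + zetaTail 3 (M + 1) := by
    rw [hsucc, harmonicSum_succ]
    ring
  rw [hvalue]
  refine (hasSum_zetaTail_two_div (M + 1)).congr_fun fun l => ?_
  rw [show l + (M + 1) + 1 = M + 1 + l + 1 by ring]
  push_cast
  ring

end Tails

section MultipleZeta

/-- A strictly decreasing pair of positive integers, encoded by its smallest entry and its gap
(both diminished by one). -/
def strictAntiPairEquiv : ℕ × ℕ ≃ {k : Fin 2 → ℕ // StrictAnti k ∧ ∀ i, 0 < k i} where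
  toFun p := ⟨![p.1 + p.2 + 2, p.1 + 1], by
    simp [Fin.forall_fin_two]⟩
  invFun k := (k.1 1 - 1, k.1 0 - k.1 1 - 1)
  left_inv p := Prod.ext rfl (by change p.1 + p.2 + 2 - (p.1 + 1) - 1 = p.2; lia)
  right_inv := by
    rintro ⟨k, hk, hpos⟩
    have h₁₀ : k 1 < k 0 := hk Fin.zero_lt_one
    have h₁ := hpos 1
    ext i
    fin_cases i
    · change k 1 - 1 + (k 0 - k 1 - 1) + 2 = k 0; lia
    · change k 1 - 1 + 1 = k 1; lia

/-- A strictly decreasing triple of positive integers, encoded by its smallest entry and its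
successive gaps (all diminished by one). -/
def strictAntiTripleEquiv :
    ℕ × ℕ × ℕ ≃ {k : Fin 3 → ℕ // StrictAnti k ∧ ∀ i, 0 < k i} where
  toFun p := ⟨![p.1 + p.2.1 + p.2.2 + 3, p.1 + p.2.1 + 2, p.1 + 1], by
    simp [Fin.forall_fin_succ]⟩
  invFun k := (k.1 2 - 1, k.1 1 - k.1 2 - 1, k.1 0 - k.1 1 - 1)
  left_inv p := Prod.ext rfl <| Prod.ext
    (by change p.1 + p.2.1 + 2 - (p.1 + 1) - 1 = p.2.1; lia)
    (by change p.1 + p.2.1 + p.2.2 + 3 - (p.1 + p.2.1 + 2) - 1 = p.2.2; lia)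
  right_inv := by
    rintro ⟨k, hk, hpos⟩
    have h₁₀ : k 1 < k 0 := hk Fin.zero_lt_one
    have h₂₁ : k 2 < k 1 := hk (by decide)
    have h₂ := hpos 2
    ext i
    fin_cases i
    · change k 2 - 1 + (k 1 - k 2 - 1) + (k 0 - k 1 - 1) + 3 = k 0; lia
    · change k 2 - 1 + (k 1 - k 2 - 1) + 2 = k 1; lia
    · change k 2 - 1 + 1 = k 2; lia

lemma hasSum_mzv₂ {a b : ℕ} (ha : 2 ≤ a) (hb : 1 ≤ b) :
    HasSum (fun p : ℕ × ℕ => 1 / (((p.1 : ℝ) + p.2 + 2) ^ a * ((p.1 : ℝ) + 1) ^ b))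
      (mzv ![a, b]) := by
  have hsum : Summable fun p : ℕ × ℕ => 1 / (((p.1 : ℝ) + p.2 + 2) ^ a * ((p.1 : ℝ) + 1) ^ b) := by
    refine (summable_one_div_mul_sq le_rfl le_rfl).of_nonneg_of_le (fun p => by positivity)
      fun p => ?_
    rw [zero_add, mul_comm]
    refine one_div_le_one_div_of_le (by positivity) ?_
    gcongr
    · exact le_self_pow₀ (by linarith) (by lia)
    · linarith
  convert hsum.hasSum using 1
  rw [mzv, ← strictAntiPairEquiv.tsum_eq]
  refine tsum_congr fun p => ?_
  simp [strictAntiPairEquiv, Fin.prod_univ_two]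

lemma hasSum_mzv₃ {a b c : ℕ} (ha : 2 ≤ a) (hb : 1 ≤ b) (hc : 1 ≤ c) :
    HasSum (fun p : ℕ × ℕ × ℕ => 1 / (((p.1 : ℝ) + p.2.1 + p.2.2 + 3) ^ a
      * ((p.1 : ℝ) + p.2.1 + 2) ^ b * ((p.1 : ℝ) + 1) ^ c)) (mzv ![a, b, c]) := by
  have hsum : Summable fun p : ℕ × ℕ × ℕ => 1 / (((p.1 : ℝ) + p.2.1 + p.2.2 + 3) ^ a
      * ((p.1 : ℝ) + p.2.1 + 2) ^ b * ((p.1 : ℝ) + 1) ^ c) := by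
    refine summable_one_div_mul_mul_sq.of_nonneg_of_le (fun p => by positivity) fun p => ?_
    have hn : (p.1 : ℝ) + 1 ≤ (p.1 + 1) ^ c := le_self_pow₀ (by linarith) (by lia)
    have hm : (p.2.1 : ℝ) + 1 ≤ (p.1 + p.2.1 + 2) ^ b :=
      le_trans (by linarith) (le_self_pow₀ (by linarith) (by lia))
    rw [mul_comm, mul_comm (_ ^ a), ← mul_assoc]
    refine one_div_le_one_div_of_le (by positivity) ?_
    gcongr
    linarith
  convert hsum.hasSum using 1
  rw [mzv, ← strictAntiTripleEquiv.tsum_eq]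
  refine tsum_congr fun p => ?_
  simp [strictAntiTripleEquiv, Fin.prod_univ_three]

lemma hasSum_mzv₂_harmonicSum {a b : ℕ} (ha : 2 ≤ a) (hb : 1 ≤ b) :
    HasSum (fun M : ℕ => harmonicSum b M / ((M : ℝ) + 1) ^ a) (mzv ![a, b]) := by
  have h := hasSum_sum_range (f := fun M i => 1 / (((M : ℝ) + 1) ^ a * ((i : ℝ) + 1) ^ b))
    ((hasSum_mzv₂ ha hb).congr_fun fun p => by push_cast; ring)
  refine h.congr_fun fun M => ?_
  rw [harmonicSum, sum_div]
  exact sum_congr rfl fun i _ => by rw [div_div, mul_comm]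

lemma hasSum_mzv₂_zetaTail {a b : ℕ} (ha : 2 ≤ a) (hb : 1 ≤ b) :
    HasSum (fun M : ℕ => zetaTail a (M + 1) / ((M : ℝ) + 1) ^ b) (mzv ![a, b]) := by
  refine (hasSum_mzv₂ ha hb).prod_fiberwise fun M => ?_
  refine ((hasSum_zetaTail ha (M + 1)).div_const _).congr_fun fun l => ?_
  push_cast
  rw [div_div]
  ring

end MultipleZeta

section TripleSum

lemma hasSum_comp_swap {α β E : Type*} [AddCommMonoid E] [TopologicalSpace E]
    {f : α × α × β → E} {S : E} (h : HasSum f S) :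
    HasSum (fun p : α × α × β => f (p.2.1, p.1, p.2.2)) S :=
  let swap : Equiv.Perm (α × α × β) :=
    Function.Involutive.toPerm (fun p => (p.2.1, p.1, p.2.2)) fun _ => rfl
  swap.hasSum_iff.2 h

-- For `j = M` only the second term of the value is present, because `x / 0 = 0`.
lemma hasSum_smallPole (r M j : ℕ) :
    HasSum (fun l : ℕ => smallPole r ((M : ℝ) + j + l + 3) (M + 1) (j + 1))
      (((M : ℝ) + 1)⁻¹ ^ (r + 1) * (zetaTail 2 (j + 1) / ((j : ℝ) - M))
        + if j = M then ((r + 1) * ((M : ℝ) + 1)⁻¹ ^ (r + 2) * zetaTail 2 (M + 1)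
          - 2 * ((M : ℝ) + 1)⁻¹ ^ (r + 1) * zetaTail 3 (M + 1)) / 2 else 0) := by
  have hsub : ∀ l : ℕ, (M : ℝ) + j + l + 3 - (M + 1) = ((j + 1 : ℕ) : ℝ) + l + 1 := fun l => by
    push_cast
    ring
  have h₂ := hasSum_zetaTail le_rfl (j + 1)
  rcases eq_or_ne j M with rfl | hne
  · have h₃ := hasSum_zetaTail (by simp : 2 ≤ 3) (j + 1)
    rw [sub_self, div_zero, mul_zero, zero_add, if_pos rfl]
    refine (((h₂.mul_left _).sub (h₃.mul_left _)).div_const 2).congr_fun fun l => ?_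
    rw [smallPole, if_pos rfl, hsub, mul_one_div, mul_one_div]
  · have hne' : (M : ℝ) + 1 ≠ j + 1 := by simpa using hne.symm
    rw [if_neg hne, add_zero]
    refine ((h₂.div_const _).mul_left _).congr_fun fun l => ?_
    rw [smallPole, if_neg hne', hsub, add_sub_add_right_eq_sub, div_div, mul_one_div,
      mul_comm (_ ^ 2)]

lemma hasSum_sum_smallPole (r : ℕ) :
    HasSum (fun M : ℕ => (r + 3) / 2 * ((M : ℝ) + 1)⁻¹ ^ (r + 2) * zetaTail 2 (M + 1)
        - ((M : ℝ) + 1)⁻¹ ^ (r + 3) * harmonicSum 1 M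
        - ((M : ℝ) + 1)⁻¹ ^ (r + 1) * cornerSum 1 2 M)
      (∑' p : ℕ × ℕ × ℕ, smallPole r ((p.1 : ℝ) + p.2.1 + p.2.2 + 3) (p.1 + 1) (p.2.1 + 1)) := by
  have hsum := summable_smallPole r
  refine hsum.hasSum.prod_fiberwise fun M => ?_
  have hrow := (hsum.prod_factor M).hasSum
  have hvalue := (hrow.prod_fiberwise (hasSum_smallPole r M)).unique
    (((hasSum_zetaTail_two_div_sub M).mul_left _).add (hasSum_ite_eq M _))
  rw [hvalue] at hrow
  refine Eq.subst (motive := HasSum _) ?_ hrow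
  simp only [inv_pow]
  field_simp
  ring

lemma eq_mzv₂_of_hasSum_weightedPowSum₃ {r : ℕ} {T : ℝ}
    (h : HasSum (fun p : ℕ × ℕ × ℕ => weightedPowSum₃ r ((p.1 : ℝ) + p.2.1 + p.2.2 + 3)⁻¹
      ((p.1 : ℝ) + 1)⁻¹ ((p.2.1 : ℝ) + 1)⁻¹) T) :
    T = (r + 1) * mzv ![r + 2, 2] - 2 * (r + 2) * mzv ![r + 3, 1] + (r + 3) * mzv ![2, r + 2] := by
  have hsmall := (summable_smallPole r).hasSum
  have hlarge := hasSum_sum_range_sum_range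
    (f := fun M i j => largePole r ((M : ℝ) + 1) (i + 1) (j + 1))
    (((h.sub hsmall).sub (hasSum_comp_swap hsmall)).congr_fun fun p => by
      have hkn : (p.1 : ℝ) + p.2.1 + p.2.2 + 3 - (p.1 + 1) = p.2.1 + p.2.2 + 2 := by ring
      have hkd : (p.1 : ℝ) + p.2.1 + p.2.2 + 3 - (p.2.1 + 1) = p.1 + p.2.2 + 2 := by ring
      have hk : ((p.1 + p.2.1 + p.2.2 + 2 : ℕ) : ℝ) + 1 = p.1 + p.2.1 + p.2.2 + 3 := by
        push_cast; ring
      rw [hk, weightedPowSum₃_inv r (by positivity) (by positivity) (by positivity)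
        (hkn ▸ by positivity) (hkd ▸ by positivity), add_comm (p.2.1 : ℝ) p.1]
      ring)
  have hright := (((hasSum_mzv₂_harmonicSum (by lia : 2 ≤ r + 2) one_le_two).mul_left
      ((r : ℝ) + 1)).sub ((hasSum_mzv₂_harmonicSum (by lia : 2 ≤ r + 3) le_rfl).mul_left
      (2 * ((r : ℝ) + 2)))).add ((hasSum_mzv₂_zetaTail le_rfl (by lia : 1 ≤ r + 2)).mul_left
      ((r : ℝ) + 3))
  have hleft := hlarge.add ((hasSum_sum_smallPole r).mul_left 2)
  have hvalue := hleft.unique (hright.congr_fun fun M => by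
    rw [sum_largePole, cornerSum_one_one]
    simp only [inv_pow]
    field_simp
    ring)
  linear_combination hvalue

lemma hasSum_weightedPowSum₃_mzv₃ (r : ℕ) :
    HasSum (fun p : ℕ × ℕ × ℕ => weightedPowSum₃ r ((p.1 : ℝ) + p.2.1 + p.2.2 + 3)⁻¹
        (2 * ((p.1 : ℝ) + p.2.1 + 2)⁻¹) ((p.1 : ℝ) + 1)⁻¹)
      (∑ s ∈ antidiagonal r, ∑ t ∈ antidiagonal s.2,
        (s.1 + 1) * 2 ^ (t.1 + 1) * mzv ![s.1 + 2, t.1 + 1, t.2 + 1]) := by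
  simp only [weightedPowSum₃, mixedPowSum, mul_sum]
  refine hasSum_sum fun s _ => hasSum_sum fun t _ => ?_
  refine ((hasSum_mzv₃ (by lia : 2 ≤ s.1 + 2) (by lia : 1 ≤ t.1 + 1)
    (by lia : 1 ≤ t.2 + 1)).mul_left _).congr_fun fun p => ?_
  simp only [mul_pow, inv_pow, one_div, mul_inv]
  ring

lemma sum_antidiagonal_mzv₃ (r : ℕ) :
    ∑ s ∈ antidiagonal r, ∑ t ∈ antidiagonal s.2,
        ((s.1 : ℝ) + 1) * 2 ^ (t.1 + 1) * mzv ![s.1 + 2, t.1 + 1, t.2 + 1]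
      = (r + 1) * mzv ![r + 2, 2] - 2 * (r + 2) * mzv ![r + 3, 1]
        + (r + 3) * mzv ![2, r + 2] := by
  have h := hasSum_weightedPowSum₃_mzv₃ r
  refine eq_mzv₂_of_hasSum_weightedPowSum₃ ?_
  rw [← add_self_div_two (∑ s ∈ antidiagonal r, _)]
  refine ((h.add (hasSum_comp_swap h)).div_const 2).congr_fun fun p => ?_
  simp only [add_comm (p.2.1 : ℝ) p.1]
  rw [weightedPowSum₃_two_mul_add r _ (by field_simp; ring) (by positivity), mul_div_cancel_left₀]
  exact two_ne_zero

lemma sum_Icc_eq_sum_antidiagonal {E : Type*} [AddCommMonoid E] (f : ℕ → E) (m n : ℕ) :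
    ∑ a ∈ Icc m (m + n), f a = ∑ p ∈ antidiagonal n, f (m + p.1) := by
  rw [Nat.sum_antidiagonal_eq_sum_range_succ_mk, ← Ico_add_one_right_eq_Icc, sum_Ico_eq_sum_range,
    add_assoc, Nat.add_sub_cancel_left]
  rfl

end TripleSum

end WeightedSum

theorem weighted_sum_depth3_a_2b (w : ℕ) (hw : 4 ≤ w)
    (v u q : ℕ) (hv : v = w - 1) (hu : u = w - 2) (hq : q = w - 3) :
    (∑ a ∈ Finset.Icc 2 (w - 2), ∑ b ∈ Finset.Icc 1 (w - a - 1),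
        ((a : ℝ) - 1) * (2 : ℝ) ^ b * mzv ![a, b, w - a - b])
    = (q : ℝ) * mzv ![u, 2] - 2 * (u : ℝ) * mzv ![v, 1] + (v : ℝ) * mzv ![2, u] := by
  obtain ⟨r, rfl⟩ := Nat.exists_eq_add_of_le hw
  obtain ⟨rfl, rfl, rfl⟩ : q = r + 1 ∧ u = r + 2 ∧ v = r + 3 := by lia
  have h := sum_antidiagonal_mzv₃ r
  push_cast
  rw [← h, show 4 + r - 2 = 2 + r by lia, sum_Icc_eq_sum_antidiagonal]
  refine Finset.sum_congr rfl fun s hs => ?_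
  have hs' := Finset.HasAntidiagonal.mem_antidiagonal.1 hs
  rw [show 4 + r - (2 + s.1) - 1 = 1 + s.2 by lia, sum_Icc_eq_sum_antidiagonal]
  refine Finset.sum_congr rfl fun t ht => ?_
  have ht' := Finset.HasAntidiagonal.mem_antidiagonal.1 ht
  rw [show 4 + r - (2 + s.1) - (1 + t.1) = t.2 + 1 by lia, add_comm 2, add_comm 1]
  push_cast
  ring
end

section
/- Let w ≥ 5 be an integer and q = w−3, u = w−2. Then Σ_{a+b+c+d=w, a≥2, b,c,d≥1} 2^a·ζ(a,b,c,d) = 4ζ(w) + 2ζ(3,q) − q·ζ(u,2). -/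
/-!
Fix `0 ≤ x < 1 / 2` and form the generating function in `x` of the weighted sums of a given depth
and varying weight. Summing the geometric series over the exponents turns it into twice the sum over
`k₀ > ⋯ > k_d ≥ 1` of `2 x / (k₀ (k₀ - 2 x)) * ∏ 1 / (k_i - x)`. A connected sum in the style of
Seki and Yamamoto removes the `k_i` one at a time: Gauss's summation theorem expands the factor of
`k₀` as a series over a new index `m`, and the telescoping series for Pochhammer ratios then trades
the summation over each `k_i` for a factor `1 / m`. What is left in depth `4` is, up to an
elementary diagonal term, the well-poised series `∑ (x)_m / ((1 - x)_m m ^ 4)`.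

The well-poised series satisfies a recursion in `x ↦ x - 1` which raises the exponent by two and
starts from Gauss's theorem. Two steps of it, together with a partial fraction expansion, express
the series by a Tornheim sum and a double zeta series with shifted argument. The coefficients of
these are multiples of `ζ(w)`, `ζ(3, w - 3)` and `ζ(w - 2, 2)`, and comparing coefficients of `x`
gives the identity.
-/

section

open Filter Finset
open scoped Topology

/-! ### Series of nonnegative terms and power series -/

theorem hasSum_of_eq {α : Type*} {f g : α → ℝ} {a b : ℝ} (hf : HasSum f a) (hfg : ∀ i, g i = f i)
    (hab : b = a) : HasSum g b := by
  rwa [funext hfg, hab]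

theorem hasSum_sigma_of_nonneg {α : Type*} {β : α → Type*} {f : (Σ a, β a) → ℝ} {g : α → ℝ}
    {s : ℝ} (hf : ∀ p, 0 ≤ f p) (hg : ∀ a, HasSum (fun b => f ⟨a, b⟩) (g a)) (hs : HasSum g s) :
    HasSum f s := by
  have hsum : Summable f := (summable_sigma_of_nonneg hf).mpr
    ⟨fun a => (hg a).summable, by simpa only [(hg _).tsum_eq] using hs.summable⟩
  exact (hsum.hasSum.sigma hg).unique hs ▸ hsum.hasSum

theorem hasSum_prod_of_nonneg {α β : Type*} {f : α × β → ℝ} {g : α → ℝ} {s : ℝ}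
    (hf : ∀ p, 0 ≤ f p) (hg : ∀ a, HasSum (fun b => f (a, b)) (g a)) (hs : HasSum g s) :
    HasSum f s :=
  (Equiv.sigmaEquivProd α β).hasSum_iff.mp
    (hasSum_sigma_of_nonneg (fun p => hf (p.1, p.2)) hg hs)

theorem hasSum_tsum_of_nonneg {α β : Type*} {f : α → β → ℝ} {g : β → ℝ} {s : ℝ}
    (hf : ∀ a b, 0 ≤ f a b) (hg : ∀ b, HasSum (fun a => f a b) (g b)) (hs : HasSum g s) :
    HasSum (fun a => ∑' b, f a b) s := by
  have hswap : HasSum (fun p : α × β => f p.1 p.2) s :=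
    (Equiv.prodComm β α).hasSum_iff.mp (hasSum_prod_of_nonneg (fun p => hf p.2 p.1) hg hs)
  exact hswap.prod_fiberwise fun a => (hswap.summable.prod_factor a).hasSum

theorem hasSum_sub_succ_of_antitone {v : ℕ → ℝ} {l : ℝ} (hv : Antitone v)
    (hl : Tendsto v atTop (𝓝 l)) : HasSum (fun n => v n - v (n + 1)) (v 0 - l) := by
  refine (hasSum_iff_tendsto_nat_of_nonneg (fun n => sub_nonneg.mpr (hv n.le_succ)) _).mpr ?_
  simpa only [sum_range_sub'] using hl.const_sub (v 0)

theorem hasSum_geometric_div {x k : ℝ} (h : |x| < k) :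
    HasSum (fun n : ℕ => x ^ n / k ^ (n + 1)) (1 / (k - x)) := by
  have hk : 0 < k := (abs_nonneg x).trans_lt h
  have hkx : k - x ≠ 0 := (sub_pos.mpr ((le_abs_self x).trans_lt h)).ne'
  have hlt : |x / k| < 1 := by rwa [abs_div, abs_of_pos hk, div_lt_one hk]
  refine hasSum_of_eq ((hasSum_geometric_of_abs_lt_one hlt).mul_left (1 / k)) (fun n => ?_) ?_
  · rw [div_pow]
    field_simp
    ring
  · rw [one_sub_div hk.ne']
    field_simp

theorem hasSum_succ_mul_geometric_div {x k : ℝ} (h : |x| < k) :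
    HasSum (fun n : ℕ => (n + 1) * x ^ n / k ^ (n + 2)) (1 / (k - x) ^ 2) := by
  have hk : 0 < k := (abs_nonneg x).trans_lt h
  have hkx : k - x ≠ 0 := (sub_pos.mpr ((le_abs_self x).trans_lt h)).ne'
  have hlt : ‖x / k‖ < 1 := by rwa [Real.norm_eq_abs, abs_div, abs_of_pos hk, div_lt_one hk]
  refine hasSum_of_eq
    ((hasSum_choose_mul_geometric_of_norm_lt_one 1 hlt).mul_left (1 / k ^ 2)) (fun n => ?_) ?_
  · rw [Nat.choose_one_right, div_pow]
    push_cast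
    field_simp
    ring
  · rw [one_sub_div hk.ne', div_pow]
    field_simp
    ring

theorem eq_zero_of_forall_hasSum_mul_pow {c : ℕ → ℝ} {r : ℝ} (hr : 0 < r)
    (h : ∀ x, 0 < x → x < r → HasSum (fun n => c n * x ^ n) 0) : c = 0 := by
  let p := FormalMultilinearSeries.ofScalars ℝ c
  have hradius : 0 < p.radius := by
    lift r to NNReal using hr.le
    refine (ENNReal.coe_pos.mpr (half_pos (NNReal.coe_pos.mp hr))).trans_le
      (p.le_radius_of_tendsto (l := 0) ?_)
    simpa [p, FormalMultilinearSeries.ofScalars_norm] using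
      (h (r / 2) (half_pos hr) (half_lt_self hr)).summable.tendsto_atTop_zero.norm
  have hp : HasFPowerSeriesAt p.sum p 0 := (p.hasFPowerSeriesOnBall hradius).hasFPowerSeriesAt
  have hzero : ∀ᶠ x in 𝓝[>] (0 : ℝ), p.sum x = 0 := by
    filter_upwards [Ioo_mem_nhdsGT hr] with x hx
    rw [← (h x hx.1 hx.2).tsum_eq]
    exact tsum_congr fun n => by simp [p, mul_comm]
  have hfreq : ∃ᶠ x in 𝓝[≠] (0 : ℝ), p.sum x = 0 :=
    hzero.frequently.filter_mono (nhdsWithin_mono _ fun x hx => (Set.mem_Ioi.mp hx).ne')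
  exact (FormalMultilinearSeries.ofScalars_series_eq_zero ℝ).mp
    (hp.eq_zero_of_eventually
      (hp.analyticAt.frequently_zero_iff_eventually_zero.mp hfreq))

/-! ### Pochhammer ratios -/

/-- The ratio `(a)_m / (b)_m` of rising factorials `(a)_m = a (a + 1) ⋯ (a + m - 1)`. -/
noncomputable def pochRatio (a b : ℝ) (m : ℕ) : ℝ :=
  (ascPochhammer ℝ m).eval a / (ascPochhammer ℝ m).eval b

theorem pochRatio_zero (a b : ℝ) : pochRatio a b 0 = 1 := by simp [pochRatio]

theorem pochRatio_succ (a b : ℝ) (m : ℕ) :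
    pochRatio a b (m + 1) = pochRatio a b m * ((a + m) / (b + m)) := by
  simp only [pochRatio, ascPochhammer_succ_eval, mul_div_mul_comm]

theorem pochRatio_succ_left (a b : ℝ) (m : ℕ) :
    pochRatio a b (m + 1) = a / b * pochRatio (a + 1) (b + 1) m := by
  simp only [pochRatio, ascPochhammer_succ_left, Polynomial.eval_mul, Polynomial.eval_X,
    Polynomial.eval_comp, Polynomial.eval_add, Polynomial.eval_one, mul_div_mul_comm]

theorem pochRatio_mul_pochRatio {b : ℝ} (a c : ℝ) (m : ℕ) (hb : 0 < b) :
    pochRatio a b m * pochRatio b c m = pochRatio a c m :=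
  div_mul_div_cancel₀ (ascPochhammer_pos m b hb).ne'

theorem pochRatio_self {b : ℝ} (m : ℕ) (hb : 0 < b) : pochRatio b b m = 1 :=
  div_self (ascPochhammer_pos m b hb).ne'

theorem pochRatio_zero_left_succ (b : ℝ) (m : ℕ) : pochRatio 0 b (m + 1) = 0 := by
  rw [pochRatio_succ_left, zero_div, zero_mul]

theorem pochRatio_nonneg {a b : ℝ} (ha : 0 ≤ a) (hb : 0 < b) (m : ℕ) : 0 ≤ pochRatio a b m := by
  induction m with
  | zero => simp [pochRatio_zero]
  | succ m ih =>
    rw [pochRatio_succ]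
    positivity

theorem pochRatio_succ_nonpos {a b : ℝ} (ha : -1 ≤ a) (ha' : a ≤ 0) (hb : 0 < b) (m : ℕ) :
    pochRatio a b (m + 1) ≤ 0 := by
  rw [pochRatio_succ_left]
  exact mul_nonpos_of_nonpos_of_nonneg (div_nonpos_of_nonpos_of_nonneg ha' hb.le)
    (pochRatio_nonneg (by linarith) (by linarith) m)

theorem abs_pochRatio_le_one {a b : ℝ} (hb : 0 < b) (hab : |a| ≤ b) (m : ℕ) :
    |pochRatio a b m| ≤ 1 := by
  induction m with
  | zero => simp [pochRatio_zero]
  | succ m ih =>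
    have hbm : 0 < b + m := by positivity
    rw [pochRatio_succ, abs_mul, abs_div, abs_of_pos hbm]
    refine mul_le_one₀ ih (by positivity) ((div_le_one hbm).mpr ?_)
    exact (abs_add_le a m).trans (by rw [Nat.abs_cast]; gcongr)

theorem pochRatio_mul_eq_pochRatio_add_one {b : ℝ} (a : ℝ) (m : ℕ) (hb : 0 < b) :
    pochRatio a b m * b = pochRatio a (b + 1) m * (b + m) := by
  induction m with
  | zero => simp [pochRatio_zero]
  | succ m ih =>
    have : b + m ≠ 0 := by positivity
    rw [pochRatio_succ, pochRatio_succ, Nat.cast_succ, mul_right_comm, ih, add_right_comm b 1,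
      add_assoc b, mul_assoc, mul_assoc]
    field_simp

theorem pochRatio_add_one_right {a : ℝ} (m : ℕ) (ha : 0 < a) :
    pochRatio a (a + 1) m = a / (a + m) := by
  rw [eq_div_iff (by positivity), ← pochRatio_mul_eq_pochRatio_add_one a m ha,
    pochRatio_self m ha, one_mul]

theorem tendsto_pochRatio_succ_atTop_right (a : ℝ) (m : ℕ) :
    Tendsto (fun b => pochRatio a b (m + 1)) atTop (𝓝 0) := by
  have hfactor (m : ℕ) : Tendsto (fun b : ℝ => (a + m) / (b + m)) atTop (𝓝 0) :=
    (tendsto_atTop_add_const_right _ _ tendsto_id).const_div_atTop _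
  induction m with
  | zero => simpa only [pochRatio_succ, pochRatio_zero, one_mul] using hfactor 0
  | succ m ih => simpa only [pochRatio_succ _ _ (m + 1), mul_zero] using ih.mul (hfactor (m + 1))

theorem pochRatio_sub_pochRatio_succ {b : ℝ} (a : ℝ) (m : ℕ) (hb : 0 < b) :
    pochRatio a b m - pochRatio a b (m + 1) = (b - a) * (pochRatio a b m / (b + m)) := by
  have : b + m ≠ 0 := by positivity
  rw [pochRatio_succ]
  field_simp
  ring

theorem antitone_pochRatio {a b : ℝ} (ha : 0 ≤ a) (hb : 0 < b) (hab : a ≤ b) :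
    Antitone (pochRatio a b) := antitone_nat_of_succ_le fun m => by
  have hP := pochRatio_nonneg ha hb m
  have : 0 ≤ (b - a) * (pochRatio a b m / (b + m)) :=
    mul_nonneg (sub_nonneg.mpr hab) (by positivity)
  linarith [pochRatio_sub_pochRatio_succ a m hb]

/-- A positive limit `L` would bound the telescoping sum of `pochRatio_sub_pochRatio_succ` from
below by the divergent series `∑ L / (b + m)`. -/
theorem tendsto_pochRatio_atTop {a b : ℝ} (ha : 0 ≤ a) (hab : a < b) :
    Tendsto (pochRatio a b) atTop (𝓝 0) := by
  have hb : 0 < b := ha.trans_lt hab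
  have hanti := antitone_pochRatio ha hb hab.le
  have hbdd : BddBelow (Set.range (pochRatio a b)) :=
    ⟨0, by rintro _ ⟨m, rfl⟩; exact pochRatio_nonneg ha hb m⟩
  have hlim := tendsto_atTop_ciInf hanti hbdd
  set L := ⨅ m, pochRatio a b m
  have hL_nonneg : 0 ≤ L := le_ciInf fun m => pochRatio_nonneg ha hb m
  suffices L = 0 from this ▸ hlim
  by_contra hL
  have hsum : Summable fun m : ℕ => pochRatio a b m / (b + m) := by
    refine (summable_mul_left_iff (sub_pos.mpr hab).ne').mp ?_
    simpa only [pochRatio_sub_pochRatio_succ a _ hb] using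
      (hasSum_sub_succ_of_antitone hanti hlim).summable
  have hdiv : Summable fun m : ℕ => L * (1 / |(m : ℝ) + b| ^ (1 : ℝ)) := by
    refine hsum.of_nonneg_of_le (fun m => by positivity) fun m => ?_
    have hm : 0 < b + m := by positivity
    rw [Real.rpow_one, add_comm (m : ℝ) b, abs_of_pos hm, mul_one_div]
    gcongr
    exact ciInf_le hbdd m
  exact lt_irrefl 1
    ((Real.summable_one_div_nat_add_rpow b 1).mp ((summable_mul_left_iff hL).mp hdiv))

theorem hasSum_pochRatio_of_nonneg {a b : ℝ} (ha : 0 ≤ a) (hab : a + 1 < b) :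
    HasSum (pochRatio a b) ((b - 1) / (b - a - 1)) := by
  have hb : 0 < b - 1 := by linarith
  have hba : b - 1 - a ≠ 0 := by linarith
  have htel := hasSum_sub_succ_of_antitone (antitone_pochRatio ha hb (by linarith))
    (tendsto_pochRatio_atTop ha (by linarith : a < b - 1))
  refine hasSum_of_eq (htel.mul_left ((b - 1) / (b - a - 1))) (fun m => ?_) ?_
  · have : b - 1 + m ≠ 0 := by positivity
    have hshift := pochRatio_mul_eq_pochRatio_add_one a m hb
    rw [sub_add_cancel] at hshift
    rw [pochRatio_sub_pochRatio_succ a m hb, sub_right_comm]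
    field_simp
    linarith
  · rw [pochRatio_zero, sub_zero, mul_one]

/-- Gauss's summation formula `₂F₁(a, 1; b; 1) = (b - 1) / (b - a - 1)`. -/
theorem hasSum_pochRatio {a b : ℝ} (hb : 0 < b) (hab : a + 1 < b) :
    HasSum (pochRatio a b) ((b - 1) / (b - a - 1)) := by
  obtain ⟨n, hn⟩ := exists_nat_ge (-a)
  induction n generalizing a b with
  | zero => exact hasSum_pochRatio_of_nonneg (by simpa using hn) hab
  | succ n ih =>
    have hshift := ih (a := a + 1) (b := b + 1) (by linarith) (by linarith)
      (by push_cast at hn; linarith)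
    refine (hasSum_nat_add_iff' 1).mp (hasSum_of_eq (hshift.mul_left (a / b))
      (fun m => pochRatio_succ_left a b m) ?_)
    have : b - a - 1 ≠ 0 := by linarith
    rw [sum_range_one, pochRatio_zero, add_sub_add_right_eq_sub, add_sub_cancel_right]
    field_simp
    ring

/-- Both sides are `pochRatio a 1 m` times the instance `a = 1`, where the sum telescopes. -/
theorem hasSum_pochRatio_div_add {y : ℝ} (a : ℝ) (m : ℕ) (hy : 0 < y) :
    HasSum (fun j : ℕ => pochRatio a (y + 1 + j) (m + 1) / (y + j))
      (pochRatio a y (m + 1) / (m + 1)) := by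
  have hsub {z : ℝ} (hz : 0 < z) : pochRatio 1 z (m + 1) - pochRatio 1 (z + 1) (m + 1) =
      (m + 1) * (pochRatio 1 (z + 1) (m + 1) / z) := by
    have hshift := pochRatio_mul_eq_pochRatio_add_one 1 (m + 1) hz
    push_cast at hshift
    field_simp
    linarith
  have hanti : Antitone fun j : ℕ => pochRatio 1 (y + j) (m + 1) :=
    antitone_nat_of_succ_le fun j => by
      have hz : 0 < y + j := by positivity
      have hP := pochRatio_nonneg zero_le_one (show 0 < y + j + 1 by positivity) (m + 1)
      have : 0 ≤ (m + 1) * (pochRatio 1 (y + j + 1) (m + 1) / (y + j)) := by positivity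
      push_cast
      rw [← add_assoc]
      linarith [hsub hz]
  have htel := hasSum_sub_succ_of_antitone hanti ((tendsto_pochRatio_succ_atTop_right 1 m).comp
    (tendsto_atTop_add_const_left _ y tendsto_natCast_atTop_atTop))
  refine hasSum_of_eq (htel.mul_left (pochRatio a 1 (m + 1) / (m + 1))) (fun j => ?_) ?_
  · have hz : 0 < y + j := by positivity
    push_cast
    rw [← add_assoc, hsub hz, ← pochRatio_mul_pochRatio a (y + 1 + j) (m + 1) one_pos,
      add_right_comm]
    field_simp
  · rw [Nat.cast_zero, add_zero, sub_zero, div_mul_eq_mul_div,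
      pochRatio_mul_pochRatio a y (m + 1) one_pos]

/-! ### The well-poised series -/

theorem summable_one_div_succ_pow {p : ℕ} (hp : 2 ≤ p) :
    Summable fun m : ℕ => 1 / ((m : ℝ) + 1) ^ p := by
  simpa only [Nat.cast_succ] using
    (summable_nat_add_iff 1).mpr (Real.summable_one_div_nat_pow.mpr hp)

/-- The `m`-th term of the well-poised series, see `wpSeries`. -/
noncomputable def wpTerm (p : ℕ) (x : ℝ) (m : ℕ) : ℝ :=
  pochRatio x (1 - x) (m + 1) / (m + 1) ^ p

/-- The well-poised series `∑_{m ≥ 1} (x)_m / ((1 - x)_m m ^ p)`. -/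
noncomputable def wpSeries (p : ℕ) (x : ℝ) : ℝ := ∑' m, wpTerm p x m

theorem abs_wpTerm_le {x : ℝ} (p m : ℕ) (hx : x ≤ 1 / 2) :
    |wpTerm p x m| ≤ 1 / ((m : ℝ) + 1) ^ p := by
  have hpos : (0 : ℝ) < (m + 1) ^ p := by positivity
  rw [wpTerm, abs_div, abs_of_pos hpos]
  gcongr
  exact abs_pochRatio_le_one (by linarith) (abs_le.mpr ⟨by linarith, by linarith⟩) (m + 1)

theorem summable_wpTerm {p : ℕ} {x : ℝ} (hp : 2 ≤ p) (hx : x ≤ 1 / 2) : Summable (wpTerm p x) :=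
  (summable_one_div_succ_pow hp).of_norm_bounded fun m => abs_wpTerm_le p m hx

theorem abs_wpSeries_le {p : ℕ} {x : ℝ} (hp : 2 ≤ p) (hx : x ≤ 1 / 2) :
    |wpSeries p x| ≤ ∑' m : ℕ, 1 / ((m : ℝ) + 1) ^ p :=
  tsum_of_norm_bounded (f := wpTerm p x) (summable_one_div_succ_pow hp).hasSum
    fun m => abs_wpTerm_le p m hx

theorem wpSeries_zero_right (p : ℕ) : wpSeries p 0 = 0 := by
  simp [wpSeries, wpTerm, pochRatio_zero_left_succ]

theorem hasSum_wpTerm_zero {x : ℝ} (hx : x < 0) : HasSum (wpTerm 0 x) (-1 / 2) := by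
  have hgauss := (hasSum_nat_add_iff' 1).mpr
    (hasSum_pochRatio (a := x) (b := 1 - x) (by linarith) (by linarith))
  refine hasSum_of_eq hgauss (fun m => by rw [wpTerm, pow_zero, div_one]) ?_
  have : 1 - x - x - 1 ≠ 0 := by linarith
  rw [sum_range_one, pochRatio_zero]
  field_simp
  ring

theorem pochRatio_one_sub_eq {x : ℝ} (m : ℕ) (hx : x < 1) :
    pochRatio x (1 - x) m = pochRatio (x - 1) (1 - (x - 1)) m * (1 - m ^ 2 / (1 - x) ^ 2) := by
  have hx' : 1 - x ≠ 0 := by linarith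
  induction m with
  | zero => simp [pochRatio_zero]
  | succ m ih =>
    have : 0 ≤ (m : ℝ) := m.cast_nonneg
    have h₁ : 1 - x + m ≠ 0 := by linarith
    have h₂ : 1 - (x - 1) + m ≠ 0 := by linarith
    rw [pochRatio_succ, pochRatio_succ, ih]
    push_cast
    field_simp
    ring

theorem wpTerm_add_two {x : ℝ} (p m : ℕ) (hx : x < 1) :
    wpTerm (p + 2) x m = wpTerm (p + 2) (x - 1) m - wpTerm p (x - 1) m / (1 - x) ^ 2 := by
  have hx' : 1 - x ≠ 0 := by linarith
  simp only [wpTerm]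
  rw [pochRatio_one_sub_eq (m + 1) hx]
  push_cast
  field_simp
  ring

theorem wpSeries_add_two {p : ℕ} {x : ℝ} (hx : x ≤ 1 / 2) (hp : Summable (wpTerm p (x - 1))) :
    wpSeries (p + 2) x = wpSeries (p + 2) (x - 1) - wpSeries p (x - 1) / (1 - x) ^ 2 := by
  simp only [wpSeries]
  rw [tsum_congr fun m => wpTerm_add_two p m (by linarith : x < 1),
    (summable_wpTerm (by lia) (by linarith)).tsum_sub (hp.div_const _), tsum_div_const]

/-- The series `∑_{m ≥ 1} (-1) ^ m / m ^ p`, to which `wpSeries p x` tends as `x → -∞`. -/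
noncomputable def alternatingZeta (p : ℕ) : ℝ := ∑' m : ℕ, (-1) ^ (m + 1) / ((m : ℝ) + 1) ^ p

theorem tendsto_pochRatio_one_sub_atBot (m : ℕ) :
    Tendsto (fun x => pochRatio x (1 - x) m) atBot (𝓝 ((-1) ^ m)) := by
  induction m with
  | zero => simp [pochRatio_zero]
  | succ m ih =>
    simp only [pochRatio_succ, pow_succ]
    refine ih.mul ?_
    have hden : Tendsto (fun x : ℝ => 1 + m - x) atBot atTop :=
      tendsto_atTop_add_const_left _ _ tendsto_neg_atBot_atTop
    have hlim := (hden.const_div_atTop (2 * m + 1 : ℝ)).const_add (-1)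
    rw [add_zero] at hlim
    refine hlim.congr' ?_
    filter_upwards [eventually_lt_atBot 0] with x hx
    have hm : (0 : ℝ) < 1 + m - x := by linarith [m.cast_nonneg (α := ℝ)]
    have hm' : (0 : ℝ) < 1 - x + m := by linarith
    field_simp
    ring

theorem tendsto_wpSeries_atBot {p : ℕ} (hp : 2 ≤ p) :
    Tendsto (wpSeries p) atBot (𝓝 (alternatingZeta p)) := by
  refine tendsto_tsum_of_dominated_convergence (summable_one_div_succ_pow hp)
    (fun m => (tendsto_pochRatio_one_sub_atBot (m + 1)).div_const _) ?_
  filter_upwards [eventually_le_atBot (1 / 2)] with x hx m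
  exact abs_wpTerm_le p m hx

theorem summable_one_div_succ_sub_sq {x : ℝ} (hx : x ≤ 1 / 2) :
    Summable fun k : ℕ => 1 / ((k : ℝ) + 1 - x) ^ 2 := by
  refine ((summable_one_div_succ_pow le_rfl).mul_left 4).of_nonneg_of_le
    (fun k => by positivity) fun k => ?_
  have : (0 : ℝ) ≤ k := k.cast_nonneg
  rw [mul_one_div, div_le_div_iff₀ (by nlinarith) (by positivity)]
  nlinarith

theorem hasSum_wpSeries_div_sq {p : ℕ} {x C : ℝ} (hx : x ≤ 1 / 2)
    (hsum : ∀ y ≤ -1 / 2, Summable (wpTerm p y)) (hC : ∀ y ≤ -1 / 2, |wpSeries p y| ≤ C) :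
    HasSum (fun k : ℕ => wpSeries p (x - (k + 1)) / (k + 1 - x) ^ 2)
      (alternatingZeta (p + 2) - wpSeries (p + 2) x) := by
  have hy (k : ℕ) : x - (k + 1) ≤ -1 / 2 := by linarith [k.cast_nonneg (α := ℝ)]
  have hsummable : Summable fun k : ℕ => wpSeries p (x - (k + 1)) / (k + 1 - x) ^ 2 := by
    refine ((summable_one_div_succ_sub_sq hx).mul_left C).of_norm_bounded fun k => ?_
    rw [Real.norm_eq_abs, abs_div, abs_of_nonneg (sq_nonneg (_ : ℝ)), mul_one_div]
    gcongr
    exact hC _ (hy k)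
  have hpartial (n : ℕ) : ∑ k ∈ range n, wpSeries p (x - (k + 1)) / (k + 1 - x) ^ 2 =
      wpSeries (p + 2) (x - n) - wpSeries (p + 2) x := by
    induction n with
    | zero => simp
    | succ n ih =>
      have := hy n
      have hstep := wpSeries_add_two (p := p) (x := x - n) (by linarith) (hsum _ (by linarith))
      rw [sum_range_succ, ih, Nat.cast_succ, ← sub_sub x (n : ℝ) 1, hstep]
      ring
  refine (hsummable.hasSum_iff_tendsto_nat).mpr ?_
  simp only [hpartial]
  refine ((tendsto_wpSeries_atBot (by lia)).comp ?_).sub_const _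
  exact tendsto_atBot_add_const_left _ x (tendsto_neg_atTop_atBot.comp tendsto_natCast_atTop_atTop)

/-- The shifted zeta value `∑_{k ≥ 1} 1 / (k - x) ^ 2`. -/
noncomputable def shiftedZetaTwo (x : ℝ) : ℝ := ∑' k : ℕ, 1 / ((k : ℝ) + 1 - x) ^ 2

theorem hasSum_shiftedZetaTwo {x : ℝ} (hx : x ≤ 1 / 2) :
    HasSum (fun k : ℕ => 1 / ((k : ℝ) + 1 - x) ^ 2) (shiftedZetaTwo x) :=
  (summable_one_div_succ_sub_sq hx).hasSum

/-- The shifted double zeta value `∑_{k > n ≥ 1} 1 / (n ^ 2 (k - x) ^ 2)`, with `n = p.1 + 1` and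
`k = p.1 + p.2 + 2`. -/
noncomputable def shiftedZetaTwoTwo (x : ℝ) : ℝ :=
  ∑' p : ℕ × ℕ, 1 / (((p.1 : ℝ) + 1) ^ 2 * (p.1 + p.2 + 2 - x) ^ 2)

/-- The shifted Tornheim sum `∑_{n, k ≥ 1} 1 / (n ^ 2 (k - x) (n + k - x))`, with `n = p.1 + 1` and
`k = p.2 + 1`. -/
noncomputable def shiftedTornheim (x : ℝ) : ℝ :=
  ∑' p : ℕ × ℕ, 1 / (((p.1 : ℝ) + 1) ^ 2 * (p.2 + 1 - x) * (p.1 + p.2 + 2 - x))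

theorem wpSeries_two {x : ℝ} (hx : x ≤ 1 / 2) :
    wpSeries 2 x = (shiftedZetaTwo x - shiftedZetaTwo 0) / 2 := by
  have hzero {y : ℝ} (hy : y ≤ -1 / 2) : HasSum (wpTerm 0 y) (-1 / 2) :=
    hasSum_wpTerm_zero (by linarith)
  have hval {y : ℝ} (hy : y ≤ 1 / 2) :
      alternatingZeta 2 - wpSeries 2 y = -shiftedZetaTwo y / 2 := by
    have h := hasSum_wpSeries_div_sq (p := 0) (C := 1 / 2) hy (fun z hz => (hzero hz).summable)
      fun z hz => by rw [wpSeries, (hzero hz).tsum_eq]; norm_num [abs_div]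
    refine h.unique (hasSum_of_eq ((hasSum_shiftedZetaTwo hy).mul_left (-1 / 2))
      (fun k => ?_) (by ring))
    rw [wpSeries, (hzero (by linarith [k.cast_nonneg (α := ℝ)])).tsum_eq, mul_one_div]
  have h0 := hval (y := 0) (by norm_num)
  rw [wpSeries_zero_right] at h0
  linarith [hval hx]

theorem hasSum_shiftedZetaTwo_mul {x : ℝ} (hx : x ≤ 1 / 2) :
    HasSum (fun p : ℕ × ℕ => 1 / (((p.1 : ℝ) + 1) ^ 2 * (p.2 + 1 - x) ^ 2))
      (shiftedZetaTwo 0 * shiftedZetaTwo x) := by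
  have h0 : HasSum (fun n : ℕ => 1 / ((n : ℝ) + 1) ^ 2) (shiftedZetaTwo 0) := by
    simpa only [sub_zero] using hasSum_shiftedZetaTwo (x := 0) (by norm_num)
  refine hasSum_prod_of_nonneg (fun p => by positivity) (fun n => ?_)
    (h0.mul_right (shiftedZetaTwo x))
  exact hasSum_of_eq ((hasSum_shiftedZetaTwo hx).mul_left (1 / ((n : ℝ) + 1) ^ 2))
    (fun k => (one_div_mul_one_div _ _).symm) rfl

theorem hasSum_shiftedZetaTwoTwo {x : ℝ} (hx : x ≤ 1 / 2) :
    HasSum (fun p : ℕ × ℕ => 1 / (((p.1 : ℝ) + 1) ^ 2 * (p.1 + p.2 + 2 - x) ^ 2))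
      (shiftedZetaTwoTwo x) := by
  refine ((hasSum_shiftedZetaTwo_mul hx).summable.of_nonneg_of_le
    (fun p => by positivity) fun p => ?_).hasSum
  have : (0 : ℝ) < p.2 + 1 - x := by linarith [p.2.cast_nonneg (α := ℝ)]
  gcongr 1 / (_ * ?_ ^ 2)
  linarith [p.1.cast_nonneg (α := ℝ)]

theorem hasSum_one_div_sq_mul_sq {x : ℝ} (hx : x ≤ 1 / 2) :
    HasSum (fun p : ℕ × ℕ => 1 / (((p.2 : ℝ) + 1 - x) ^ 2 * (p.1 + p.2 + 2 - x) ^ 2))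
      (shiftedZetaTwo 0 * shiftedZetaTwo x + 2 * (alternatingZeta 4 - wpSeries 4 x)) := by
  have hrec := hasSum_wpSeries_div_sq (p := 2) hx
    (fun y hy => summable_wpTerm le_rfl (by linarith))
    (fun y hy => abs_wpSeries_le le_rfl (by linarith))
  refine (Equiv.prodComm ℕ ℕ).hasSum_iff.mp (hasSum_prod_of_nonneg (fun p => ?_) (fun k => ?_)
    (((hasSum_shiftedZetaTwo hx).mul_left _).add (hrec.mul_left 2)))
  · simp only [Function.comp]; positivity
  · have hk : x - (k + 1) ≤ 1 / 2 := by linarith [k.cast_nonneg (α := ℝ)]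
    refine hasSum_of_eq ((hasSum_shiftedZetaTwo hk).mul_left
      (1 / ((k : ℝ) + 1 - x) ^ 2)) (fun n => ?_) ?_
    · simp only [Function.comp_apply, Equiv.prodComm_apply, Prod.fst_swap, Prod.snd_swap]
      rw [one_div_mul_one_div]
      ring
    · rw [wpSeries_two hk]
      ring

/-- Sums the partial fraction decomposition
`2 / (n² κ N) = 1 / (n² κ²) + 1 / (n² N²) - 1 / (κ² N²)`, where `κ = k - x` and `N = n + κ`. -/
theorem hasSum_shiftedTornheim_partialFraction {x : ℝ} (hx : x ≤ 1 / 2) :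
    HasSum (fun p : ℕ × ℕ => 1 / (((p.1 : ℝ) + 1) ^ 2 * (p.2 + 1 - x) * (p.1 + p.2 + 2 - x)))
      (shiftedZetaTwoTwo x / 2 - (alternatingZeta 4 - wpSeries 4 x)) := by
  have h := (((hasSum_shiftedZetaTwo_mul hx).add (hasSum_shiftedZetaTwoTwo hx)).sub
    (hasSum_one_div_sq_mul_sq hx)).div_const 2
  refine hasSum_of_eq h (fun p => ?_) (by ring)
  have hκ : (p.2 : ℝ) + 1 - x ≠ 0 := by linarith [p.2.cast_nonneg (α := ℝ)]
  have hN : (p.1 : ℝ) + p.2 + 2 - x ≠ 0 := by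
    linarith [p.1.cast_nonneg (α := ℝ), p.2.cast_nonneg (α := ℝ)]
  field_simp
  ring

theorem shiftedTornheim_eq {x : ℝ} (hx : x ≤ 1 / 2) :
    shiftedTornheim x = shiftedZetaTwoTwo x / 2 - (alternatingZeta 4 - wpSeries 4 x) :=
  (hasSum_shiftedTornheim_partialFraction hx).tsum_eq

theorem hasSum_shiftedTornheim {x : ℝ} (hx : x ≤ 1 / 2) :
    HasSum (fun p : ℕ × ℕ => 1 / (((p.1 : ℝ) + 1) ^ 2 * (p.2 + 1 - x) * (p.1 + p.2 + 2 - x)))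
      (shiftedTornheim x) :=
  (hasSum_shiftedTornheim_partialFraction hx).summable.hasSum

theorem wpSeries_four {x : ℝ} (hx : x ≤ 1 / 2) :
    wpSeries 4 x = shiftedTornheim x - shiftedTornheim 0
      - (shiftedZetaTwoTwo x - shiftedZetaTwoTwo 0) / 2 := by
  have h0 := shiftedTornheim_eq (x := 0) (by norm_num)
  rw [wpSeries_zero_right] at h0
  linarith [shiftedTornheim_eq hx]

/-! ### Tornheim sums -/

theorem hasSum_sub_add_of_antitone {v : ℕ → ℝ} (hv : Antitone v) (hl : Tendsto v atTop (𝓝 0))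
    (n : ℕ) : HasSum (fun k => v k - v (k + n)) (∑ l ∈ range n, v l) := by
  induction n with
  | zero => simp [hasSum_zero]
  | succ n ih =>
    have htel := hasSum_sub_succ_of_antitone (v := fun k => v (k + n))
      (fun _ _ h => hv (by gcongr)) ((tendsto_add_atTop_iff_nat n).mpr hl)
    refine hasSum_of_eq (ih.add htel) (fun k => ?_) (by simp [sum_range_succ])
    rw [add_right_comm k 1 n, add_assoc]
    ring

theorem hasSum_prod_of_hasSum_antidiagonal {f : ℕ × ℕ → ℝ} {s : ℝ} (hf : ∀ p, 0 ≤ f p)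
    (h : HasSum (fun n => ∑ p ∈ antidiagonal n, f p) s) : HasSum f s :=
  HasAntidiagonal.sigmaAntidiagonalEquivProd.hasSum_iff.mp <| hasSum_sigma_of_nonneg (fun _ => hf _)
    (fun n => hasSum_of_eq (hasSum_fintype fun p : antidiagonal n => f p) (fun _ => rfl)
      (sum_coe_sort (antidiagonal n) f).symm) h

theorem hasSum_one_div_mul_add_s15 {x : ℝ} (n : ℕ) (hx : x < 1) :
    HasSum (fun k : ℕ => 1 / (((k : ℝ) + 1 - x) * (n + k + 2 - x)))
      (1 / ((n : ℝ) + 1) * ∑ l ∈ range (n + 1), 1 / ((l : ℝ) + 1 - x)) := by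
  have hpos (k : ℕ) : (0 : ℝ) < k + 1 - x := by linarith [k.cast_nonneg (α := ℝ)]
  have hanti : Antitone fun k : ℕ => 1 / ((k : ℝ) + 1 - x) := fun j k hjk => by
    have := hpos j
    dsimp only
    gcongr
  have hlim : Tendsto (fun k : ℕ => 1 / ((k : ℝ) + 1 - x)) atTop (𝓝 0) := by
    simp only [add_sub_assoc]
    exact (tendsto_atTop_add_const_right _ _ tendsto_natCast_atTop_atTop).const_div_atTop 1
  refine hasSum_of_eq ((hasSum_sub_add_of_antitone hanti hlim (n + 1)).mul_left _)
    (fun k => ?_) rfl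
  have hk := (hpos k).ne'
  have hkn := (hpos (k + (n + 1))).ne'
  have hN : (n : ℝ) + k + 2 - x ≠ 0 := by push_cast at hkn; convert hkn using 1; ring
  push_cast at hkn ⊢
  field_simp
  ring

theorem hasSum_harmonic_shiftedTornheim {x : ℝ} (hx : x ≤ 1 / 2) :
    HasSum (fun n : ℕ => 1 / ((n : ℝ) + 1) ^ 3 * ∑ l ∈ range (n + 1), 1 / ((l : ℝ) + 1 - x))
      (shiftedTornheim x) := by
  refine (hasSum_shiftedTornheim hx).prod_fiberwise fun n => ?_
  refine hasSum_of_eq ((hasSum_one_div_mul_add_s15 n (hx.trans_lt one_half_lt_one)).mul_left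
    (1 / ((n : ℝ) + 1) ^ 2)) (fun k => ?_) ?_
  · rw [one_div_mul_one_div, mul_assoc]
  · rw [← mul_assoc, one_div_mul_one_div, ← pow_succ]

/-- The series `∑_{k ≥ 1} x / (k ^ 4 (k - x))`, the generating function of `ζ(n + 5)`. -/
noncomputable def diagonalSeries (x : ℝ) : ℝ := ∑' k : ℕ, x / (((k : ℝ) + 1) ^ 4 * (k + 1 - x))

theorem hasSum_diagonalSeries {x : ℝ} (hx₀ : 0 ≤ x) (hx : x ≤ 1 / 2) :
    HasSum (fun k : ℕ => x / (((k : ℝ) + 1) ^ 4 * (k + 1 - x))) (diagonalSeries x) := by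
  refine ((summable_one_div_succ_pow (by lia : 2 ≤ 4)).of_nonneg_of_le (fun k => ?_)
    fun k => ?_).hasSum
  all_goals have hk : x ≤ (k : ℝ) + 1 - x := by linarith [k.cast_nonneg (α := ℝ)]
  · exact div_nonneg hx₀ (mul_nonneg (by positivity) (hx₀.trans hk))
  · rw [mul_comm, ← div_div]
    gcongr
    exact div_le_one_of_le₀ hk (hx₀.trans hk)

theorem hasSum_shiftedTornheim_sub {x : ℝ} (hx₀ : 0 ≤ x) (hx : x ≤ 1 / 2) :
    HasSum (fun p : ℕ × ℕ => x / (((p.1 : ℝ) + p.2 + 2) ^ 3 * (p.1 + 1) * (p.1 + 1 - x)))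
      (shiftedTornheim x - shiftedTornheim 0 - diagonalSeries x) := by
  have hpos (l : ℕ) : (0 : ℝ) < l + 1 - x := by linarith [l.cast_nonneg (α := ℝ)]
  have hterm (n : ℕ) : 1 / ((n : ℝ) + 1) ^ 3 * ∑ l ∈ range (n + 1), 1 / ((l : ℝ) + 1 - x)
      - 1 / ((n : ℝ) + 1) ^ 3 * ∑ l ∈ range (n + 1), 1 / ((l : ℝ) + 1 - 0)
      - x / (((n : ℝ) + 1) ^ 4 * (n + 1 - x)) =
      ∑ l ∈ range n, x / (((n : ℝ) + 1) ^ 3 * (l + 1) * (l + 1 - x)) := by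
    have hdiff (l : ℕ) : 1 / ((n : ℝ) + 1) ^ 3 * (1 / ((l : ℝ) + 1 - x) - 1 / ((l : ℝ) + 1 - 0)) =
        x / (((n : ℝ) + 1) ^ 3 * (l + 1) * (l + 1 - x)) := by
      have := (hpos l).ne'
      rw [sub_zero]
      field_simp
      ring
    rw [← mul_sub, ← sum_sub_distrib, mul_sum, sum_congr rfl fun l _ => hdiff l, sum_range_succ,
      pow_succ _ 3, add_sub_cancel_right]
  have hsum := ((hasSum_harmonic_shiftedTornheim hx).sub
    (hasSum_harmonic_shiftedTornheim (x := 0) (by norm_num))).sub (hasSum_diagonalSeries hx₀ hx)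
  simp only [hterm] at hsum
  have hshift := (hasSum_nat_add_iff' 1).mpr hsum
  rw [sum_range_one, range_zero, sum_empty, sub_zero] at hshift
  refine hasSum_prod_of_hasSum_antidiagonal (fun p => ?_) (hasSum_of_eq hshift (fun n => ?_) rfl)
  · have := hpos p.1
    positivity
  · rw [Nat.sum_antidiagonal_eq_sum_range_succ_mk]
    refine sum_congr rfl fun l hl => ?_
    rw [Nat.cast_sub (Nat.lt_succ_iff.mp (mem_range.mp hl))]
    push_cast
    ring

/-! ### Connected sums -/

/-- The connector of the connected sums `connectedSum`: the difference of
`(± x)_m / (n + 1 - x)_m` for the two signs, at `m + 1` in place of `m`. -/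
noncomputable def connector (x : ℝ) (n m : ℕ) : ℝ :=
  pochRatio x (n + 1 - x) (m + 1) - pochRatio (-x) (n + 1 - x) (m + 1)

/-- The connected sum `∑_{m ≥ 1} connector / m ^ p`: the summand couples `m` with the integer `n`,
and each power of `m` can be traded for a summation over integers above `n`. -/
noncomputable def connectedSum (x : ℝ) (p n : ℕ) : ℝ :=
  ∑' m : ℕ, connector x n m / ((m : ℝ) + 1) ^ p

section Connector

variable {x : ℝ}

theorem connector_nonneg (hx₀ : 0 ≤ x) (hx : x < 1) (n m : ℕ) : 0 ≤ connector x n m := by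
  have hb : 0 < (n : ℝ) + 1 - x := by linarith [n.cast_nonneg (α := ℝ)]
  exact sub_nonneg.mpr ((pochRatio_succ_nonpos (by linarith) (by linarith) hb m).trans
    (pochRatio_nonneg hx₀ hb _))

theorem hasSum_connector {n : ℕ} (hx₀ : 0 ≤ x) (hn : 2 * x < n) :
    HasSum (connector x n) (2 * x * (n - x) / (n * (n - 2 * x))) := by
  have hsum {a : ℝ} (ha : a + x < n) := (hasSum_nat_add_iff' 1).mpr
    (hasSum_pochRatio (a := a) (b := n + 1 - x) (by linarith) (by linarith))
  refine hasSum_of_eq ((hsum (a := x) (by linarith)).sub (hsum (a := -x) (by linarith)))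
    (fun m => rfl) ?_
  have : (n : ℝ) + 1 - x - x - 1 ≠ 0 := by linarith
  have : (n : ℝ) + 1 - x - -x - 1 ≠ 0 := by linarith
  have : (n : ℝ) - 2 * x ≠ 0 := by linarith
  have : (n : ℝ) ≠ 0 := by linarith
  simp only [sum_range_one, pochRatio_zero]
  field_simp
  ring

theorem connector_mul_eq (hx : x < 1) (n m : ℕ) :
    connector x n m * (n + 1 - x) = connector x (n + 1) m * (n + m + 2 - x) := by
  have hb : 0 < (n : ℝ) + 1 - x := by linarith [n.cast_nonneg (α := ℝ)]
  simp only [connector, sub_mul, pochRatio_mul_eq_pochRatio_add_one _ _ hb]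
  push_cast
  ring_nf

theorem connector_zero (hx : x < 1) (m : ℕ) :
    connector x 0 m = pochRatio x (1 - x) (m + 1) + x / (m + 1 - x) := by
  have h := pochRatio_add_one_right m (by linarith : 0 < 1 - x)
  have hx' : 1 - x ≠ 0 := by linarith
  have : (m : ℝ) + 1 - x ≠ 0 := by linarith [m.cast_nonneg (α := ℝ)]
  have : 1 - x + (m : ℝ) ≠ 0 := by linarith [m.cast_nonneg (α := ℝ)]
  rw [connector, Nat.cast_zero, zero_add, pochRatio_succ_left (-x), neg_add_eq_sub, h]
  field_simp
  ring

theorem hasSum_connector_div (hx : x < 1) (n m : ℕ) :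
    HasSum (fun j : ℕ => connector x (n + 1 + j) m / ((n + 1 + j : ℕ) - x))
      (connector x n m / (m + 1)) := by
  have hy : 0 < (n : ℝ) + 1 - x := by linarith [n.cast_nonneg (α := ℝ)]
  refine hasSum_of_eq ((hasSum_pochRatio_div_add x m hy).sub (hasSum_pochRatio_div_add (-x) m hy))
    (fun j => ?_) (sub_div _ _ _)
  rw [connector, sub_div]
  push_cast
  ring_nf

theorem summable_connector_div_pow {p : ℕ} (n : ℕ) (hp : 1 ≤ p) (hx₀ : 0 ≤ x) (hx : x < 1 / 2) :
    Summable fun m : ℕ => connector x n m / ((m : ℝ) + 1) ^ p := by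
  have hx₁ : x < 1 := by linarith
  have : (0 : ℝ) ≤ n := n.cast_nonneg
  have hsucc : Summable (connector x (n + 1)) :=
    (hasSum_connector hx₀ (by push_cast; linarith)).summable
  refine (hsucc.mul_left ((n + 2) / (n + 1 - x))).of_nonneg_of_le
    (fun m => div_nonneg (connector_nonneg hx₀ hx₁ n m) (by positivity)) fun m => ?_
  have : (0 : ℝ) ≤ m := m.cast_nonneg
  have hb : 0 < (n : ℝ) + 1 - x := by linarith
  have hpow : (m : ℝ) + 1 ≤ (m + 1) ^ p := le_self_pow₀ (by linarith) (by lia)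
  have hc := connector_nonneg hx₀ hx₁ (n + 1) m
  calc connector x n m / ((m : ℝ) + 1) ^ p
      ≤ connector x n m / (m + 1) := by
        have := connector_nonneg hx₀ hx₁ n m
        gcongr
    _ = connector x (n + 1) m * (n + m + 2 - x) / ((n + 1 - x) * (m + 1)) := by
        rw [← connector_mul_eq hx₁]
        field_simp
    _ ≤ connector x (n + 1) m * ((n + 2) * (m + 1)) / ((n + 1 - x) * (m + 1)) := by
        gcongr
        nlinarith
    _ = (n + 2) / (n + 1 - x) * connector x (n + 1) m := by field_simp

theorem hasSum_connectedSum (p n : ℕ) (hx₀ : 0 ≤ x) (hx : x < 1 / 2) :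
    HasSum (fun j : ℕ => connectedSum x p (n + 1 + j) / ((n + 1 + j : ℕ) - x))
      (connectedSum x (p + 1) n) := by
  have hx₁ : x < 1 := by linarith
  have hpos (j : ℕ) : (0 : ℝ) ≤ (n + 1 + j : ℕ) - x := by
    push_cast
    linarith [n.cast_nonneg (α := ℝ), j.cast_nonneg (α := ℝ)]
  have h := hasSum_tsum_of_nonneg
    (f := fun j m : ℕ => connector x (n + 1 + j) m / ((n + 1 + j : ℕ) - x) / ((m : ℝ) + 1) ^ p)
    (fun j m => div_nonneg (div_nonneg (connector_nonneg hx₀ hx₁ _ m) (hpos j)) (by positivity))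
    (fun m => (hasSum_connector_div hx₁ n m).div_const _)
    (hasSum_of_eq (summable_connector_div_pow n p.succ_pos hx₀ hx).hasSum
      (fun m => by rw [div_div, ← pow_succ']) rfl)
  refine hasSum_of_eq h (fun j => ?_) rfl
  rw [connectedSum, ← tsum_div_const]
  exact tsum_congr fun m => div_right_comm _ _ _

theorem connectedSum_zero_left {n : ℕ} (hx₀ : 0 ≤ x) (hn : 2 * x < n) :
    connectedSum x 0 n = 2 * x * (n - x) / (n * (n - 2 * x)) := by
  simpa only [connectedSum, pow_zero, div_one] using (hasSum_connector hx₀ hn).tsum_eq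

theorem connectedSum_four_zero (hx₀ : 0 ≤ x) (hx : x ≤ 1 / 2) :
    connectedSum x 4 0 = wpSeries 4 x + diagonalSeries x := by
  refine (hasSum_of_eq ((summable_wpTerm (by lia) hx).hasSum.add (hasSum_diagonalSeries hx₀ hx))
    (fun m => ?_) rfl).tsum_eq
  rw [connector_zero (by linarith), wpTerm, add_div, div_div, mul_comm ((m : ℝ) + 1 - x)]

end Connector

/-! ### Strictly decreasing tuples -/

/-- The strictly decreasing `d`-tuples of natural numbers all of whose entries exceed `n`; for
`n = 0` this is the index type of the series `mzv`. -/
abbrev DecrTuple (n d : ℕ) : Type := {k : Fin d → ℕ // StrictAnti k ∧ ∀ i, n < k i}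

theorem strictAnti_snoc {d c : ℕ} {k : Fin d → ℕ} (hk : StrictAnti k) (hc : ∀ i, c < k i) :
    StrictAnti (Fin.snoc k c : Fin (d + 1) → ℕ) := by
  intro i j hij
  induction j using Fin.lastCases with
  | last =>
    obtain ⟨i, rfl⟩ := Fin.exists_castSucc_eq.mpr hij.ne
    simpa only [Fin.snoc_castSucc, Fin.snoc_last] using hc i
  | cast j =>
    obtain ⟨i, rfl⟩ := Fin.exists_castSucc_eq.mpr (hij.trans_le (Fin.le_last _)).ne
    simpa only [Fin.snoc_castSucc] using hk (Fin.castSucc_lt_castSucc_iff.mp hij)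

/-- Appends a new smallest entry `n + 1 + j` to a tuple whose entries exceed it. -/
def DecrTuple.snoc {n d : ℕ} (p : Σ j : ℕ, DecrTuple (n + 1 + j) d) : DecrTuple n (d + 1) :=
  ⟨Fin.snoc p.2.1 (n + 1 + p.1), strictAnti_snoc p.2.2.1 p.2.2.2, fun i => by
    induction i using Fin.lastCases with
    | last => rw [Fin.snoc_last]; lia
    | cast i => rw [Fin.snoc_castSucc]; have := p.2.2.2 i; lia⟩

theorem DecrTuple.snoc_last {n d j : ℕ} (k : DecrTuple (n + 1 + j) d) :
    (DecrTuple.snoc ⟨j, k⟩).1 (Fin.last d) = n + 1 + j :=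
  Fin.snoc_last (α := fun _ => ℕ) _ _

theorem DecrTuple.snoc_castSucc {n d j : ℕ} (k : DecrTuple (n + 1 + j) d) (i : Fin d) :
    (DecrTuple.snoc ⟨j, k⟩).1 i.castSucc = k.1 i :=
  Fin.snoc_castSucc (α := fun _ => ℕ) _ _ i

theorem DecrTuple.bijective_snoc (n d : ℕ) :
    Function.Bijective (DecrTuple.snoc : (Σ j : ℕ, DecrTuple (n + 1 + j) d) → _) := by
  constructor
  · rintro ⟨j, k⟩ ⟨j', k'⟩ h
    have hval : (Fin.snoc k.1 (n + 1 + j) : Fin (d + 1) → ℕ) = Fin.snoc k'.1 (n + 1 + j') :=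
      congrArg Subtype.val h
    obtain ⟨hk, hj⟩ := Fin.snoc_inj.mp hval
    obtain rfl : j = j' := by lia
    rw [Subtype.ext hk]
  · rintro ⟨k, hk, hn⟩
    obtain ⟨j, hj⟩ := Nat.exists_eq_add_of_le (Nat.succ_le_of_lt (hn (Fin.last d)))
    refine ⟨⟨j, Fin.init k, fun _ _ h => hk h, fun i => ?_⟩, Subtype.ext ?_⟩
    · rw [← Nat.succ_eq_add_one, ← hj]
      exact hk (Fin.castSucc_lt_last i)
    · change Fin.snoc (Fin.init k) (n.succ + j) = k
      rw [← hj, Fin.snoc_init_self]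

theorem DecrTuple.hasSum_snoc {n d : ℕ} {F : DecrTuple n (d + 1) → ℝ} {g : ℕ → ℝ} {s : ℝ}
    (hF : ∀ k, 0 ≤ F k)
    (hg : ∀ j, HasSum (fun k : DecrTuple (n + 1 + j) d => F (DecrTuple.snoc ⟨j, k⟩)) (g j))
    (hs : HasSum g s) : HasSum F s :=
  (Equiv.ofBijective _ (DecrTuple.bijective_snoc n d)).hasSum_iff.mp
    (hasSum_sigma_of_nonneg (fun _ => hF _) hg hs)

instance DecrTuple.instUniqueZero (n : ℕ) : Unique (DecrTuple n 0) where
  default := ⟨Fin.elim0, fun i => i.elim0, fun i => i.elim0⟩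
  uniq _ := Subtype.ext (Subsingleton.elim _ _)

theorem hasSum_connectedSum_decrTuple {x : ℝ} (d n : ℕ) (hx₀ : 0 ≤ x) (hx : x < 1 / 2) :
    HasSum (fun k : DecrTuple n (d + 1) => 2 * x / (k.1 0 * (k.1 0 - 2 * x)) *
      ∏ i : Fin d, 1 / ((k.1 i.succ : ℝ) - x)) (connectedSum x (d + 1) n) := by
  have hnonneg {d n : ℕ} (k : DecrTuple n (d + 1)) : 0 ≤
      2 * x / (k.1 0 * (k.1 0 - 2 * x)) * ∏ i : Fin d, 1 / ((k.1 i.succ : ℝ) - x) := by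
    have hk (i : Fin (d + 1)) : (1 : ℝ) ≤ k.1 i := Nat.one_le_cast.mpr (Nat.one_le_of_lt (k.2.2 i))
    refine mul_nonneg (div_nonneg (by positivity) (mul_nonneg (by positivity) ?_))
      (prod_nonneg fun i _ => one_div_nonneg.mpr ?_)
    · linarith [hk 0]
    · linarith [hk i.succ]
  induction d generalizing n with
  | zero =>
    refine DecrTuple.hasSum_snoc hnonneg (fun j => ?_) (hasSum_connectedSum 0 n hx₀ hx)
    have hj : 2 * x < (n + 1 + j : ℕ) := by
      push_cast
      linarith [n.cast_nonneg (α := ℝ), j.cast_nonneg (α := ℝ)]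
    refine hasSum_of_eq (hasSum_unique fun _ => _) (fun k => ?_) rfl
    have hlast : (DecrTuple.snoc ⟨j, k⟩ : DecrTuple n 1).1 0 = n + 1 + j := DecrTuple.snoc_last k
    have : ((n + 1 + j : ℕ) : ℝ) - x ≠ 0 := by linarith
    rw [connectedSum_zero_left hx₀ hj, Fin.prod_univ_zero, hlast]
    field_simp
  | succ d ih =>
    refine DecrTuple.hasSum_snoc hnonneg (fun j => ?_) (hasSum_connectedSum (d + 1) n hx₀ hx)
    refine hasSum_of_eq ((ih (n + 1 + j)).div_const _) (fun k => ?_) rfl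
    have hzero : (DecrTuple.snoc ⟨j, k⟩ : DecrTuple n (d + 2)).1 0 = k.1 0 :=
      DecrTuple.snoc_castSucc k 0
    have hcast (i : Fin d) : (DecrTuple.snoc ⟨j, k⟩ : DecrTuple n (d + 2)).1 i.castSucc.succ =
        k.1 i.succ := DecrTuple.snoc_castSucc k i.succ
    have hlast : (DecrTuple.snoc ⟨j, k⟩ : DecrTuple n (d + 2)).1 (Fin.last d).succ = n + 1 + j :=
      DecrTuple.snoc_last k
    simp only [Fin.prod_univ_castSucc, hzero, hcast, hlast]
    rw [← mul_assoc, mul_one_div]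

/-- The reindexing `k₀ = m + 1`. -/
def decrSingleEquiv : ℕ ≃ DecrTuple 0 1 where
  toFun m := ⟨![m + 1], Subsingleton.strictAnti _, fun i => by simp⟩
  invFun k := k.1 0 - 1
  left_inv m := rfl
  right_inv k := Subtype.ext <| funext fun i => by
    have := k.2.2 0
    rw [Subsingleton.elim i 0]
    exact Nat.sub_add_cancel this

/-- The reindexing `k₁ = p.1 + 1`, `k₀ = p.1 + p.2 + 2`. -/
def decrPairEquiv : ℕ × ℕ ≃ DecrTuple 0 2 where
  toFun p := ⟨![p.1 + p.2 + 2, p.1 + 1], by simp [strictAnti_vecCons], fun i => by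
    fin_cases i <;> simp⟩
  invFun k := (k.1 1 - 1, k.1 0 - k.1 1 - 1)
  left_inv p := Prod.ext (by simp) (by simp; lia)
  right_inv k := Subtype.ext <| funext fun i => by
    have h₁ := k.2.2 1
    have h₀ : k.1 1 < k.1 0 := k.2.1 Fin.zero_lt_one
    fin_cases i <;> simp <;> lia

theorem mzv_single (a : ℕ) : mzv ![a] = ∑' m : ℕ, 1 / ((m : ℝ) + 1) ^ a := by
  rw [mzv, ← decrSingleEquiv.tsum_eq]
  exact tsum_congr fun m => by
    simp [show (decrSingleEquiv m).1 0 = m + 1 from rfl]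

theorem mzv_pair (a b : ℕ) : mzv ![a, b] =
    ∑' p : ℕ × ℕ, 1 / (((p.1 : ℝ) + p.2 + 2) ^ a * (p.1 + 1) ^ b) := by
  rw [mzv, ← decrPairEquiv.tsum_eq]
  exact tsum_congr fun p => by simp [decrPairEquiv, mul_comm]

/-! ### Generating functions -/

theorem eq_of_forall_hasSum_mul_pow_succ {c d : ℕ → ℝ} {f : ℝ → ℝ} {r : ℝ} (hr : 0 < r)
    (hc : ∀ x, 0 < x → x < r → HasSum (fun n => c n * x ^ (n + 1)) (f x))
    (hd : ∀ x, 0 < x → x < r → HasSum (fun n => d n * x ^ (n + 1)) (f x)) : c = d := by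
  refine sub_eq_zero.mp (eq_zero_of_forall_hasSum_mul_pow hr fun x hx₀ hx => ?_)
  refine hasSum_of_eq (((hc x hx₀ hx).sub (hd x hx₀ hx)).div_const x) (fun n => ?_) (by simp)
  rw [Pi.sub_apply]
  field_simp
  ring

theorem hasSum_mzv_single_mul_pow {x : ℝ} (hx₀ : 0 ≤ x) (hx : x ≤ 1 / 2) :
    HasSum (fun n => mzv ![n + 5] * x ^ (n + 1)) (diagonalSeries x) := by
  refine hasSum_of_eq (hasSum_tsum_of_nonneg
    (f := fun n k : ℕ => 1 / ((k : ℝ) + 1) ^ (n + 5) * x ^ (n + 1))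
    (fun n k => by positivity) (fun k => ?_) (hasSum_diagonalSeries hx₀ hx))
    (fun n => by rw [mzv_single, tsum_mul_right]) rfl
  have hk : |x| < (k : ℝ) + 1 := by
    rw [abs_of_nonneg hx₀]
    linarith [k.cast_nonneg (α := ℝ)]
  refine hasSum_of_eq ((hasSum_geometric_div hk).mul_left (x / (k + 1) ^ 4)) (fun n => ?_) ?_
  · field_simp
    ring
  · rw [div_mul_div_comm, mul_one]

theorem hasSum_mzv_three_mul_pow {x : ℝ} (hx₀ : 0 ≤ x) (hx : x ≤ 1 / 2) :
    HasSum (fun n => mzv ![3, n + 2] * x ^ (n + 1))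
      (shiftedTornheim x - shiftedTornheim 0 - diagonalSeries x) := by
  refine hasSum_of_eq (hasSum_tsum_of_nonneg
    (f := fun (n : ℕ) (p : ℕ × ℕ) =>
      1 / (((p.1 : ℝ) + p.2 + 2) ^ 3 * (p.1 + 1) ^ (n + 2)) * x ^ (n + 1))
    (fun n p => by positivity) (fun p => ?_) (hasSum_shiftedTornheim_sub hx₀ hx))
    (fun n => by rw [mzv_pair, tsum_mul_right]) rfl
  have hp : |x| < (p.1 : ℝ) + 1 := by
    rw [abs_of_nonneg hx₀]
    linarith [p.1.cast_nonneg (α := ℝ)]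
  refine hasSum_of_eq ((hasSum_geometric_div hp).mul_left
    (x / (((p.1 : ℝ) + p.2 + 2) ^ 3 * (p.1 + 1)))) (fun n => ?_) ?_
  · field_simp
    ring
  · rw [div_mul_div_comm, mul_one]

theorem hasSum_mzv_two_mul_pow {x : ℝ} (hx₀ : 0 ≤ x) (hx : x ≤ 1 / 2) :
    HasSum (fun n => (n + 2) * mzv ![n + 3, 2] * x ^ (n + 1))
      (shiftedZetaTwoTwo x - shiftedZetaTwoTwo 0) := by
  refine hasSum_of_eq (hasSum_tsum_of_nonneg
    (f := fun (n : ℕ) (p : ℕ × ℕ) =>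
      (n + 2) * (1 / (((p.1 : ℝ) + p.2 + 2) ^ (n + 3) * (p.1 + 1) ^ 2)) * x ^ (n + 1))
    (fun n p => by positivity) (fun p => ?_)
    ((hasSum_shiftedZetaTwoTwo hx).sub (hasSum_shiftedZetaTwoTwo (by norm_num))))
    (fun n => by rw [mzv_pair, tsum_mul_right, tsum_mul_left]) rfl
  have hp : |x| < (p.1 : ℝ) + p.2 + 2 := by
    rw [abs_of_nonneg hx₀]
    linarith [p.1.cast_nonneg (α := ℝ), p.2.cast_nonneg (α := ℝ)]
  have hshift := (hasSum_nat_add_iff' 1).mpr (hasSum_succ_mul_geometric_div hp)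
  refine hasSum_of_eq (hshift.mul_left (1 / ((p.1 : ℝ) + 1) ^ 2)) (fun n => ?_) ?_
  · push_cast
    field_simp
    ring
  · rw [sum_range_one, mul_sub, ← one_div_mul_one_div, ← one_div_mul_one_div]
    simp

theorem hasSum_prod_fin {d : ℕ} {f : Fin d → ℕ → ℝ} {a : Fin d → ℝ} (hf : ∀ i n, 0 ≤ f i n)
    (h : ∀ i, HasSum (f i) (a i)) :
    HasSum (fun s : Fin d → ℕ => ∏ i, f i (s i)) (∏ i, a i) := by
  induction d with
  | zero => simp
  | succ d ih =>
    refine (Fin.consEquiv fun _ : Fin (d + 1) => ℕ).hasSum_iff.mp (hasSum_prod_of_nonneg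
      (fun p => prod_nonneg fun i _ => hf i _) (fun n => ?_)
      (g := fun n => f 0 n * ∏ i : Fin d, a i.succ) ?_)
    · simpa [Fin.consEquiv, Fin.prod_univ_succ] using
        (ih (fun i => hf i.succ) fun i => h i.succ).mul_left (f 0 n)
    · rw [Fin.prod_univ_succ]
      exact (h 0).mul_right _

theorem hasSum_sum_antidiagonalTuple {d : ℕ} {f : (Fin d → ℕ) → ℝ} {a : ℝ} (hf : HasSum f a) :
    HasSum (fun n => ∑ s ∈ Finset.Nat.antidiagonalTuple d n, f s) a :=
  ((Finset.Nat.sigmaAntidiagonalTupleEquivTuple d).hasSum_iff.mpr hf).sigma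
    fun n => (Finset.Nat.antidiagonalTuple d n).hasSum f

/-- The weighted sum `∑ 2 ^ s₀ ζ(s₀, …, s_d)` over the admissible exponents of depth `d + 1` and
weight `n + d + 2`; subtracting `(2, 1, …, 1)` makes the exponents a composition of `n`. -/
noncomputable def weightedSum (d n : ℕ) : ℝ :=
  ∑ s ∈ Finset.Nat.antidiagonalTuple (d + 1) n,
    2 ^ (s 0 + 2) * mzv (Fin.cons (s 0 + 2) fun i : Fin d => s i.succ + 1)

theorem hasSum_weightedSum_tuple {x : ℝ} {d : ℕ} (k : DecrTuple 0 (d + 1)) (hx₀ : 0 ≤ x)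
    (hx : x < 1 / 2) :
    HasSum (fun s : Fin (d + 1) → ℕ => 2 ^ (s 0 + 2) * (∏ i, 1 / (k.1 i : ℝ) ^
        (Fin.cons (s 0 + 2) (fun i : Fin d => s i.succ + 1) : Fin (d + 1) → ℕ) i) *
        x ^ (∑ i, s i + 1))
      (2 * (2 * x / (k.1 0 * (k.1 0 - 2 * x)) * ∏ i : Fin d, 1 / ((k.1 i.succ : ℝ) - x))) := by
  have hk (i : Fin (d + 1)) : (1 : ℝ) ≤ k.1 i := Nat.one_le_cast.mpr (k.2.2 i)
  have hhead : HasSum (fun n : ℕ => 2 * (2 * x / k.1 0 * ((2 * x) ^ n / (k.1 0 : ℝ) ^ (n + 1))))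
      (2 * (2 * x / k.1 0 * (1 / (k.1 0 - 2 * x)))) :=
    ((hasSum_geometric_div (by
      rw [abs_of_nonneg (by positivity)]
      linarith [hk 0])).mul_left _).mul_left _
  have htail (i : Fin d) : HasSum (fun n : ℕ => x ^ n / (k.1 i.succ : ℝ) ^ (n + 1))
      (1 / ((k.1 i.succ : ℝ) - x)) :=
    hasSum_geometric_div (by
      rw [abs_of_nonneg hx₀]
      linarith [hk i.succ])
  have hprod := hasSum_prod_fin (d := d + 1)
    (f := Fin.cons (fun n => 2 * (2 * x / k.1 0 * ((2 * x) ^ n / (k.1 0 : ℝ) ^ (n + 1))))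
      fun i n => x ^ n / (k.1 i.succ : ℝ) ^ (n + 1))
    (a := Fin.cons (2 * (2 * x / k.1 0 * (1 / (k.1 0 - 2 * x))))
      fun i => 1 / ((k.1 i.succ : ℝ) - x))
    (Fin.cases (fun n => by simp only [Fin.cons_zero]; positivity)
      fun i n => by simp only [Fin.cons_succ]; positivity)
    (Fin.cases hhead htail)
  refine hasSum_of_eq hprod (fun s => ?_) ?_
  · have : (k.1 0 : ℝ) ≠ 0 := by linarith [hk 0]
    simp only [Fin.prod_univ_succ, Fin.sum_univ_succ, Fin.cons_zero, Fin.cons_succ,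
      prod_div_distrib, prod_pow_eq_pow_sum, prod_const_one]
    field_simp
    ring
  · simp only [Fin.prod_univ_succ, Fin.cons_zero, Fin.cons_succ]
    rw [← mul_assoc, div_mul_div_comm, mul_one]

theorem hasSum_weightedSum_mul_pow {x : ℝ} (d : ℕ) (hx₀ : 0 ≤ x) (hx : x < 1 / 2) :
    HasSum (fun n => weightedSum d n * x ^ (n + 1)) (2 * connectedSum x (d + 1) 0) := by
  have h := hasSum_sum_antidiagonalTuple (hasSum_tsum_of_nonneg (fun s k => by positivity)
    (fun k => hasSum_weightedSum_tuple k hx₀ hx)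
    ((hasSum_connectedSum_decrTuple d 0 hx₀ hx).mul_left 2))
  refine hasSum_of_eq h (fun n => ?_) rfl
  rw [weightedSum, sum_mul]
  refine sum_congr rfl fun s hs => ?_
  rw [tsum_mul_right, tsum_mul_left, Finset.Nat.mem_antidiagonalTuple.mp hs, mzv]

theorem weightedSum_three (n : ℕ) : weightedSum 3 n =
    4 * mzv ![n + 5] + 2 * mzv ![3, n + 2] - (n + 2) * mzv ![n + 3, 2] := by
  refine congrFun (eq_of_forall_hasSum_mul_pow_succ (r := 1 / 2) (by norm_num)
    (f := fun x => 2 * connectedSum x 4 0)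
    (d := fun n => 4 * mzv ![n + 5] + 2 * mzv ![3, n + 2] - (n + 2) * mzv ![n + 3, 2])
    (fun x hx₀ hx => hasSum_weightedSum_mul_pow 3 hx₀.le hx) fun x hx₀ hx => ?_) n
  refine hasSum_of_eq ((((hasSum_mzv_single_mul_pow hx₀.le hx.le).mul_left 4).add
    ((hasSum_mzv_three_mul_pow hx₀.le hx.le).mul_left 2)).sub
    (hasSum_mzv_two_mul_pow hx₀.le hx.le)) (fun n => by ring) ?_
  rw [connectedSum_four_zero hx₀.le hx.le, wpSeries_four hx.le]
  ring

theorem sum_antidiagonalTuple_succ {M : Type*} [AddCommMonoid M] (d n : ℕ)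
    (f : (Fin (d + 1) → ℕ) → M) : ∑ s ∈ Finset.Nat.antidiagonalTuple (d + 1) n, f s =
      ∑ i ∈ range (n + 1), ∑ s ∈ Finset.Nat.antidiagonalTuple d (n - i), f (Fin.cons i s) := by
  rw [sum_sigma']
  refine sum_bij' (fun s _ => ⟨s 0, Fin.tail s⟩) (fun p _ => Fin.cons p.1 p.2) ?_ ?_ ?_ ?_ ?_
  · intro s hs
    have := Finset.Nat.mem_antidiagonalTuple.mp hs
    rw [Fin.sum_univ_succ] at this
    simp only [mem_sigma, mem_range, Finset.Nat.mem_antidiagonalTuple, Fin.tail]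
    lia
  · rintro ⟨i, s⟩ hs
    simp only [mem_sigma, mem_range, Finset.Nat.mem_antidiagonalTuple] at hs
    simp only [Finset.Nat.mem_antidiagonalTuple, Fin.sum_univ_succ, Fin.cons_zero, Fin.cons_succ]
    lia
  · intro s _
    exact Fin.cons_self_tail s
  · intro p _
    rfl
  · intro s _
    rw [Fin.cons_self_tail]

theorem sum_Icc_eq_sum_range {M : Type*} [AddCommMonoid M] (f : ℕ → M) (a b : ℕ) :
    ∑ i ∈ Icc a b, f i = ∑ i ∈ range (b + 1 - a), f (i + a) := by
  simp only [← Ico_add_one_right_eq_Icc, sum_Ico_eq_sum_range, add_comm]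

theorem weightedSum_three_eq_sum_Icc (n : ℕ) : weightedSum 3 n =
    ∑ a ∈ Icc 2 (n + 5 - 3), ∑ b ∈ Icc 1 (n + 5 - a - 2), ∑ c ∈ Icc 1 (n + 5 - a - b - 1),
      2 ^ a * mzv ![a, b, c, n + 5 - a - b - c] := by
  simp only [weightedSum, sum_antidiagonalTuple_succ, Finset.Nat.antidiagonalTuple_one,
    sum_singleton, sum_Icc_eq_sum_range]
  refine sum_congr rfl fun a ha => ?_
  have ha' : a ≤ n := Nat.le_of_lt_succ (mem_range.mp ha)
  refine sum_congr (by congr 1; lia) fun b hb => ?_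
  have hb' : a + b ≤ n := by
    have := mem_range.mp hb
    lia
  refine sum_congr (by congr 1; lia) fun c hc => ?_
  have hc' : a + b + c ≤ n := by
    have := mem_range.mp hc
    lia
  have hd : n + 5 - (a + 2) - (b + 1) - (c + 1) = n - a - b - c + 1 := by lia
  rw [hd]
  congr 2
  funext i
  fin_cases i <;> rfl

end

theorem weighted_sum_depth4_2a (w : ℕ) (hw : 5 ≤ w)
    (q u : ℕ) (hq : q = w - 3) (hu : u = w - 2) :
    (∑ a ∈ Finset.Icc 2 (w - 3), ∑ b ∈ Finset.Icc 1 (w - a - 2),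
      ∑ c ∈ Finset.Icc 1 (w - a - b - 1),
        (2 : ℝ) ^ a * mzv ![a, b, c, w - a - b - c])
    = 4 * mzv ![w] + 2 * mzv ![3, q] - (q : ℝ) * mzv ![u, 2] := by
  obtain ⟨n, rfl⟩ := Nat.exists_eq_add_of_le' hw
  obtain rfl : q = n + 2 := by lia
  obtain rfl : u = n + 3 := by lia
  rw [← weightedSum_three_eq_sum_Icc, weightedSum_three]
  push_cast
  rfl
end

section
/- Let w ≥ 5 be an integer. Then Σ_{a+b+c+d=w, a≥2, b,c,d≥1} (2^{a−1} + 2^c)·ζ(a,b,c,d) = ((w+3)/2)·ζ(w). -/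
/-!
Write `a k = 1 / k`, `b x k = 1 / (k - x)`, `δ x = b x - a`, and let `u ≻ v` be the sequence
`k ↦ u k * ∑_{j < k} v j`. Multiplied by `x ^ (w - 4)` and summed over `w`, the left-hand side
becomes the sum over `k` of
`W = δ (2 * x) ≻ b x ≻ b x ≻ b x + 2 • (δ x ≻ b x ≻ b (2 * x) ≻ b x)`.
In the shuffle product of power series the parameters `x` add up, so shuffling removes `2 * x`:
with `*` the Cauchy product,
`W = (b x * (δ x ≻ b x ≻ b x) - b x ≻ δ x ≻ b x ≻ b x)
  - (δ x ≻ b x) * (δ x ≻ b x) / 2 + δ x ≻ b x ≻ δ x ≻ b x`.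
The sum of the first, regularized product is given by the stuffle product, the sum formula and the
derivative of the sum formula in `x`; those of the other two terms by the sum formula and Ohno's
relation. Both of these follow from the connected sums of Seki and Yamamoto. All values obtained are
built from sums over a single `k`, the squares of such sums cancel, and comparing the coefficients
of the powers of `x` gives the theorem.
-/

open Finset Filter Topology
open scoped ENNReal

namespace MultipleZeta

/-- The sequence `k ↦ u k * ∑_{j < k} v j`, the building block of sums over strictly decreasing
indices: `∑' k, (u ≻ v ≻ w) k` is the sum of `u k₁ * v k₂ * w k₃` over `k₁ > k₂ > k₃`. -/
def nest {R : Type*} [CommSemiring R] (u v : ℕ → R) (k : ℕ) : R := u k * ∑ j ∈ range k, v j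

local notation:75 u:76 " ≻ " v:75 => nest u v

section Nest

/-- The iterated nest `f 0 ≻ f 1 ≻ ⋯ ≻ f d`. -/
def nestProd {R : Type*} [CommSemiring R] : {d : ℕ} → (Fin (d + 1) → ℕ → R) → ℕ → R
  | 0, f => f 0
  | _ + 1, f => f 0 ≻ nestProd fun i => f i.succ

section CommSemiring

variable {R : Type*} [CommSemiring R]

lemma nest_apply (u v : ℕ → R) (k : ℕ) : (u ≻ v) k = u k * ∑ j ∈ range k, v j := rfl

lemma nestProd_succ {d : ℕ} (f : Fin (d + 2) → ℕ → R) :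
    nestProd f = f 0 ≻ nestProd fun i => f i.succ := rfl

end CommSemiring

section OrderedSemiring

variable {R : Type*} [CommSemiring R] [PartialOrder R] [IsOrderedRing R] {u v u' v' : ℕ → R}

lemma nest_nonneg (hu : 0 ≤ u) (hv : 0 ≤ v) : 0 ≤ u ≻ v :=
  fun k => mul_nonneg (hu k) (sum_nonneg fun j _ => hv j)

lemma nest_mono (hu : 0 ≤ u) (hv : 0 ≤ v) (huu' : u ≤ u') (hvv' : v ≤ v') : u ≻ v ≤ u' ≻ v' :=
  fun k => mul_le_mul (huu' k) (sum_le_sum fun j _ => hvv' j) (sum_nonneg fun j _ => hv j)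
    ((hu k).trans (huu' k))

end OrderedSemiring

section CommRing

variable {R : Type*} [CommRing R]

lemma sum_range_sq (u : ℕ → R) (n : ℕ) :
    (∑ k ∈ range n, u k) ^ 2 = 2 * ∑ k ∈ range n, (u ≻ u) k + ∑ k ∈ range n, u k ^ 2 := by
  induction n with
  | zero => simp
  | succ n ih =>
    simp only [sum_range_succ, nest_apply] at ih ⊢
    linear_combination ih

lemma sum_range_nest_mul_sum_range (u : ℕ → R) (n : ℕ) :
    (∑ k ∈ range n, (u ≻ u) k) * ∑ k ∈ range n, u k =
      3 * ∑ k ∈ range n, (u ≻ u ≻ u) k + ∑ k ∈ range n, ((u ^ 2) ≻ u) k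
        + ∑ k ∈ range n, (u ≻ u ^ 2) k := by
  induction n with
  | zero => simp
  | succ n ih =>
    have hsq := sum_range_sq u n
    simp only [sum_range_succ, nest_apply, Pi.pow_apply] at ih hsq ⊢
    linear_combination ih + u n * hsq

end CommRing

section ENNReal

variable {ι : Type*}

lemma tsum_nest_left (u : ι → ℕ → ℝ≥0∞) (v : ℕ → ℝ≥0∞) (k : ℕ) :
    ∑' i, (u i ≻ v) k = ((fun k => ∑' i, u i k) ≻ v) k :=
  ENNReal.tsum_mul_right

lemma tsum_nest_right (u : ℕ → ℝ≥0∞) (v : ι → ℕ → ℝ≥0∞) (k : ℕ) :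
    ∑' i, (u ≻ v i) k = (u ≻ fun k => ∑' i, v i k) k := by
  simp only [nest_apply, ENNReal.tsum_mul_left]
  rw [Summable.tsum_finsetSum fun _ _ => ENNReal.summable]

lemma ofReal_nest {u v : ℕ → ℝ} (hu : 0 ≤ u) (hv : 0 ≤ v) (k : ℕ) :
    ENNReal.ofReal ((u ≻ v) k)
      = ((fun k => ENNReal.ofReal (u k)) ≻ fun k => ENNReal.ofReal (v k)) k := by
  rw [nest_apply, ENNReal.ofReal_mul (hu k), ENNReal.ofReal_sum_of_nonneg fun j _ => hv j,
    nest_apply]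

end ENNReal

end Nest

section TupleSums

/-- The strictly decreasing tuples of positive integers over which multiple zeta values sum. -/
abbrev decreasingTuples (d : ℕ) : Set (Fin d → ℕ) := {k | StrictAnti k ∧ ∀ i, 0 < k i}

lemma cons_mem_decreasingTuples {d : ℕ} (n : ℕ) (k : Fin (d + 1) → ℕ) :
    (Fin.cons n k : Fin (d + 2) → ℕ) ∈ decreasingTuples (d + 2) ↔
      k 0 < n ∧ k ∈ decreasingTuples (d + 1) := by
  have hcons : StrictAnti (Fin.cons n k : Fin (d + 2) → ℕ) ↔ k 0 < n ∧ StrictAnti k :=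
    strictAnti_vecCons
  simp only [Set.mem_ofPred_eq, hcons, Fin.forall_fin_succ, Fin.cons_zero, Fin.cons_succ]
  grind

lemma tsum_ite_lt (f : ℕ → ℝ≥0∞) (n : ℕ) :
    ∑' k, (if k < n then f k else 0) = ∑ k ∈ range n, f k := by
  rw [tsum_eq_sum (s := range n) fun k hk => if_neg (by simpa using hk)]
  exact sum_congr rfl fun k hk => if_pos (mem_range.1 hk)

lemma tsum_indicator_cons {d : ℕ} {f : Fin (d + 1) → ℕ → ℝ≥0∞} (hf : ∀ i, f i 0 = 0) (n : ℕ) :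
    ∑' t : Fin d → ℕ, (decreasingTuples (d + 1)).indicator (fun k => ∏ i, f i (k i)) (Fin.cons n t)
      = nestProd f n := by
  induction d generalizing n with
  | zero =>
    rw [tsum_fintype, Fintype.sum_unique]
    rcases n.eq_zero_or_pos with rfl | hn
    · simp [nestProd, hf]
    · have hmem (t : Fin 0 → ℕ) : (Fin.cons n t : Fin 1 → ℕ) ∈ decreasingTuples 1 :=
        ⟨Subsingleton.strictAnti _, by simpa using hn⟩
      rw [Set.indicator_of_mem (hmem _)]
      simp [nestProd]
  | succ d ih =>
    rw [nestProd_succ, nest_apply, ← tsum_ite_lt, ← ENNReal.tsum_mul_left,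
      ← (Fin.consEquiv fun _ => ℕ).tsum_eq, ENNReal.tsum_prod']
    refine tsum_congr fun m => ?_
    rw [← ih fun i => hf i.succ]
    split_ifs with hm
    · rw [← ENNReal.tsum_mul_left]
      refine tsum_congr fun t => ?_
      by_cases ht : (Fin.cons m t : Fin (d + 1) → ℕ) ∈ decreasingTuples (d + 1)
      · rw [Set.indicator_of_mem ht]
        refine (Set.indicator_of_mem ((cons_mem_decreasingTuples _ _).2 ⟨hm, ht⟩) _).trans ?_
        rw [Fin.prod_univ_succ]
        rfl
      · rw [Set.indicator_of_notMem ht, mul_zero]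
        exact Set.indicator_of_notMem (fun h => ht ((cons_mem_decreasingTuples _ _).1 h).2) _
    · rw [mul_zero, ENNReal.tsum_eq_zero]
      exact fun t => Set.indicator_of_notMem (fun h => hm ((cons_mem_decreasingTuples _ _).1 h).1) _

lemma tsum_decreasingTuples_prod {d : ℕ} {f : Fin (d + 1) → ℕ → ℝ≥0∞} (hf : ∀ i, f i 0 = 0) :
    ∑' k : decreasingTuples (d + 1), ∏ i, f i (k.1 i) = ∑' n, nestProd f n := by
  rw [tsum_subtype (decreasingTuples (d + 1)) fun k => ∏ i, f i (k i),
    ← (Fin.consEquiv fun _ => ℕ).tsum_eq, ENNReal.tsum_prod']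
  exact tsum_congr fun n => tsum_indicator_cons hf n

end TupleSums

section ShiftInv

/-- The sequence `k ↦ 1 / (k - c)`, set to `0` at `k = 0`. It is the generating function
`∑ a, c ^ a / k ^ (a + 1)` of the powers of `1 / k`. -/
noncomputable def shiftInv (c : ℝ) (k : ℕ) : ℝ := if k = 0 then 0 else 1 / (k - c)

/-- The sequence `k ↦ 1 / (k - x) - 1 / k`, set to `0` at `k = 0`: the generating function
`∑ a, x ^ (a + 1) / k ^ (a + 2)` of the powers of `1 / k` that are summable over `k`. -/
noncomputable def shiftDiff (x : ℝ) : ℕ → ℝ := shiftInv x - shiftInv 0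

variable {c x y : ℝ} {k m n : ℕ}

@[simp]
lemma shiftInv_apply_zero (c : ℝ) : shiftInv c 0 = 0 := if_pos rfl

@[simp]
lemma shiftDiff_apply_zero (x : ℝ) : shiftDiff x 0 = 0 := by simp [shiftDiff]

lemma shiftInv_of_ne_zero (c : ℝ) (hk : k ≠ 0) : shiftInv c k = 1 / (k - c) := if_neg hk

lemma natCast_sub_pos (hc : c < 1) (hk : k ≠ 0) : (0 : ℝ) < k - c := by
  have : (1 : ℝ) ≤ k := mod_cast Nat.one_le_iff_ne_zero.2 hk
  linarith

lemma shiftInv_nonneg (hc : c < 1) : 0 ≤ shiftInv c := fun k => by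
  rcases eq_or_ne k 0 with rfl | hk
  · simp
  · simpa [shiftInv_of_ne_zero c hk] using (natCast_sub_pos hc hk).le

lemma shiftInv_mono (hxy : x ≤ y) (hy : y < 1) : shiftInv x ≤ shiftInv y := fun k => by
  rcases eq_or_ne k 0 with rfl | hk
  · simp
  · rw [shiftInv_of_ne_zero x hk, shiftInv_of_ne_zero y hk]
    have := natCast_sub_pos hy hk
    gcongr

lemma shiftInv_anti (hc : c < 1) (hm : m ≠ 0) (hmn : m ≤ n) : shiftInv c n ≤ shiftInv c m := by
  rw [shiftInv_of_ne_zero c hm, shiftInv_of_ne_zero c (by lia)]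
  have := natCast_sub_pos hc hm
  gcongr

lemma tendsto_shiftInv (c : ℝ) : Tendsto (shiftInv c) atTop (𝓝 0) := by
  have h : Tendsto (fun k : ℕ => 1 / ((k : ℝ) - c)) atTop (𝓝 0) :=
    tendsto_const_nhds.div_atTop
      (tendsto_atTop_add_const_right _ (-c) tendsto_natCast_atTop_atTop)
  refine h.congr' ?_
  filter_upwards [eventually_ne_atTop 0] with k hk
  exact (shiftInv_of_ne_zero c hk).symm

lemma shiftDiff_nonneg (hx : 0 ≤ x) (hx1 : x < 1) : 0 ≤ shiftDiff x :=
  sub_nonneg.2 (shiftInv_mono hx hx1)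

lemma shiftDiff_eq (hx : x < 1) : shiftDiff x = x • (shiftInv x * shiftInv 0) := by
  ext k
  rcases eq_or_ne k 0 with rfl | hk
  · simp
  · simp only [shiftDiff, Pi.sub_apply, Pi.smul_apply, Pi.mul_apply, shiftInv_of_ne_zero _ hk,
      smul_eq_mul]
    have := natCast_sub_pos hx hk
    have := natCast_sub_pos one_pos hk
    field_simp
    ring

lemma shiftInv_le_smul (hx : 0 ≤ x) (hx1 : x < 1) :
    shiftInv x ≤ (1 / (1 - x)) • shiftInv 0 := fun k => by
  rcases eq_or_ne k 0 with rfl | hk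
  · simp
  · have hkx := natCast_sub_pos hx1 hk
    have hk1 : (1 : ℝ) ≤ k := mod_cast Nat.one_le_iff_ne_zero.2 hk
    rw [Pi.smul_apply, shiftInv_of_ne_zero x hk, shiftInv_of_ne_zero 0 hk, smul_eq_mul, sub_zero,
      div_mul_div_comm, one_mul, div_le_div_iff₀ hkx (mul_pos (by linarith) (by linarith))]
    nlinarith

lemma shiftInv_zero_le_one (k : ℕ) : shiftInv 0 k ≤ 1 := by
  rcases eq_or_ne k 0 with rfl | hk
  · simp
  · simpa [shiftInv_of_ne_zero 0 hk] using Nat.cast_inv_le_one k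

lemma summable_shiftInv_zero_sq : Summable (shiftInv 0 ^ 2) := by
  refine (Real.summable_one_div_nat_pow.2 one_lt_two).congr fun k => ?_
  rcases eq_or_ne k 0 with rfl | hk
  · simp
  · simp [shiftInv_of_ne_zero 0 hk]

lemma summable_shiftDiff (hx : 0 ≤ x) (hx1 : x < 1) : Summable (shiftDiff x) := by
  refine .of_nonneg_of_le (shiftDiff_nonneg hx hx1) (fun k => ?_)
    (summable_shiftInv_zero_sq.mul_left (x * (1 / (1 - x))))
  have h := shiftInv_le_smul hx hx1 k
  have h0 := shiftInv_nonneg one_pos k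
  simp only [shiftDiff_eq hx1, Pi.smul_apply, Pi.mul_apply, Pi.pow_apply, smul_eq_mul,
    Pi.zero_apply] at h h0 ⊢
  calc x * (shiftInv x k * shiftInv 0 k)
      ≤ x * (1 / (1 - x) * shiftInv 0 k * shiftInv 0 k) := by gcongr
    _ = x * (1 / (1 - x)) * shiftInv 0 k ^ 2 := by ring

lemma summable_shiftDiff_mul_pow (hx : 0 ≤ x) (hx1 : x < 1) (s : ℕ) :
    Summable (shiftDiff x * shiftInv 0 ^ s) :=
  .of_nonneg_of_le
    (fun k => mul_nonneg (shiftDiff_nonneg hx hx1 k) (pow_nonneg (shiftInv_nonneg one_pos k) s))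
    (fun k => mul_le_of_le_one_right (shiftDiff_nonneg hx hx1 k)
      (pow_le_one₀ (shiftInv_nonneg one_pos k) (shiftInv_zero_le_one k)))
    (summable_shiftDiff hx hx1)

lemma shiftInv_mul_shiftInv_zero (hx0 : x ≠ 0) (hx : x < 1) :
    shiftInv x * shiftInv 0 = x⁻¹ • shiftDiff x := by
  rw [shiftDiff_eq hx, inv_smul_smul₀ hx0]

end ShiftInv

section PowerSeries

open scoped PowerSeries
open PowerSeries (X C coeff constantCoeff derivative coeff_mk coeff_one coeff_derivative coeff_mul
  coeff_succ_X_mul coeff_C_mul)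

/-- The operator `mk u ↦ mk (f ≻ u)` on power series. For `f = shiftInv c` it is the formal
analogue of `U ↦ t ^ c * ∫ U(t) * t ^ (-c) / (1 - t) dt`. -/
noncomputable def seriesNest (f : ℕ → ℝ) : ℝ⟦X⟧ →ₗ[ℝ] ℝ⟦X⟧ where
  toFun U := PowerSeries.mk (f ≻ fun j => coeff j U)
  map_add' U V := by ext; simp [nest_apply, sum_add_distrib, mul_add]
  map_smul' r U := by ext; simp [nest_apply, ← mul_sum, mul_left_comm]

/-- The Euler derivation `U ↦ t * dU/dt`. -/
noncomputable def eulerDerivation : Derivation ℝ ℝ⟦X⟧ ℝ⟦X⟧ :=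
  (X : ℝ⟦X⟧) • derivative ℝ

variable {a c x : ℝ}

lemma coeff_seriesNest (f : ℕ → ℝ) (U : ℝ⟦X⟧) (n : ℕ) :
    coeff n (seriesNest f U) = f n * ∑ j ∈ range n, coeff j U := by
  simp [seriesNest, nest_apply]

lemma constantCoeff_seriesNest (f : ℕ → ℝ) (U : ℝ⟦X⟧) : constantCoeff (seriesNest f U) = 0 := by
  simpa using coeff_seriesNest f U 0

lemma seriesNest_mk (f u : ℕ → ℝ) : seriesNest f (PowerSeries.mk u) = PowerSeries.mk (f ≻ u) := by
  ext; simp [coeff_seriesNest, nest_apply]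

lemma seriesNest_one {f : ℕ → ℝ} (hf : f 0 = 0) : seriesNest f 1 = PowerSeries.mk f := by
  ext n
  cases n <;> simp [coeff_seriesNest, coeff_one, hf]

lemma seriesNest_sub (f g : ℕ → ℝ) (U : ℝ⟦X⟧) :
    seriesNest (f - g) U = seriesNest f U - seriesNest g U := by
  ext; simp [coeff_seriesNest, sub_mul]

lemma coeff_eulerDerivation (U : ℝ⟦X⟧) (n : ℕ) :
    coeff n (eulerDerivation U) = n * coeff n U := by
  cases n <;> simp [eulerDerivation, coeff_derivative, coeff_succ_X_mul, mul_comm]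

lemma coeff_X_mul_mk_one_mul (U : ℝ⟦X⟧) (n : ℕ) :
    coeff n (X * PowerSeries.mk 1 * U) = ∑ j ∈ range n, coeff j U := by
  cases n with
  | zero => simp
  | succ n =>
    rw [mul_assoc, coeff_succ_X_mul, coeff_mul, Nat.sum_antidiagonal_eq_sum_range_succ_mk,
      ← sum_range_reflect]
    refine sum_congr rfl fun j hj => ?_
    simp [Nat.sub_sub_self (mem_range_succ_iff.1 hj)]

lemma eulerDerivation_seriesNest_shiftInv (hc : c < 1) (U : ℝ⟦X⟧) :
    eulerDerivation (seriesNest (shiftInv c) U)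
      = C c * seriesNest (shiftInv c) U + X * PowerSeries.mk 1 * U := by
  ext n
  rw [map_add, coeff_eulerDerivation, coeff_C_mul, coeff_X_mul_mk_one_mul, coeff_seriesNest]
  rcases eq_or_ne n 0 with rfl | hn
  · simp
  · rw [shiftInv_of_ne_zero c hn]
    have := natCast_sub_pos hc hn
    field_simp
    ring

lemma eq_zero_of_eulerDerivation_eq {U : ℝ⟦X⟧} (hc : c < 1) (hU : eulerDerivation U = C c * U)
    (hU0 : constantCoeff U = 0) : U = 0 := by
  ext n
  rcases eq_or_ne n 0 with rfl | hn
  · simpa using hU0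
  · have h : n * coeff n U = c * coeff n U := by
      simpa [coeff_eulerDerivation] using congrArg (coeff n) hU
    have h' : (n - c) * coeff n U = 0 := by linear_combination h
    exact (mul_eq_zero.1 h').resolve_left (natCast_sub_pos hc hn).ne'

/-- Both sides solve the same first-order equation for the Euler derivation. -/
lemma seriesNest_shiftInv_mul (ha : a < 1) (hc : c < 1) (hac : a + c < 1) (U V : ℝ⟦X⟧) :
    seriesNest (shiftInv a) U * seriesNest (shiftInv c) V = seriesNest (shiftInv (a + c))
      (U * seriesNest (shiftInv c) V + seriesNest (shiftInv a) U * V) := by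
  rw [← sub_eq_zero]
  refine eq_zero_of_eulerDerivation_eq hac ?_ ?_
  · rw [map_sub, Derivation.leibniz, eulerDerivation_seriesNest_shiftInv ha,
      eulerDerivation_seriesNest_shiftInv hc, eulerDerivation_seriesNest_shiftInv hac, map_add]
    simp only [smul_eq_mul]
    ring
  · simp only [map_sub, map_mul, constantCoeff_seriesNest, mul_zero, sub_zero]

lemma mk_shiftInv_mul_seriesNest (ha : a < 1) (hc : c < 1) (hac : a + c < 1) (V : ℝ⟦X⟧) :
    PowerSeries.mk (shiftInv a) * seriesNest (shiftInv c) V = seriesNest (shiftInv (a + c))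
      (seriesNest (shiftInv c) V + PowerSeries.mk (shiftInv a) * V) := by
  simpa only [seriesNest_one (shiftInv_apply_zero a), one_mul]
    using seriesNest_shiftInv_mul ha hc hac 1 V

lemma seriesNest_shiftInv_mul_self (hc : c < 1) (h2c : 2 * c < 1) (U : ℝ⟦X⟧) :
    seriesNest (shiftInv c) U * seriesNest (shiftInv c) U
      = 2 * seriesNest (shiftInv (2 * c)) (U * seriesNest (shiftInv c) U) := by
  rw [seriesNest_shiftInv_mul hc hc (by linarith), mul_comm (seriesNest _ U) U, ← two_mul c,
    map_add, two_mul (seriesNest _ _)]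

lemma mk_shiftDiff_nest (x : ℝ) (u : ℕ → ℝ) :
    PowerSeries.mk (shiftDiff x ≻ u) = seriesNest (shiftInv x) (PowerSeries.mk u)
      - seriesNest (shiftInv 0) (PowerSeries.mk u) := by
  rw [← seriesNest_mk, shiftDiff, seriesNest_sub]

/-- The sequence whose sum is the generating function of the weighted sums: the factor `2 ^ (a - 1)`
turns the parameter of the first entry into `2 * x`, the factor `2 ^ c` that of the third. -/
noncomputable def weightedNest (x : ℝ) : ℕ → ℝ :=
  (shiftDiff (2 * x) ≻ shiftInv x ≻ shiftInv x ≻ shiftInv x)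
    + 2 • (shiftDiff x ≻ shiftInv x ≻ shiftInv (2 * x) ≻ shiftInv x)

lemma mk_weightedNest (x : ℝ) : PowerSeries.mk (weightedNest x)
    = PowerSeries.mk (shiftDiff (2 * x) ≻ shiftInv x ≻ shiftInv x ≻ shiftInv x)
      + 2 * PowerSeries.mk (shiftDiff x ≻ shiftInv x ≻ shiftInv (2 * x) ≻ shiftInv x) := by
  ext; simp [weightedNest, two_mul, two_smul]

lemma two_mul_mk_weightedNest (hx : 2 * x < 1) :
    2 * PowerSeries.mk (weightedNest x) =
      2 * (PowerSeries.mk (shiftInv x) * PowerSeries.mk (shiftDiff x ≻ shiftInv x ≻ shiftInv x)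
          - PowerSeries.mk (shiftInv x ≻ shiftDiff x ≻ shiftInv x ≻ shiftInv x))
        - PowerSeries.mk (shiftDiff x ≻ shiftInv x) ^ 2
        + 2 * PowerSeries.mk (shiftDiff x ≻ shiftInv x ≻ shiftDiff x ≻ shiftInv x) := by
  have hx1 : x < 1 := by linarith
  simp only [mk_weightedNest, mk_shiftDiff_nest, ← seriesNest_mk (shiftInv _), map_sub]
  have mk_mul {c : ℝ} (hc : c < 1) (hxc : x + c < 1) := mk_shiftInv_mul_seriesNest hx1 hc hxc
  have hxx : x + x < 1 := by linarith
  set J := fun c => seriesNest (shiftInv c)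
  set E := PowerSeries.mk (shiftInv x)
  have sq_E : E * E = 2 * J (2 * x) E := by
    simpa only [seriesNest_one (shiftInv_apply_zero x), one_mul]
      using seriesNest_shiftInv_mul_self hx1 hx 1
  have E_mul_JJE : E * J x (J x E) = J (2 * x) (J x (J x E)) + J (2 * x) (E * J x E) := by
    simpa only [← two_mul, map_add] using mk_mul hx1 hxx (J x E)
  have sq_JE : J x E * J x E = 2 * J (2 * x) (E * J x E) :=
    seriesNest_shiftInv_mul_self hx1 hx E
  have E_mul_PE : E * J 0 E = J x (J 0 E) + 2 * J x (J (2 * x) E) := by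
    simpa only [add_zero, map_add, sq_E, two_mul (_ : ℝ⟦X⟧)] using mk_mul one_pos (by linarith) E
  have E_mul_PJE : E * J 0 (J x E) = J x (J 0 (J x E)) + J x (E * J x E) := by
    simpa only [add_zero, map_add] using mk_mul one_pos (by linarith) (J x E)
  have JE_mul_PE : J x E * J 0 E = J x (E * J 0 E) + J x (E * J x E) := by
    simpa only [add_zero, map_add, mul_comm _ E]
      using seriesNest_shiftInv_mul hx1 one_pos (by linarith) E E
  have sq_PE : J 0 E * J 0 E = 2 * J 0 (E * J 0 E) := by
    simpa only [mul_zero] using seriesNest_shiftInv_mul_self one_pos (by simp) E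
  simp only [E_mul_PE, two_mul (_ : ℝ⟦X⟧), map_add] at JE_mul_PE sq_PE
  linear_combination -2 * E_mul_JJE + sq_JE - 2 * JE_mul_PE + 2 * E_mul_PJE + sq_PE

end PowerSeries

section ConnectedSums

/-- The sequence `shiftInv x` with values in `ℝ≥0∞`. -/
noncomputable abbrev eshiftInv (x : ℝ) (k : ℕ) : ℝ≥0∞ := ENNReal.ofReal (shiftInv x k)

/-- The sequence `shiftDiff x` with values in `ℝ≥0∞`. -/
noncomputable abbrev eshiftDiff (x : ℝ) (k : ℕ) : ℝ≥0∞ := ENNReal.ofReal (shiftDiff x k)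

/-- The Seki–Yamamoto connector
`Γ(n + 1 - x) * Γ(q + 1 - x) / (Γ(1 - x) * Γ(n + q + 1 - x))`, written as a finite product. -/
noncomputable def connector (x : ℝ) (n q : ℕ) : ℝ :=
  ∏ i ∈ range q, ((i : ℝ) + 1 - x) / ((n : ℝ) + (i + 1) - x)

/-- The sum of a sequence against the connector, as a function of the second index of the
connector. -/
noncomputable def connectedSum (x : ℝ) (w : ℕ → ℝ≥0∞) (q : ℕ) : ℝ≥0∞ :=
  ∑' n, w n * ENNReal.ofReal (connector x n q)

variable {x : ℝ} {q : ℕ}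

@[simp]
lemma eshiftInv_apply_zero (x : ℝ) : eshiftInv x 0 = 0 := by
  rw [eshiftInv, shiftInv_apply_zero, ENNReal.ofReal_zero]

lemma connector_zero_right (x : ℝ) (n : ℕ) : connector x n 0 = 1 := prod_range_zero _

lemma connector_succ_right (x : ℝ) (n q : ℕ) :
    connector x n (q + 1) = connector x n q * (((q : ℝ) + 1 - x) / (n + (q + 1) - x)) :=
  prod_range_succ _ _

lemma connector_zero_left (hx : x < 1) (q : ℕ) : connector x 0 q = 1 := by
  refine prod_eq_one fun i _ => ?_
  rw [Nat.cast_zero, zero_add]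
  exact div_self (by linarith [i.cast_nonneg (α := ℝ)])

lemma connector_succ_left (hx : x < 1) (n q : ℕ) :
    connector x (n + 1) q = connector x n q * (((n : ℝ) + 1 - x) / (n + 1 + q - x)) := by
  have : (0 : ℝ) ≤ n := n.cast_nonneg
  induction q with
  | zero =>
    rw [connector_zero_right, connector_zero_right, Nat.cast_zero, add_zero,
      div_self (by linarith), one_mul]
  | succ q ih =>
    have : (0 : ℝ) ≤ q := q.cast_nonneg
    rw [connector_succ_right, connector_succ_right, ih]
    have h₁ : (n : ℝ) + 1 + q - x ≠ 0 := by linarith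
    have h₂ : (n : ℝ) + (q + 1) - x ≠ 0 := by linarith
    have h₃ : (n : ℝ) + 1 + (q + 1) - x ≠ 0 := by linarith
    push_cast
    field_simp
    ring

lemma connector_comm (hx : x < 1) (n q : ℕ) : connector x n q = connector x q n := by
  induction n with
  | zero => rw [connector_zero_left hx, connector_zero_right]
  | succ n ih =>
    rw [connector_succ_left hx, connector_succ_right, ih]
    congr 3
    ring

lemma connector_nonneg (hx : x < 1) (n q : ℕ) : 0 ≤ connector x n q :=
  prod_nonneg fun i _ => div_nonneg (by linarith [i.cast_nonneg (α := ℝ)])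
    (by linarith [i.cast_nonneg (α := ℝ), n.cast_nonneg (α := ℝ)])

lemma connector_succ_right_le (hx : x < 1) (n q : ℕ) :
    connector x n (q + 1) ≤ (1 - x) / (n + 1 - x) := by
  induction q with
  | zero => simp [connector_succ_right, connector_zero_right]
  | succ q ih =>
    rw [connector_succ_right]
    refine (mul_le_of_le_one_right (connector_nonneg hx _ _) ?_).trans ih
    have : (0 : ℝ) ≤ n := n.cast_nonneg
    have : (0 : ℝ) ≤ q := q.cast_nonneg
    push_cast
    exact div_le_one_of_le₀ (by linarith) (by linarith)

lemma tendsto_connector (hx : x < 1) (hq : q ≠ 0) :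
    Tendsto (fun n => connector x n q) atTop (𝓝 0) := by
  obtain ⟨q, rfl⟩ := Nat.exists_eq_succ_of_ne_zero hq
  refine squeeze_zero (fun n => connector_nonneg hx n _)
    (fun n => connector_succ_right_le hx n q) ?_
  exact tendsto_const_nhds.div_atTop <| tendsto_atTop_add_const_right _ _ <|
    tendsto_atTop_add_const_right _ _ tendsto_natCast_atTop_atTop

lemma shiftInv_mul_connector (hx : x < 1) (n : ℕ) (hq : q ≠ 0) :
    shiftInv x (n + 1) * connector x (n + 1) q
      = shiftInv 0 q * (connector x n q - connector x (n + 1) q) := by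
  have h₁ := natCast_sub_pos hx n.succ_ne_zero
  have h₂ := natCast_sub_pos one_pos hq
  rw [connector_succ_left hx, shiftInv_of_ne_zero x n.succ_ne_zero, shiftInv_of_ne_zero 0 hq]
  push_cast at h₁ ⊢
  have h₃ : (n : ℝ) + 1 + q - x ≠ 0 := by linarith
  field_simp
  ring

lemma hasSum_shiftInv_mul_connector (hx : x < 1) (n : ℕ) (hq : q ≠ 0) :
    HasSum (fun k => shiftInv x (k + (n + 1)) * connector x (k + (n + 1)) q)
      (shiftInv 0 q * connector x n q) := by
  rw [hasSum_iff_tendsto_nat_of_nonneg fun k =>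
    mul_nonneg (shiftInv_nonneg hx _) (connector_nonneg hx _ _)]
  have hpartial (m : ℕ) :
      ∑ k ∈ range m, shiftInv x (k + (n + 1)) * connector x (k + (n + 1)) q
        = shiftInv 0 q * (connector x n q - connector x (m + n) q) := by
    simp only [← add_assoc, shiftInv_mul_connector hx _ hq, ← mul_sum]
    rw [sum_congr rfl fun k _ => by rw [add_right_comm],
      sum_range_sub' (fun k => connector x (k + n) q), zero_add]
  simp only [hpartial]
  have h := (tendsto_connector hx hq).comp (tendsto_add_atTop_nat n)
  simpa using (h.const_sub (connector x n q)).const_mul (shiftInv 0 q)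

lemma tsum_ite_lt_eq_tsum_add (f : ℕ → ℝ≥0∞) (n : ℕ) :
    ∑' k, (if n < k then f k else 0) = ∑' k, f (k + (n + 1)) := by
  rw [← ENNReal.summable.sum_add_tsum_nat_add' (k := n + 1),
    sum_eq_zero fun k hk => if_neg (by simpa [Nat.lt_succ_iff] using hk), zero_add]
  exact tsum_congr fun k => if_pos (by lia)

lemma tsum_eshiftInv_mul_connector (hx : x < 1) (n : ℕ) (hq : q ≠ 0) :
    ∑' k, (if n < k then eshiftInv x k * ENNReal.ofReal (connector x k q) else 0)
      = eshiftInv 0 q * ENNReal.ofReal (connector x n q) := by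
  have h := hasSum_shiftInv_mul_connector hx n hq
  simp only [tsum_ite_lt_eq_tsum_add, ← ENNReal.ofReal_mul (shiftInv_nonneg hx _),
    ← ENNReal.ofReal_mul (shiftInv_nonneg one_pos _)]
  rw [← h.tsum_eq, ENNReal.ofReal_tsum_of_nonneg
    (fun k => mul_nonneg (shiftInv_nonneg hx _) (connector_nonneg hx _ _)) h.summable]

lemma tsum_nest_mul (u w c : ℕ → ℝ≥0∞) :
    ∑' k, (u ≻ w) k * c k = ∑' n, w n * ∑' k, if n < k then u k * c k else 0 := by
  simp only [nest_apply, ← tsum_ite_lt w, ← ENNReal.tsum_mul_left, ← ENNReal.tsum_mul_right]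
  rw [ENNReal.tsum_comm]
  refine tsum_congr fun n => tsum_congr fun k => ?_
  split_ifs <;> ring

lemma connectedSum_eshiftInv_nest (hx : x < 1) (w : ℕ → ℝ≥0∞) (hq : q ≠ 0) :
    connectedSum x (eshiftInv x ≻ w) q = eshiftInv 0 q * connectedSum x w q := by
  simp only [connectedSum, tsum_nest_mul, tsum_eshiftInv_mul_connector hx _ hq,
    ← ENNReal.tsum_mul_left, mul_left_comm]

lemma connectedSum_eshiftInv (hx : x < 1) (hq : q ≠ 0) :
    connectedSum x (eshiftInv x) q = eshiftInv 0 q := by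
  have hnest : eshiftInv x ≻ Pi.single 0 1 = eshiftInv x := by
    ext k
    cases k <;> simp [nest_apply]
  have hsingle : connectedSum x (Pi.single 0 1) q = 1 := by
    rw [connectedSum, tsum_eq_single 0 fun n hn => by rw [Pi.single_eq_of_ne hn, zero_mul]]
    simp [connector_zero_left hx]
  rw [← mul_one (eshiftInv 0 q), ← hsingle, ← connectedSum_eshiftInv_nest hx _ hq, hnest]

lemma connectedSum_nestProd_eshiftInv (hx : x < 1) (d : ℕ) (hq : q ≠ 0) :
    connectedSum x (nestProd fun _ : Fin (d + 1) => eshiftInv x) q = eshiftInv 0 q ^ (d + 1) := by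
  induction d with
  | zero => simpa [nestProd] using connectedSum_eshiftInv hx hq
  | succ d ih => rw [nestProd_succ, connectedSum_eshiftInv_nest hx _ hq, ih, ← pow_succ']

lemma eshiftDiff_eq (hx : 0 ≤ x) (hx1 : x < 1) (k : ℕ) :
    eshiftDiff x k = ENNReal.ofReal x * eshiftInv x k * eshiftInv 0 k := by
  simp only [eshiftDiff, shiftDiff_eq hx1, Pi.smul_apply, Pi.mul_apply, smul_eq_mul]
  rw [ENNReal.ofReal_mul hx, ENNReal.ofReal_mul (shiftInv_nonneg hx1 k), mul_assoc]

lemma eshiftDiff_mul_connector (hx : 0 ≤ x) (hx1 : x < 1) (n q : ℕ) :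
    eshiftDiff x n * ENNReal.ofReal (connector x n q) = ∑' r, if q < r then
      ENNReal.ofReal x * eshiftInv x r * (eshiftInv x n * ENNReal.ofReal (connector x n r))
      else 0 := by
  rcases eq_or_ne n 0 with rfl | hn
  · simp
  rw [eshiftDiff_eq hx hx1, mul_assoc _ (eshiftInv 0 n), connector_comm hx1,
    ← tsum_eshiftInv_mul_connector hx1 q hn, ← ENNReal.tsum_mul_left]
  refine tsum_congr fun r => ?_
  rw [connector_comm hx1 n r]
  split_ifs <;> ring

lemma connectedSum_eshiftDiff_nest (hx : 0 ≤ x) (hx1 : x < 1) (w : ℕ → ℝ≥0∞) (q : ℕ) :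
    connectedSum x (eshiftDiff x ≻ w) q
      = ∑' r, if q < r then eshiftDiff x r * connectedSum x w r else 0 := by
  have hterm (n : ℕ) : (eshiftDiff x ≻ w) n * ENNReal.ofReal (connector x n q) =
      ∑' r, if q < r then ENNReal.ofReal x * eshiftInv x r *
        ((eshiftInv x ≻ w) n * ENNReal.ofReal (connector x n r)) else 0 := by
    rw [nest_apply, mul_right_comm, eshiftDiff_mul_connector hx hx1, ← ENNReal.tsum_mul_right]
    refine tsum_congr fun r => ?_
    rw [nest_apply]
    split_ifs <;> ring
  rw [connectedSum, tsum_congr hterm, ENNReal.tsum_comm]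
  refine tsum_congr fun r => ?_
  split_ifs with hr
  · rw [ENNReal.tsum_mul_left, ← connectedSum,
      connectedSum_eshiftInv_nest hx1 w (Nat.ne_zero_of_lt hr), eshiftDiff_eq hx hx1]
    ring
  · exact tsum_zero

lemma tsum_eshiftDiff_nest (hx : 0 ≤ x) (hx1 : x < 1) (w : ℕ → ℝ≥0∞) :
    ∑' n, (eshiftDiff x ≻ w) n = ∑' r, eshiftDiff x r * connectedSum x w r := by
  have h := connectedSum_eshiftDiff_nest hx hx1 w 0
  simp only [connectedSum, connector_zero_right, ENNReal.ofReal_one, mul_one] at h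
  rw [h]
  refine tsum_congr fun r => ?_
  split_ifs with hr
  · rfl
  · simp [Nat.eq_zero_of_not_pos hr]

/-- The generating function, in the weight, of the sum formula. -/
lemma tsum_eshiftDiff_nest_nestProd (hx : 0 ≤ x) (hx1 : x < 1) (d : ℕ) :
    ∑' n, (eshiftDiff x ≻ nestProd fun _ : Fin (d + 1) => eshiftInv x) n
      = ∑' r, eshiftDiff x r * eshiftInv 0 r ^ (d + 1) := by
  rw [tsum_eshiftDiff_nest hx hx1]
  refine tsum_congr fun r => ?_
  rcases eq_or_ne r 0 with rfl | hr
  · simp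
  · rw [connectedSum_nestProd_eshiftInv hx1 d hr]

/-- The generating function, in the weight, of Ohno's relation for the index `(2, 1, 2, 1)` and its
dual `(3, 3)`. -/
lemma tsum_eshiftDiff_nest_eshiftInv_nest (hx : 0 ≤ x) (hx1 : x < 1) :
    ∑' n, (eshiftDiff x ≻ eshiftInv x ≻ eshiftDiff x ≻ eshiftInv x) n
      = ∑' n, ((eshiftDiff x * eshiftInv 0) ≻ (eshiftDiff x * eshiftInv 0)) n := by
  have hterm (r : ℕ) :
      eshiftDiff x r * connectedSum x (eshiftInv x ≻ eshiftDiff x ≻ eshiftInv x) r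
        = (eshiftDiff x * eshiftInv 0) r *
          ∑' q, if r < q then (eshiftDiff x * eshiftInv 0) q else 0 := by
    rcases eq_or_ne r 0 with rfl | hr
    · simp
    rw [connectedSum_eshiftInv_nest hx1 _ hr, connectedSum_eshiftDiff_nest hx hx1, ← mul_assoc]
    congr! 3 with q
    split_ifs with hq
    · rw [connectedSum_eshiftInv hx1 (Nat.ne_zero_of_lt hq), Pi.mul_apply]
    · rfl
  rw [tsum_eshiftDiff_nest hx hx1, tsum_congr hterm]
  simpa only [mul_one] using
    (tsum_nest_mul (eshiftDiff x * eshiftInv 0) (eshiftDiff x * eshiftInv 0) fun _ => 1).symm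

end ConnectedSums

section RealSums

lemma hasSum_of_tsum_ofReal_eq {ι κ : Type*} {f : ι → ℝ} {g : κ → ℝ} {s : ℝ} (hf : 0 ≤ f)
    (hg : 0 ≤ g) (h : ∑' i, ENNReal.ofReal (f i) = ∑' k, ENNReal.ofReal (g k)) (hs : HasSum g s) :
    HasSum f s := by
  have hgs : ∑' k, ENNReal.ofReal (g k) = ENNReal.ofReal s := by
    rw [← hs.tsum_eq, ENNReal.ofReal_tsum_of_nonneg hg hs.summable]
  have hsum := ENNReal.hasSum_toReal (h.trans hgs ▸ ENNReal.ofReal_ne_top)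
  rw [← ENNReal.tsum_toReal_eq fun _ => ENNReal.ofReal_ne_top, h, hgs,
    ENNReal.toReal_ofReal (hs.nonneg hg)] at hsum
  simpa only [ENNReal.toReal_ofReal (hf _)] using hsum

lemma nestProd_nonneg {d : ℕ} {f : Fin (d + 1) → ℕ → ℝ} (hf : ∀ i, 0 ≤ f i) : 0 ≤ nestProd f := by
  induction d with
  | zero => exact hf 0
  | succ d ih => exact nest_nonneg (hf 0) (ih fun i => hf i.succ)

lemma ofReal_nestProd {d : ℕ} {f : Fin (d + 1) → ℕ → ℝ} (hf : ∀ i, 0 ≤ f i) (k : ℕ) :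
    ENNReal.ofReal (nestProd f k) = nestProd (fun i k => ENNReal.ofReal (f i k)) k := by
  induction d generalizing k with
  | zero => rfl
  | succ d ih =>
    simp only [nestProd_succ, ofReal_nest (hf 0) (nestProd_nonneg fun i => hf i.succ),
      ih fun i => hf i.succ]

lemma summable_sq_of_nonneg {h : ℕ → ℝ} (hh : Summable h) (h0 : 0 ≤ h) : Summable (h ^ 2) := by
  have hdiag : Function.Injective fun k : ℕ => (k, k) := fun _ _ hk => congrArg Prod.fst hk
  rw [sq]
  exact (hh.mul_of_nonneg hh h0 h0).comp_injective hdiag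

lemma hasSum_nest_self {h : ℕ → ℝ} (hh : Summable h) (h0 : 0 ≤ h) :
    HasSum (h ≻ h) (((∑' k, h k) ^ 2 - ∑' k, h k ^ 2) / 2) := by
  refine (hasSum_iff_tendsto_nat_of_nonneg (nest_nonneg h0 h0) _).2 ?_
  have hlim := ((hh.hasSum.tendsto_sum_nat.pow 2).sub
    (summable_sq_of_nonneg hh h0).hasSum.tendsto_sum_nat).div_const 2
  refine hlim.congr fun n => ?_
  simp only [Pi.pow_apply]
  linear_combination sum_range_sq h n / 2

variable {x : ℝ}

lemma hasSum_shiftDiff_nest_nestProd (hx : 0 ≤ x) (hx1 : x < 1) (d : ℕ) :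
    HasSum (shiftDiff x ≻ nestProd fun _ : Fin (d + 1) => shiftInv x)
      (∑' k, shiftDiff x k * shiftInv 0 k ^ (d + 1)) := by
  have hinv := shiftInv_nonneg hx1
  have hδ := shiftDiff_nonneg hx hx1
  have ha := shiftInv_nonneg one_pos
  refine hasSum_of_tsum_ofReal_eq (nest_nonneg hδ (nestProd_nonneg fun _ => hinv))
    (fun k => mul_nonneg (hδ k) (pow_nonneg (ha k) _)) ?_
    (summable_shiftDiff_mul_pow hx hx1 (d + 1)).hasSum
  simp only [ofReal_nest hδ (nestProd_nonneg fun _ => hinv), ofReal_nestProd fun _ => hinv,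
    ENNReal.ofReal_mul (hδ _), ENNReal.ofReal_pow (ha _)]
  exact tsum_eshiftDiff_nest_nestProd hx hx1 d

lemma hasSum_shiftDiff_nest_shiftInv_nest (hx : 0 ≤ x) (hx1 : x < 1) :
    HasSum (shiftDiff x ≻ shiftInv x ≻ shiftDiff x ≻ shiftInv x)
      (((∑' k, shiftDiff x k * shiftInv 0 k) ^ 2
        - ∑' k, (shiftDiff x k * shiftInv 0 k) ^ 2) / 2) := by
  have hinv := shiftInv_nonneg hx1
  have hδ := shiftDiff_nonneg hx hx1
  have hδa : 0 ≤ shiftDiff x * shiftInv 0 := mul_nonneg hδ (shiftInv_nonneg one_pos)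
  have hδab := nest_nonneg hδ hinv
  refine hasSum_of_tsum_ofReal_eq (nest_nonneg hδ (nest_nonneg hinv hδab)) (nest_nonneg hδa hδa) ?_
    (hasSum_nest_self (by simpa only [pow_one] using summable_shiftDiff_mul_pow hx hx1 1) hδa)
  simp only [ofReal_nest hδ (nest_nonneg hinv hδab), ofReal_nest hinv hδab, ofReal_nest hδ hinv,
    ofReal_nest hδa hδa, Pi.mul_apply, ENNReal.ofReal_mul (hδ _)]
  exact tsum_eshiftDiff_nest_eshiftInv_nest hx hx1

end RealSums

section Derivatives

section TsumDeriv

variable {ι : Type*} {F F' G G' : ℝ → ι → ℝ} {a b x : ℝ}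

lemma summable_deriv_of_monotoneOn
    (hF : ∀ k, ∀ y ∈ Set.Ioo a b, HasDerivAt (fun z => F z k) (F' y k) y)
    (hF0 : ∀ y ∈ Set.Ioo a b, 0 ≤ F' y) (hF' : MonotoneOn F' (Set.Ioo a b))
    (hs : ∀ y ∈ Set.Ioo a b, Summable (F y)) (hx : x ∈ Set.Ioo a b) : Summable (F' x) := by
  obtain ⟨y, hxy, hyb⟩ := exists_between hx.2
  have hy : y ∈ Set.Ioo a b := ⟨hx.1.trans hxy, hyb⟩
  refine .of_nonneg_of_le (hF0 x hx) (fun k => ?_) (((hs y hy).sub (hs x hx)).div_const (y - x))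
  have hmem {z : ℝ} (hz : z ∈ Set.Icc x y) : z ∈ Set.Ioo a b :=
    ⟨hx.1.trans_le hz.1, hz.2.trans_lt hyb⟩
  obtain ⟨z, hz, hslope⟩ := exists_hasDerivAt_eq_slope (fun z => F z k) (fun z => F' z k) hxy
    (fun z hz => (hF k z (hmem hz)).continuousAt.continuousWithinAt)
    fun z hz => hF k z (hmem (Set.Ioo_subset_Icc_self hz))
  rw [← hslope]
  exact hF' hx (hmem (Set.Ioo_subset_Icc_self hz)) hz.1.le k

lemma hasDerivAt_tsum_of_monotoneOn
    (hF : ∀ k, ∀ y ∈ Set.Ioo a b, HasDerivAt (fun z => F z k) (F' y k) y)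
    (hF0 : ∀ y ∈ Set.Ioo a b, 0 ≤ F' y) (hF' : MonotoneOn F' (Set.Ioo a b))
    (hs : ∀ y ∈ Set.Ioo a b, Summable (F y)) (hx : x ∈ Set.Ioo a b) :
    HasDerivAt (fun y => ∑' k, F y k) (∑' k, F' x k) x := by
  obtain ⟨y, hxy, hyb⟩ := exists_between hx.2
  have hy : y ∈ Set.Ioo a b := ⟨hx.1.trans hxy, hyb⟩
  have hmem {z : ℝ} (hz : z ∈ Set.Ioo a y) : z ∈ Set.Ioo a b := ⟨hz.1, hz.2.trans hyb⟩
  refine hasDerivAt_tsum_of_isPreconnected (g := fun k z => F z k) (g' := fun k z => F' z k)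
    (summable_deriv_of_monotoneOn hF hF0 hF' hs hy) isOpen_Ioo isPreconnected_Ioo
    (fun k z hz => hF k z (hmem hz)) (fun k z hz => ?_) ⟨hx.1, hxy⟩ (hs x hx) ⟨hx.1, hxy⟩
  rw [Real.norm_of_nonneg (hF0 z (hmem hz) k)]
  exact hF' (hmem hz) hy hz.2.le k

lemma hasSum_deriv_of_tsum_eq
    (hF : ∀ k, ∀ y ∈ Set.Ioo a b, HasDerivAt (fun z => F z k) (F' y k) y)
    (hF0 : ∀ y ∈ Set.Ioo a b, 0 ≤ F' y) (hF' : MonotoneOn F' (Set.Ioo a b))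
    (hFs : ∀ y ∈ Set.Ioo a b, Summable (F y))
    (hG : ∀ k, ∀ y ∈ Set.Ioo a b, HasDerivAt (fun z => G z k) (G' y k) y)
    (hG0 : ∀ y ∈ Set.Ioo a b, 0 ≤ G' y) (hG' : MonotoneOn G' (Set.Ioo a b))
    (hGs : ∀ y ∈ Set.Ioo a b, Summable (G y))
    (hFG : ∀ y ∈ Set.Ioo a b, ∑' k, F y k = ∑' k, G y k) (hx : x ∈ Set.Ioo a b) :
    HasSum (F' x) (∑' k, G' x k) := by
  have hEq : (fun y => ∑' k, F y k) =ᶠ[𝓝 x] fun y => ∑' k, G y k :=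
    mem_of_superset (isOpen_Ioo.mem_nhds hx) hFG
  rw [← (hasDerivAt_tsum_of_monotoneOn hF hF0 hF' hFs hx).unique
    ((hasDerivAt_tsum_of_monotoneOn hG hG0 hG' hGs hx).congr_of_eventuallyEq hEq)]
  exact (summable_deriv_of_monotoneOn hF hF0 hF' hFs hx).hasSum

end TsumDeriv

variable {x : ℝ}

lemma hasDerivAt_nest {u v : ℝ → ℕ → ℝ} {u' v' : ℕ → ℝ}
    (hu : ∀ k, HasDerivAt (fun y => u y k) (u' k) x)
    (hv : ∀ k, HasDerivAt (fun y => v y k) (v' k) x) (k : ℕ) :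
    HasDerivAt (fun y => (u y ≻ v y) k) ((u' ≻ v x + u x ≻ v') k) x :=
  (hu k).mul (.fun_sum fun j _ => hv j)

lemma hasDerivAt_shiftInv (hx : x < 1) (k : ℕ) :
    HasDerivAt (fun y => shiftInv y k) ((shiftInv x ^ 2) k) x := by
  rcases eq_or_ne k 0 with rfl | hk
  · simpa using hasDerivAt_const x (0 : ℝ)
  · simpa [shiftInv_of_ne_zero _ hk] using
      ((hasDerivAt_id x).const_sub (k : ℝ)).fun_inv (natCast_sub_pos hx hk).ne'

lemma hasDerivAt_shiftDiff (hx : x < 1) (k : ℕ) :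
    HasDerivAt (fun y => shiftDiff y k) ((shiftInv x ^ 2) k) x :=
  (hasDerivAt_shiftInv hx k).sub_const _

/-- The derivative in `x` of `shiftDiff x ≻ shiftInv x ≻ shiftInv x`. -/
noncomputable def derivNest (x : ℝ) : ℕ → ℝ :=
  ((shiftInv x ^ 2) ≻ shiftInv x ≻ shiftInv x)
    + (shiftDiff x ≻ ((shiftInv x ^ 2) ≻ shiftInv x + shiftInv x ≻ shiftInv x ^ 2))

lemma hasDerivAt_shiftDiff_nest (hx : x < 1) (k : ℕ) :
    HasDerivAt (fun y => (shiftDiff y ≻ shiftInv y ≻ shiftInv y) k) (derivNest x k) x :=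
  hasDerivAt_nest (hasDerivAt_shiftDiff hx)
    (hasDerivAt_nest (hasDerivAt_shiftInv hx) (hasDerivAt_shiftInv hx)) k

lemma derivNest_nonneg (hx : 0 ≤ x) (hx1 : x < 1) : 0 ≤ derivNest x := by
  have hinv := shiftInv_nonneg hx1
  have hinv2 := pow_nonneg hinv 2
  exact add_nonneg (nest_nonneg hinv2 (nest_nonneg hinv hinv)) <|
    nest_nonneg (shiftDiff_nonneg hx hx1) (add_nonneg (nest_nonneg hinv2 hinv)
      (nest_nonneg hinv hinv2))

lemma derivNest_monotoneOn : MonotoneOn derivNest (Set.Ioo 0 1) := by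
  intro x ⟨hx, hx1⟩ y ⟨_, hy1⟩ hxy
  have hinv := shiftInv_nonneg hx1
  have hinv2 := pow_nonneg hinv 2
  have hmono := shiftInv_mono hxy hy1
  have hmono2 := pow_le_pow_left₀ hinv hmono 2
  exact add_le_add
    (nest_mono hinv2 (nest_nonneg hinv hinv) hmono2 (nest_mono hinv hinv hmono hmono))
    (nest_mono (shiftDiff_nonneg hx.le hx1)
      (add_nonneg (nest_nonneg hinv2 hinv) (nest_nonneg hinv hinv2)) (sub_le_sub_right hmono _)
      (add_le_add (nest_mono hinv2 hinv hmono2 hmono) (nest_mono hinv hinv2 hmono hmono2)))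

/-- The derivative in `x` of the sum formula of depth three. -/
lemma hasSum_derivNest (hx : 0 < x) (hx1 : x < 1) :
    HasSum (derivNest x) (∑' k, shiftInv x k ^ 2 * shiftInv 0 k ^ 2) := by
  have hformula {y : ℝ} (hy : y ∈ Set.Ioo 0 1) :
      HasSum (shiftDiff y ≻ shiftInv y ≻ shiftInv y) (∑' k, shiftDiff y k * shiftInv 0 k ^ 2) :=
    hasSum_shiftDiff_nest_nestProd hy.1.le hy.2 1
  refine hasSum_deriv_of_tsum_eq (F := fun y => shiftDiff y ≻ shiftInv y ≻ shiftInv y)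
    (F' := derivNest) (G := fun y => shiftDiff y * shiftInv 0 ^ 2)
    (G' := fun y => shiftInv y ^ 2 * shiftInv 0 ^ 2)
    (fun k y hy => hasDerivAt_shiftDiff_nest hy.2 k)
    (fun y hy => derivNest_nonneg hy.1.le hy.2) derivNest_monotoneOn
    (fun y hy => (hformula hy).summable)
    (fun k y hy => (hasDerivAt_shiftDiff hy.2 k).mul_const _)
    (fun y hy => mul_nonneg (pow_nonneg (shiftInv_nonneg hy.2) 2)
      (pow_nonneg (shiftInv_nonneg one_pos) 2)) ?_
    (fun y hy => summable_shiftDiff_mul_pow hy.1.le hy.2 2)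
    (fun y hy => (hformula hy).tsum_eq) ⟨hx, hx1⟩
  intro y hy z hz hyz
  exact mul_le_mul_of_nonneg_right
    (pow_le_pow_left₀ (shiftInv_nonneg hy.2) (shiftInv_mono hyz hz.2) 2)
    (pow_nonneg (shiftInv_nonneg one_pos) 2)

lemma shiftDiff_nest_mul_sum_range_succ (hx0 : x ≠ 0) (hx : x < 1) (m : ℕ) :
    (shiftDiff x ≻ shiftInv x ≻ shiftInv x) m * ∑ j ∈ range (m + 1), shiftInv x j
      = 3 * (shiftDiff x ≻ shiftInv x ≻ shiftInv x ≻ shiftInv x) m + derivNest x m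
        - x⁻¹ * (shiftDiff x ≻ shiftInv x ≻ shiftInv x) m := by
  have hstuffle := sum_range_nest_mul_sum_range (shiftInv x) m
  have hδ := congrFun (shiftInv_mul_shiftInv_zero hx0 hx) m
  have hsub : shiftDiff x m = shiftInv x m - shiftInv 0 m := rfl
  simp only [Pi.mul_apply, Pi.smul_apply, smul_eq_mul] at hδ
  simp only [derivNest, nest_apply (shiftDiff x), nest_apply (shiftInv x ^ 2) (_ ≻ _),
    Pi.add_apply, Pi.pow_apply, sum_range_succ, sum_add_distrib]
  linear_combination shiftDiff x m * hstuffle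
    + (∑ j ∈ range m, (shiftInv x ≻ shiftInv x) j) * (shiftInv x m * hsub - hδ)

lemma hasSum_shiftDiff_nest_mul_sum_range_succ (hx : 0 < x) (hx1 : x < 1) :
    HasSum (fun m => (shiftDiff x ≻ shiftInv x ≻ shiftInv x) m * ∑ j ∈ range (m + 1), shiftInv x j)
      (3 * (∑' k, shiftDiff x k * shiftInv 0 k ^ 3)
        + ∑' k, shiftInv x k ^ 2 * shiftInv 0 k ^ 2
        - x⁻¹ * ∑' k, shiftDiff x k * shiftInv 0 k ^ 2) := by
  simp only [shiftDiff_nest_mul_sum_range_succ hx.ne' hx1]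
  exact (((hasSum_shiftDiff_nest_nestProd hx.le hx1 2).mul_left 3).add
    (hasSum_derivNest hx hx1)).sub ((hasSum_shiftDiff_nest_nestProd hx.le hx1 1).mul_left x⁻¹)

end Derivatives

section ConvolutionSubNest

lemma sum_range_nest {R : Type*} [CommRing R] (u v : ℕ → R) (K : ℕ) :
    ∑ N ∈ range K, (u ≻ v) N
      = ∑ m ∈ range K, v m * (∑ j ∈ range K, u j - ∑ j ∈ range (m + 1), u j) := by
  induction K with
  | zero => simp
  | succ K ih =>
    have hstep (m : ℕ) : v m * (∑ j ∈ range (K + 1), u j - ∑ j ∈ range (m + 1), u j)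
        = v m * (∑ j ∈ range K, u j - ∑ j ∈ range (m + 1), u j) + u K * v m := by
      rw [sum_range_succ u K]
      ring
    rw [sum_range_succ, ih, sum_range_succ _ K, sub_self, mul_zero, add_zero, nest_apply, mul_sum,
      ← sum_add_distrib]
    exact sum_congr rfl fun m _ => (hstep m).symm

lemma sum_range_antidiagonal_sub_nest {R : Type*} [CommRing R] (u v : ℕ → R) (K : ℕ) :
    ∑ N ∈ range K, (∑ p ∈ antidiagonal N, u p.1 * v p.2 - (u ≻ v) N)
      = ∑ m ∈ range K, v m * (∑ j ∈ range (m + 1), u j - ∑ i ∈ range m, u (K - m + i)) := by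
  have hconv : ∑ N ∈ range K, ∑ p ∈ antidiagonal N, u p.1 * v p.2
      = ∑ m ∈ range K, v m * ∑ j ∈ range (K - m), u j := by
    simp only [← Nat.sum_antidiagonal_swap (f := fun p => u p.1 * v p.2),
      Nat.sum_antidiagonal_eq_sum_range_succ_mk, Prod.swap, mul_sum]
    rw [sum_range_diag_flip K fun m j => u j * v m]
    simp only [mul_comm]
  rw [sum_sub_distrib, hconv, sum_range_nest, ← sum_sub_distrib]
  refine sum_congr rfl fun m hm => ?_
  have hsplit := sum_range_add u (K - m) m
  rw [Nat.sub_add_cancel (mem_range.1 hm).le] at hsplit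
  linear_combination -v m * hsplit

lemma tendsto_sum_range_antidiagonal_sub_nest {u v : ℕ → ℝ} (hu : 0 ≤ u) (hv : 0 ≤ v)
    (hanti : ∀ {m n}, m ≠ 0 → m ≤ n → u n ≤ u m) (hlim : Tendsto u atTop (𝓝 0))
    (hs : Summable fun m => v m * ∑ j ∈ range (m + 1), u j) :
    Tendsto (fun K => ∑ N ∈ range K, (∑ p ∈ antidiagonal N, u p.1 * v p.2 - (u ≻ v) N)) atTop
      (𝓝 (∑' m, v m * ∑ j ∈ range (m + 1), u j)) := by
  refine Tendsto.congr (fun K =>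
    ((sum_range_antidiagonal_sub_nest u v K).trans (sum_eq_tsum_indicator _ _)).symm) ?_
  refine tendsto_tsum_of_dominated_convergence hs (fun m => ?_) (.of_forall fun K m => ?_)
  · have htail : Tendsto (fun K => ∑ i ∈ range m, u (K - m + i)) atTop (𝓝 0) := by
      rw [← sum_const_zero (s := range m)]
      exact tendsto_finsetSum _ fun i _ => hlim.comp <|
        (tendsto_add_atTop_nat i).comp (tendsto_sub_atTop_nat m)
    have h := (htail.const_sub (∑ j ∈ range (m + 1), u j)).const_mul (v m)
    rw [sub_zero] at h
    refine h.congr' ?_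
    filter_upwards [eventually_gt_atTop m] with K hK
    rw [Set.indicator_of_mem (mem_coe.2 (mem_range.2 hK))]
  · by_cases hm : m < K
    · have htail : ∑ i ∈ range m, u (K - m + i) ≤ ∑ j ∈ range (m + 1), u j := by
        rw [sum_range_succ']
        exact (sum_le_sum fun i _ => hanti i.succ_ne_zero (by lia)).trans
          (le_add_of_nonneg_right (hu 0))
      rw [Set.indicator_of_mem (mem_coe.2 (mem_range.2 hm)),
        Real.norm_of_nonneg (mul_nonneg (hv m) (sub_nonneg.2 htail))]
      exact mul_le_mul_of_nonneg_left (sub_le_self _ (sum_nonneg fun i _ => hu _)) (hv m)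
    · rw [Set.indicator_of_notMem (by simpa using hm), norm_zero]
      exact mul_nonneg (hv m) (sum_nonneg fun j _ => hu j)

end ConvolutionSubNest

section WeightedNest

variable {x : ℝ}

lemma weightedNest_nonneg (hx : 0 ≤ x) (h2x : 2 * x < 1) : 0 ≤ weightedNest x := by
  have hx1 : x < 1 := by linarith
  have hinv := shiftInv_nonneg hx1
  exact add_nonneg
    (nest_nonneg (shiftDiff_nonneg (by linarith) h2x) (nest_nonneg hinv (nest_nonneg hinv hinv)))
    (nsmul_nonneg (nest_nonneg (shiftDiff_nonneg hx hx1)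
      (nest_nonneg hinv (nest_nonneg (shiftInv_nonneg h2x) hinv))) 2)

lemma weightedNest_apply (h2x : 2 * x < 1) (N : ℕ) :
    weightedNest x N =
      (∑ p ∈ antidiagonal N, shiftInv x p.1 * (shiftDiff x ≻ shiftInv x ≻ shiftInv x) p.2
        - (shiftInv x ≻ shiftDiff x ≻ shiftInv x ≻ shiftInv x) N)
      - (∑ p ∈ antidiagonal N,
          (shiftDiff x ≻ shiftInv x) p.1 * (shiftDiff x ≻ shiftInv x) p.2) / 2
      + (shiftDiff x ≻ shiftInv x ≻ shiftDiff x ≻ shiftInv x) N := by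
  have h := congrArg (PowerSeries.coeff N) (two_mul_mk_weightedNest h2x)
  simp only [two_mul (_ : PowerSeries ℝ), sq, map_add, map_sub, PowerSeries.coeff_mul,
    PowerSeries.coeff_mk] at h
  linear_combination h / 2

lemma hasSum_sum_antidiagonal_mul_self {g : ℕ → ℝ} {s : ℝ} (hg0 : 0 ≤ g) (hg : HasSum g s) :
    HasSum (fun N => ∑ p ∈ antidiagonal N, g p.1 * g p.2) (s ^ 2) := by
  have hmul := hg.summable.mul_of_nonneg hg.summable hg0 hg0
  rw [sq, ← hg.tsum_eq, hg.summable.tsum_mul_tsum_eq_tsum_sum_antidiagonal hg.summable hmul]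
  exact (summable_sum_mul_antidiagonal_of_summable_mul hmul).hasSum

/-- The generating function, in the weight, of the right-hand side of the theorem; see
`hasSum_weightedTerm_expansion`. -/
noncomputable def weightedTerm (x : ℝ) (k : ℕ) : ℝ :=
  3 * (shiftDiff x k * shiftInv 0 k ^ 3) + shiftInv x k ^ 2 * shiftInv 0 k ^ 2
    - x⁻¹ * (shiftDiff x k * shiftInv 0 k ^ 2) - (shiftDiff x k * shiftInv 0 k) ^ 2 / 2

lemma hasSum_weightedTerm (hx : 0 < x) (hx1 : x < 1) :
    HasSum (weightedTerm x)
      (3 * (∑' k, shiftDiff x k * shiftInv 0 k ^ 3)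
        + ∑' k, shiftInv x k ^ 2 * shiftInv 0 k ^ 2
        - x⁻¹ * (∑' k, shiftDiff x k * shiftInv 0 k ^ 2)
        - (∑' k, (shiftDiff x k * shiftInv 0 k) ^ 2) / 2) := by
  have hδ := shiftDiff_nonneg hx.le hx1
  have ha := shiftInv_nonneg one_pos
  have hδa : Summable (shiftDiff x * shiftInv 0) := by
    simpa only [pow_one] using summable_shiftDiff_mul_pow hx.le hx1 1
  have hab : Summable (shiftInv x * shiftInv 0) := by
    rw [shiftInv_mul_shiftInv_zero hx.ne' hx1]
    exact (summable_shiftDiff hx.le hx1).mul_left x⁻¹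
  have hab2 := summable_sq_of_nonneg hab (mul_nonneg (shiftInv_nonneg hx1) ha)
  rw [mul_pow] at hab2
  exact ((((summable_shiftDiff_mul_pow hx.le hx1 3).hasSum.mul_left 3).add hab2.hasSum).sub
    ((summable_shiftDiff_mul_pow hx.le hx1 2).hasSum.mul_left x⁻¹)).sub
    ((summable_sq_of_nonneg hδa (mul_nonneg hδ ha)).hasSum.div_const 2)

lemma hasSum_weightedNest (hx : 0 < x) (h2x : 2 * x < 1) :
    HasSum (weightedNest x) (∑' k, weightedTerm x k) := by
  have hx1 : x < 1 := by linarith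
  have hinv := shiftInv_nonneg hx1
  have hδ := shiftDiff_nonneg hx.le hx1
  have hstuffle := hasSum_shiftDiff_nest_mul_sum_range_succ hx hx1
  have hconv := tendsto_sum_range_antidiagonal_sub_nest hinv
    (nest_nonneg hδ (nest_nonneg hinv hinv)) (shiftInv_anti hx1) (tendsto_shiftInv x)
    hstuffle.summable
  have hsq := hasSum_sum_antidiagonal_mul_self (nest_nonneg hδ hinv)
    (hasSum_shiftDiff_nest_nestProd hx.le hx1 0)
  have hohno := hasSum_shiftDiff_nest_shiftInv_nest hx.le hx1
  rw [hstuffle.tsum_eq] at hconv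
  rw [hasSum_iff_tendsto_nat_of_nonneg (weightedNest_nonneg hx.le h2x)]
  convert (hconv.sub (hsq.tendsto_sum_nat.div_const 2)).add hohno.tendsto_sum_nat using 1
  · ext K
    rw [sum_congr rfl fun N _ => weightedNest_apply h2x N, sum_add_distrib, sum_sub_distrib,
      sum_div]
  · rw [(hasSum_weightedTerm hx hx1).tsum_eq]
    simp only [zero_add, pow_one]
    congr 1
    ring

/-- The contributions of the four summands of `weightedTerm` add up to
`3 + (n + 2) - 1 - n / 2 = (n + 8) / 2`. -/
lemma hasSum_weightedTerm_expansion (hx : 0 < x) (hx1 : x < 1) (k : ℕ) :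
    HasSum (fun n : ℕ => ((n : ℝ) + 8) / 2 * shiftInv 0 k ^ (n + 5) * x ^ (n + 1))
      (weightedTerm x k) := by
  rcases eq_or_ne k 0 with rfl | hk
  · simp [weightedTerm]
  have hkx := natCast_sub_pos hx1 hk
  have hk0 : (0 : ℝ) < k := by simpa using natCast_sub_pos one_pos hk
  have hr : ‖x / k‖ < 1 := by
    rw [Real.norm_of_nonneg (by positivity), div_lt_one hk0]
    linarith
  have hgeom := (hasSum_coe_mul_geometric_of_norm_lt_one hr).mul_right (x / k ^ 5 / 2)
  have hgeom' := (hasSum_geometric_of_norm_lt_one hr).mul_right (4 * (x / k ^ 5))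
  have hval : weightedTerm x k
      = x / k / (1 - x / k) ^ 2 * (x / k ^ 5 / 2) + (1 - x / k)⁻¹ * (4 * (x / k ^ 5)) := by
    have h1 : 1 - x / k = (k - x) / k := by field_simp
    simp only [weightedTerm, shiftDiff, Pi.sub_apply, shiftInv_of_ne_zero _ hk, h1, sub_zero]
    field_simp
    ring
  rw [hval]
  refine (hgeom.add hgeom').congr_fun fun n => ?_
  rw [shiftInv_of_ne_zero 0 hk, sub_zero, one_div_pow, div_pow]
  field_simp
  ring

end WeightedNest

section GeneratingFunctions

lemma tsum_tsum_eq_tsum_sum_range (f : ℕ → ℕ → ℝ≥0∞) :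
    ∑' a, ∑' b, f a b = ∑' n, ∑ a ∈ range (n + 1), f a (n - a) := by
  rw [← ENNReal.tsum_prod, ← (HasAntidiagonal.sigmaAntidiagonalEquivProd (A := ℕ)).tsum_eq,
    ENNReal.tsum_sigma']
  refine tsum_congr fun n => ?_
  rw [← Nat.sum_antidiagonal_eq_sum_range_succ f, ← Finset.tsum_subtype]
  rfl

lemma tsum_four_eq_tsum_sum_range (f : ℕ → ℕ → ℕ → ℕ → ℝ≥0∞) :
    ∑' a, ∑' b, ∑' c, ∑' d, f a b c d =
      ∑' n, ∑ a ∈ range (n + 1), ∑ b ∈ range (n - a + 1), ∑ c ∈ range (n - a - b + 1),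
        f a b c (n - a - b - c) := by
  simp only [tsum_tsum_eq_tsum_sum_range]

lemma mul_nest_mul {R : Type*} [CommSemiring R] (c d : R) (u v : ℕ → R) :
    ((fun k => c * u k) ≻ fun k => d * v k) = fun k => c * d * (u ≻ v) k := by
  ext k
  rw [nest_apply, nest_apply, ← mul_sum, mul_mul_mul_comm]

lemma tsum_nest_nest_nest {ι : Type*} (u₀ u₁ u₂ u₃ : ι → ℕ → ℝ≥0∞) :
    ∑' a, ∑' b, ∑' c, ∑' d, ∑' k, (u₀ a ≻ u₁ b ≻ u₂ c ≻ u₃ d) k =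
      ∑' k, ((fun k => ∑' a, u₀ a k) ≻ (fun k => ∑' b, u₁ b k) ≻ (fun k => ∑' c, u₂ c k) ≻
        fun k => ∑' d, u₃ d k) k := by
  have h (k : ℕ) : ∑' a, ∑' b, ∑' c, ∑' d, (u₀ a ≻ u₁ b ≻ u₂ c ≻ u₃ d) k =
      ((fun k => ∑' a, u₀ a k) ≻ (fun k => ∑' b, u₁ b k) ≻ (fun k => ∑' c, u₂ c k) ≻
        fun k => ∑' d, u₃ d k) k := by
    simp only [tsum_nest_left, tsum_nest_right]
  refine Eq.symm ((tsum_congr h).symm.trans ?_)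
  rw [ENNReal.tsum_comm]
  refine tsum_congr fun a => ?_
  rw [ENNReal.tsum_comm]
  refine tsum_congr fun b => ?_
  rw [ENNReal.tsum_comm]
  exact tsum_congr fun c => ENNReal.tsum_comm

/-- The multiple zeta value with values in `ℝ≥0∞`; see `mzv_eq_toReal_emzv`. -/
noncomputable def emzv {d : ℕ} (s : Fin (d + 1) → ℕ) : ℝ≥0∞ :=
  ∑' n, nestProd (fun i k => eshiftInv 0 k ^ s i) n

lemma mzv_eq_toReal_emzv {d : ℕ} {s : Fin (d + 1) → ℕ} (hs : ∀ i, s i ≠ 0) :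
    mzv s = (emzv s).toReal := by
  have hf (i : Fin (d + 1)) : eshiftInv 0 0 ^ s i = 0 := by
    rw [eshiftInv_apply_zero, zero_pow (hs i)]
  rw [emzv, ← tsum_decreasingTuples_prod (f := fun i k => eshiftInv 0 k ^ s i) hf,
    ENNReal.tsum_toReal_eq fun k => ENNReal.prod_ne_top fun i _ => by finiteness]
  refine tsum_congr fun k => ?_
  rw [ENNReal.toReal_prod]
  refine prod_congr rfl fun i _ => ?_
  rw [ENNReal.toReal_pow, ENNReal.toReal_ofReal (shiftInv_nonneg one_pos _),
    shiftInv_of_ne_zero 0 (k.2.2 i).ne', sub_zero, one_div_pow]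

variable {x : ℝ}

lemma tsum_pow_mul_eshiftInv_zero_pow (hx : 0 ≤ x) (hx1 : x < 1) (k : ℕ) :
    ∑' n : ℕ, ENNReal.ofReal x ^ n * eshiftInv 0 k ^ (n + 1) = eshiftInv x k := by
  rcases eq_or_ne k 0 with rfl | hk
  · simp
  have ha : 0 ≤ shiftInv 0 k := shiftInv_nonneg one_pos k
  have hkx := natCast_sub_pos hx1 hk
  have hlt : x * shiftInv 0 k < 1 :=
    (mul_le_of_le_one_right hx (shiftInv_zero_le_one k)).trans_lt hx1
  have hsum := (hasSum_geometric_of_lt_one (mul_nonneg hx ha) hlt).mul_left (shiftInv 0 k)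
  have hval : shiftInv 0 k * (1 - x * shiftInv 0 k)⁻¹ = shiftInv x k := by
    have : (k : ℝ) ≠ 0 := Nat.cast_ne_zero.2 hk
    simp only [shiftInv_of_ne_zero _ hk, sub_zero]
    field_simp
  rw [hval] at hsum
  simp only [eshiftInv]
  rw [← hsum.tsum_eq, ENNReal.ofReal_tsum_of_nonneg (fun n => by positivity) hsum.summable]
  refine tsum_congr fun n => ?_
  rw [← ENNReal.ofReal_pow hx, ← ENNReal.ofReal_pow ha, ← ENNReal.ofReal_mul (by positivity)]
  congr 1
  ring

lemma tsum_pow_mul_eshiftInv_zero_pow_succ (hx : 0 ≤ x) (hx1 : x < 1) (k : ℕ) :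
    ∑' n : ℕ, ENNReal.ofReal x ^ (n + 1) * eshiftInv 0 k ^ (n + 2) = eshiftDiff x k := by
  rw [eshiftDiff_eq hx hx1, mul_right_comm, ← tsum_pow_mul_eshiftInv_zero_pow hx hx1,
    ← ENNReal.tsum_mul_left]
  exact tsum_congr fun n => by ring

lemma tsum_emzv_four {y₀ y₁ y₂ y₃ : ℝ} (hy₀ : y₀ ∈ Set.Ico 0 1) (hy₁ : y₁ ∈ Set.Ico 0 1)
    (hy₂ : y₂ ∈ Set.Ico 0 1) (hy₃ : y₃ ∈ Set.Ico 0 1) :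
    ∑' (a : ℕ) (b : ℕ) (c : ℕ) (d : ℕ),
      ENNReal.ofReal y₀ ^ (a + 1) * (ENNReal.ofReal y₁ ^ b * (ENNReal.ofReal y₂ ^ c *
        ENNReal.ofReal y₃ ^ d)) * emzv ![a + 2, b + 1, c + 1, d + 1] =
      ∑' k, ENNReal.ofReal ((shiftDiff y₀ ≻ shiftInv y₁ ≻ shiftInv y₂ ≻ shiftInv y₃) k) := by
  have h₁ := shiftInv_nonneg hy₁.2
  have h₂ := shiftInv_nonneg hy₂.2
  have h₃ := shiftInv_nonneg hy₃.2
  simp only [ofReal_nest (shiftDiff_nonneg hy₀.1 hy₀.2) (nest_nonneg h₁ (nest_nonneg h₂ h₃)),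
    ofReal_nest h₁ (nest_nonneg h₂ h₃), ofReal_nest h₂ h₃,
    ← tsum_pow_mul_eshiftInv_zero_pow_succ hy₀.1 hy₀.2,
    ← tsum_pow_mul_eshiftInv_zero_pow hy₁.1 hy₁.2, ← tsum_pow_mul_eshiftInv_zero_pow hy₂.1 hy₂.2,
    ← tsum_pow_mul_eshiftInv_zero_pow hy₃.1 hy₃.2]
  rw [← tsum_nest_nest_nest]
  simp only [mul_nest_mul, ENNReal.tsum_mul_left]
  rfl

/-- The left-hand side of the theorem in weight `n + 5`, with values in `ℝ≥0∞` and all indices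
shifted to start at `0`. -/
noncomputable def weightedSum (n : ℕ) : ℝ≥0∞ :=
  ∑ a ∈ range (n + 1), ∑ b ∈ range (n - a + 1), ∑ c ∈ range (n - a - b + 1),
    (2 ^ (a + 1) + 2 ^ (c + 1)) * emzv ![a + 2, b + 1, c + 1, n - a - b - c + 1]

lemma tsum_pow_mul_weightedSum_eq_tsum_emzv (t : ℝ≥0∞) :
    ∑' n, t ^ (n + 1) * weightedSum n =
      ∑' (a : ℕ) (b : ℕ) (c : ℕ) (d : ℕ),
        ((2 * t) ^ (a + 1) * (t ^ b * (t ^ c * t ^ d)) * emzv ![a + 2, b + 1, c + 1, d + 1]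
          + 2 * (t ^ (a + 1) * (t ^ b * ((2 * t) ^ c * t ^ d))
              * emzv ![a + 2, b + 1, c + 1, d + 1])) := by
  rw [tsum_four_eq_tsum_sum_range]
  refine tsum_congr fun n => ?_
  simp only [weightedSum, mul_sum]
  refine sum_congr rfl fun a ha => sum_congr rfl fun b hb => sum_congr rfl fun c hc => ?_
  have hn : n + 1 = a + 1 + b + c + (n - a - b - c) := by
    simp only [mem_range] at ha hb hc
    omega
  rw [hn]
  ring

lemma tsum_pow_mul_weightedSum (hx : 0 ≤ x) (h2x : 2 * x < 1) :
    ∑' n, ENNReal.ofReal x ^ (n + 1) * weightedSum n =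
      ∑' k, ENNReal.ofReal (weightedNest x k) := by
  have hx1 : x ∈ Set.Ico 0 1 := ⟨hx, by linarith⟩
  have hx2 : 2 * x ∈ Set.Ico 0 1 := ⟨by linarith, h2x⟩
  have hinv := shiftInv_nonneg hx1.2
  have h₁ := nest_nonneg (shiftDiff_nonneg hx2.1 hx2.2) (nest_nonneg hinv (nest_nonneg hinv hinv))
  have h₂ := nest_nonneg (shiftDiff_nonneg hx hx1.2)
    (nest_nonneg hinv (nest_nonneg (shiftInv_nonneg h2x) hinv))
  have htwo : 2 * ENNReal.ofReal x = ENNReal.ofReal (2 * x) := by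
    rw [ENNReal.ofReal_mul zero_le_two, ENNReal.ofReal_ofNat]
  rw [tsum_pow_mul_weightedSum_eq_tsum_emzv, htwo]
  simp only [ENNReal.tsum_add, ENNReal.tsum_mul_left (a := 2)]
  rw [tsum_emzv_four hx2 hx1 hx1 hx1, tsum_emzv_four hx1 hx1 hx2 hx1, ← ENNReal.tsum_mul_left,
    ← ENNReal.tsum_add]
  refine tsum_congr fun k => ?_
  rw [weightedNest, Pi.add_apply, ENNReal.ofReal_add (h₁ k) (nsmul_nonneg h₂ 2 k), Pi.smul_apply,
    ENNReal.ofReal_nsmul, nsmul_eq_mul, Nat.cast_ofNat]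

lemma weightedTerm_nonneg (hx : 0 < x) (hx1 : x < 1) : 0 ≤ weightedTerm x := fun k =>
  (hasSum_weightedTerm_expansion hx hx1 k).nonneg fun n => by
    have : 0 ≤ shiftInv 0 k := shiftInv_nonneg one_pos k
    positivity

lemma tsum_pow_mul_emzv_one (hx : 0 < x) (hx1 : x < 1) :
    ∑' n : ℕ, ENNReal.ofReal x ^ (n + 1) * (ENNReal.ofReal ((n + 8) / 2) * emzv ![n + 5]) =
      ∑' k, ENNReal.ofReal (weightedTerm x k) := by
  simp only [emzv, ← ENNReal.tsum_mul_left]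
  rw [ENNReal.tsum_comm]
  refine tsum_congr fun k => ?_
  have ha : 0 ≤ shiftInv 0 k := shiftInv_nonneg one_pos k
  have h := hasSum_weightedTerm_expansion hx hx1 k
  rw [← h.tsum_eq, ENNReal.ofReal_tsum_of_nonneg (fun n => by positivity) h.summable]
  refine tsum_congr fun n => ?_
  rw [ENNReal.ofReal_mul (by positivity), ENNReal.ofReal_mul (by positivity),
    ENNReal.ofReal_pow hx.le, ENNReal.ofReal_pow ha, mul_comm]
  rfl

end GeneratingFunctions

section CoefficientComparison

lemma eq_zero_of_hasSum_mul_pow {c : ℕ → ℝ} {r : ℝ} (hr : 0 < r)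
    (h : ∀ x, 0 < x → x < r → HasSum (fun n => c n * x ^ n) 0) : c = 0 := by
  set p := FormalMultilinearSeries.ofScalars ℝ c with hp
  have hradius : 0 < p.radius := by
    have hsum := (h (r / 2) (by linarith) (by linarith)).summable
    refine (ENNReal.coe_pos.2 (Real.toNNReal_pos.2 (half_pos hr))).trans_le
      (p.le_radius_of_summable ?_)
    simpa [hp, FormalMultilinearSeries.ofScalars_norm, Real.coe_toNNReal _ (half_pos hr).le,
      abs_of_pos (half_pos hr)] using hsum.abs
  have hps := (p.hasFPowerSeriesOnBall hradius).hasFPowerSeriesAt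
  have hzero : ∀ᶠ x in 𝓝[>] 0, p.sum x = 0 := by
    filter_upwards [Ioo_mem_nhdsGT hr] with x hx
    exact (FormalMultilinearSeries.ofScalars_sum_eq c x).trans (h x hx.1 hx.2).tsum_eq
  refine (FormalMultilinearSeries.ofScalars_series_eq_zero ℝ).1 (hps.eq_zero_of_eventually ?_)
  exact hps.analyticAt.frequently_zero_iff_eventually_zero.1
    (hzero.frequently.filter_mono (nhdsGT_le_nhdsNE 0))

lemma ne_top_of_tsum_pow_mul_ne_top {f : ℕ → ℝ≥0∞} {x : ℝ} (hx : 0 < x)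
    (hf : ∑' n, ENNReal.ofReal x ^ (n + 1) * f n ≠ ∞) (n : ℕ) : f n ≠ ∞ := fun hn => by
  have h := ENNReal.ne_top_of_tsum_ne_top hf n
  rw [hn, ENNReal.mul_top (pow_ne_zero _ (ENNReal.ofReal_pos.2 hx).ne')] at h
  exact h rfl

lemma hasSum_toReal_mul_pow {f : ℕ → ℝ≥0∞} {x : ℝ} (hx : 0 < x)
    (hf : ∑' n, ENNReal.ofReal x ^ (n + 1) * f n ≠ ∞) :
    HasSum (fun n => (f n).toReal * x ^ n)
      ((∑' n, ENNReal.ofReal x ^ (n + 1) * f n).toReal / x) := by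
  rw [ENNReal.tsum_toReal_eq (ENNReal.ne_top_of_tsum_ne_top hf)]
  refine ((ENNReal.hasSum_toReal hf).div_const x).congr_fun fun n => ?_
  rw [ENNReal.toReal_mul, ENNReal.toReal_pow, ENNReal.toReal_ofReal hx.le]
  field_simp
  ring

lemma eq_of_tsum_pow_mul_eq {f g : ℕ → ℝ≥0∞} {r : ℝ} (hr : 0 < r)
    (hfg : ∀ x, 0 < x → x < r →
      ∑' n, ENNReal.ofReal x ^ (n + 1) * f n = ∑' n, ENNReal.ofReal x ^ (n + 1) * g n)
    (hf : ∀ x, 0 < x → x < r → ∑' n, ENNReal.ofReal x ^ (n + 1) * f n ≠ ∞) : f = g := by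
  have hg : ∀ x, 0 < x → x < r → ∑' n, ENNReal.ofReal x ^ (n + 1) * g n ≠ ∞ :=
    fun x hx hxr => hfg x hx hxr ▸ hf x hx hxr
  have hzero : (fun n => (f n).toReal - (g n).toReal) = 0 := by
    refine eq_zero_of_hasSum_mul_pow hr fun x hx hxr => ?_
    have h := (hasSum_toReal_mul_pow hx (hf x hx hxr)).sub (hasSum_toReal_mul_pow hx (hg x hx hxr))
    rw [hfg x hx hxr, sub_self] at h
    simpa only [sub_mul] using h
  ext1 n
  have hr2 : r / 2 < r := half_lt_self hr
  exact (ENNReal.toReal_eq_toReal_iff'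
    (ne_top_of_tsum_pow_mul_ne_top (half_pos hr) (hf _ (half_pos hr) hr2) n)
    (ne_top_of_tsum_pow_mul_ne_top (half_pos hr) (hg _ (half_pos hr) hr2) n)).1
    (sub_eq_zero.1 (congrFun hzero n))

lemma tsum_weightedNest_eq_tsum_weightedTerm {x : ℝ} (hx : 0 < x) (h2x : 2 * x < 1) :
    ∑' k, ENNReal.ofReal (weightedNest x k) = ENNReal.ofReal (∑' k, weightedTerm x k) := by
  have h := hasSum_weightedNest hx h2x
  rw [← h.tsum_eq, ENNReal.ofReal_tsum_of_nonneg (weightedNest_nonneg hx.le h2x) h.summable]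

lemma tsum_pow_mul_weightedSum_ne_top {x : ℝ} (hx : 0 < x) (h2x : 2 * x < 1) :
    ∑' n, ENNReal.ofReal x ^ (n + 1) * weightedSum n ≠ ∞ := by
  rw [tsum_pow_mul_weightedSum hx.le h2x, tsum_weightedNest_eq_tsum_weightedTerm hx h2x]
  exact ENNReal.ofReal_ne_top

lemma weightedSum_ne_top (n : ℕ) : weightedSum n ≠ ∞ :=
  ne_top_of_tsum_pow_mul_ne_top (x := 1 / 4) (by norm_num)
    (tsum_pow_mul_weightedSum_ne_top (by norm_num) (by norm_num)) n

lemma weightedSum_eq (n : ℕ) :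
    weightedSum n = ENNReal.ofReal ((n + 8) / 2) * emzv ![n + 5] := by
  refine congrFun (g := fun n : ℕ => ENNReal.ofReal ((n + 8) / 2) * emzv ![n + 5])
    (eq_of_tsum_pow_mul_eq (r := 1 / 2) one_half_pos (fun x hx hx2 => ?_)
      fun x hx hx2 => tsum_pow_mul_weightedSum_ne_top hx (by linarith)) n
  have hx1 : x < 1 := by linarith
  have h2x : 2 * x < 1 := by linarith
  rw [tsum_pow_mul_weightedSum hx.le h2x, tsum_weightedNest_eq_tsum_weightedTerm hx h2x,
    tsum_pow_mul_emzv_one hx hx1, ENNReal.ofReal_tsum_of_nonneg (weightedTerm_nonneg hx hx1)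
      (hasSum_weightedTerm hx hx1).summable]

lemma toReal_weightedSum (n : ℕ) :
    (weightedSum n).toReal =
      ∑ a ∈ range (n + 1), ∑ b ∈ range (n - a + 1), ∑ c ∈ range (n - a - b + 1),
        ((2 : ℝ) ^ (a + 1) + 2 ^ (c + 1)) * mzv ![a + 2, b + 1, c + 1, n - a - b - c + 1] := by
  have ha := ENNReal.sum_ne_top.1 (weightedSum_ne_top n)
  rw [weightedSum, ENNReal.toReal_sum ha]
  refine sum_congr rfl fun a ha' => ?_
  have hb := ENNReal.sum_ne_top.1 (ha a ha')
  rw [ENNReal.toReal_sum hb]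
  refine sum_congr rfl fun b hb' => ?_
  rw [ENNReal.toReal_sum (ENNReal.sum_ne_top.1 (hb b hb'))]
  refine sum_congr rfl fun c _ => ?_
  have hs : ∀ i, ![a + 2, b + 1, c + 1, n - a - b - c + 1] i ≠ 0 := by
    simp [Fin.forall_fin_succ]
  rw [ENNReal.toReal_mul, ← mzv_eq_toReal_emzv hs,
    ENNReal.toReal_add (by finiteness) (by finiteness)]
  simp only [ENNReal.toReal_pow, ENNReal.toReal_ofNat]

lemma sum_weighted_mzv_eq (n : ℕ) :
    ∑ a ∈ range (n + 1), ∑ b ∈ range (n - a + 1), ∑ c ∈ range (n - a - b + 1),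
        ((2 : ℝ) ^ (a + 1) + 2 ^ (c + 1)) * mzv ![a + 2, b + 1, c + 1, n - a - b - c + 1] =
      (n + 8) / 2 * mzv ![n + 5] := by
  rw [← toReal_weightedSum, weightedSum_eq, ENNReal.toReal_mul,
    ENNReal.toReal_ofReal (by positivity), mzv_eq_toReal_emzv (by simp)]

lemma sum_Icc_add_eq_sum_range {M : Type*} [AddCommMonoid M] (f : ℕ → M) (s m : ℕ) :
    ∑ i ∈ Icc s (m + s), f i = ∑ i ∈ range (m + 1), f (i + s) := by
  rw [range_eq_Ico, sum_Ico_add' f 0 (m + 1) s, zero_add, add_right_comm]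
  rfl

end CoefficientComparison

end MultipleZeta

theorem weighted_sum_depth4_2a1_plus_2c (w : ℕ) (hw : 5 ≤ w) :
    (∑ a ∈ Finset.Icc 2 (w - 3), ∑ b ∈ Finset.Icc 1 (w - a - 2),
      ∑ c ∈ Finset.Icc 1 (w - a - b - 1),
        ((2 : ℝ) ^ (a - 1) + (2 : ℝ) ^ c) * mzv ![a, b, c, w - a - b - c])
    = (((w : ℝ) + 3) / 2) * mzv ![w] := by
  obtain ⟨n, rfl⟩ : ∃ n, w = n + 5 := ⟨w - 5, by omega⟩
  rw [show ((n + 5 : ℕ) : ℝ) + 3 = n + 8 by push_cast; ring, ← MultipleZeta.sum_weighted_mzv_eq,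
    show n + 5 - 3 = n + 2 by omega, MultipleZeta.sum_Icc_add_eq_sum_range]
  refine sum_congr rfl fun a ha => ?_
  have ha := mem_range.1 ha
  rw [show n + 5 - (a + 2) - 2 = n - a + 1 by omega, MultipleZeta.sum_Icc_add_eq_sum_range]
  refine sum_congr rfl fun b hb => ?_
  have hb := mem_range.1 hb
  rw [show n + 5 - (a + 2) - (b + 1) - 1 = n - a - b + 1 by omega,
    MultipleZeta.sum_Icc_add_eq_sum_range]
  refine sum_congr rfl fun c hc => ?_
  have hc := mem_range.1 hc
  rw [show n + 5 - (a + 2) - (b + 1) - (c + 1) = n - a - b - c + 1 by omega,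
    show a + 2 - 1 = a + 1 by omega]
end
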